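/- Let g = (g_1,…,g_m) be a tuple of polynomials in ℝ[X_1,…,X_n] such that S(g) is convex with nonempty interior and the quadratic module M(g) is Archimedean. Suppose that each g_i is strictly quasiconcave on S(g) ∩ Z(g_i) or is g-sos-concave. Then g has an exact Lasserre relaxation, i.e., there exists d ∈ ℕ₀ such that S_d(g) = S(g). -/

import Mathlib

open MvPolynomial Matrix

noncomputable section

/-- `S(g) = {x ∈ ℝⁿ : g₁(x) ≥ 0, …, g_m(x) ≥ 0}`. -/
def SolSet {n m : ℕ} (g : Fin m → MvPolynomial (Fin n) ℝ) : Set (Fin n → ℝ) :=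
  {x | ∀ i, 0 ≤ eval x (g i)}

/-- The extended tuple `(g₀, g₁, …, g_m)` with `g₀ := 1`. -/
def withOne {n m : ℕ} (g : Fin m → MvPolynomial (Fin n) ℝ) :
    Fin (m + 1) → MvPolynomial (Fin n) ℝ :=
  Fin.cons 1 g

/-- A polynomial is a sum of squares. -/
def IsSOS {n : ℕ} (p : MvPolynomial (Fin n) ℝ) : Prop :=
  ∃ (l : ℕ) (q : Fin l → MvPolynomial (Fin n) ℝ), p = ∑ i, q i ^ 2

/-- The quadratic module `M(g)` generated by `g₁,…,g_m` (with `g₀ := 1`). -/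
def QM {n m : ℕ} (g : Fin m → MvPolynomial (Fin n) ℝ) : Set (MvPolynomial (Fin n) ℝ) :=
  {f | ∃ s : Fin (m + 1) → MvPolynomial (Fin n) ℝ,
    (∀ i, IsSOS (s i)) ∧ f = ∑ i, s i * withOne g i}

/-- A quadratic module is Archimedean if for every polynomial `p` there is `N ∈ ℕ`
with `N - p ∈ M`. -/
def IsArchimedeanQM {n : ℕ} (M : Set (MvPolynomial (Fin n) ℝ)) : Prop :=
  ∀ p : MvPolynomial (Fin n) ℝ, ∃ N : ℕ, (N : MvPolynomial (Fin n) ℝ) - p ∈ M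

/-- `p ∈ ℝ[X]_{r_i}` where `r_i = (d - deg g_i)/2` if `g_i ≠ 0` and `r_i = -∞` if `g_i = 0`:
either `p = 0`, or `g_i ≠ 0` and `2 deg p + deg g_i ≤ d`. -/
def DegOK {n : ℕ} (d : ℕ) (gi p : MvPolynomial (Fin n) ℝ) : Prop :=
  p = 0 ∨ (gi ≠ 0 ∧ 2 * p.totalDegree + gi.totalDegree ≤ d)

/-- The `d`-truncated `k×k` matricial quadratic module `M_d^{k×k}(g)`. -/
def MatTruncQM {n : ℕ} (d : ℕ) {m : ℕ} (g : Fin m → MvPolynomial (Fin n) ℝ) (k : ℕ) :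
    Set (Matrix (Fin k) (Fin k) (MvPolynomial (Fin n) ℝ)) :=
  {H | ∃ (N : ℕ) (P : Fin (m + 1) → Fin N → Matrix (Fin k) (Fin k) (MvPolynomial (Fin n) ℝ)),
    (∀ i j a b, DegOK d (withOne g i) (P i j a b)) ∧
    H = ∑ i, ∑ j, withOne g i • ((P i j)ᵀ * P i j)}


/-- The `d`-truncated quadratic module `M_d(g)`. -/
def TruncQM {n : ℕ} (d : ℕ) {m : ℕ} (g : Fin m → MvPolynomial (Fin n) ℝ) :
    Set (MvPolynomial (Fin n) ℝ) :=
  {f | ∃ (N : ℕ) (p : Fin (m + 1) → Fin N → MvPolynomial (Fin n) ℝ),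
    (∀ i j, DegOK d (withOne g i) (p i j)) ∧
    f = ∑ i, ∑ j, p i j ^ 2 * withOne g i}

/-- The degree `d` Lasserre relaxation `S_d(g)`: all `x ∈ ℝⁿ` admitting a linear functional
`L` on `ℝ[X]_d` with `L(1) = 1`, `L(X_i) = x_i` and `L ≥ 0` on `M_d(g)`. -/
def Lasserre {n : ℕ} (d : ℕ) {m : ℕ} (g : Fin m → MvPolynomial (Fin n) ℝ) :
    Set (Fin n → ℝ) :=
  {x | ∃ L : MvPolynomial.restrictTotalDegree (Fin n) ℝ d →ₗ[ℝ] ℝ,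
    (∀ p : MvPolynomial.restrictTotalDegree (Fin n) ℝ d,
      (p : MvPolynomial (Fin n) ℝ) = 1 → L p = 1) ∧
    (∀ i : Fin n, ∀ p : MvPolynomial.restrictTotalDegree (Fin n) ℝ d,
      (p : MvPolynomial (Fin n) ℝ) = X i → L p = x i) ∧
    (∀ p : MvPolynomial.restrictTotalDegree (Fin n) ℝ d,
      (p : MvPolynomial (Fin n) ℝ) ∈ TruncQM d g → 0 ≤ L p)}


/-- The real zero set `Z(p)` of a polynomial `p`. -/
def ZSet {n : ℕ} (p : MvPolynomial (Fin n) ℝ) : Set (Fin n → ℝ) :=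
  {x | eval x p = 0}

/-- The gradient `∇g(x)` of a polynomial `g` at a point `x`. -/
def gradEval {n : ℕ} (g : MvPolynomial (Fin n) ℝ) (x : Fin n → ℝ) : Fin n → ℝ :=
  fun i => eval x (pderiv i g)

/-- The Hessian `(Hess g)(x)` of a polynomial `g` at a point `x`. -/
def hessEval {n : ℕ} (g : MvPolynomial (Fin n) ℝ) (x : Fin n → ℝ) :
    Matrix (Fin n) (Fin n) ℝ :=
  Matrix.of fun i j => eval x (pderiv i (pderiv j g))

/-- `g` is strictly quasiconcave at `x`. -/
def StrictlyQuasiconcaveAt {n : ℕ} (g : MvPolynomial (Fin n) ℝ) (x : Fin n → ℝ) : Prop :=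
  ∀ v : Fin n → ℝ, v ≠ 0 → gradEval g x ⬝ᵥ v = 0 → v ⬝ᵥ (hessEval g x) *ᵥ v < 0

/-- `f` is `g`-sos-concave: `-Hess f ∈ M^{n×n}(g) = ⋃_d M_d^{n×n}(g)`. -/
def SosConcave {n m : ℕ} (g : Fin m → MvPolynomial (Fin n) ℝ)
    (f : MvPolynomial (Fin n) ℝ) : Prop :=
  ∃ d : ℕ,
    (Matrix.of fun a b => -(pderiv a (pderiv b f)) :
      Matrix (Fin n) (Fin n) (MvPolynomial (Fin n) ℝ)) ∈ MatTruncQM d g n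

/-!
The argument concerns linear functionals `L` on polynomials which are nonnegative on the quadratic
module truncated at a large degree; every estimate has to be uniform in `L`.

A point `x` of the relaxation yields such an `L` with `L 1 = 1` and `L X = x`. Fix an interior point
`o` of `S(g)`. If `x ∉ S(g)`, the segment from `o` to `x` leaves `S(g)` at a point `u` with
`g_k(u) = 0`, where `⟨∇g_k(u), o - u⟩ > 0` and therefore `⟨∇g_k(u), x - u⟩ < 0`. The latter number
is the value of `L` at the linear Taylor part `⟨∇g_k(u), X - u⟩` of `g_k` at `u`, so it is enough
that this value is nonnegative, simultaneously for all `u` in `S(g)` with `g_k(u) = 0`.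

* If `g_k` is strictly quasiconcave, Taylor's formula at `u` writes `g_k` as `⟨α, X - u⟩`, and its
  linear part as `g_k` plus a quadratic form `R` in `X - u`, which at `u` is positive on the
  tangent space of `g_k`. Replacing `g_k` by `g_k (1 - g_k / G)²ᴺ`, which still has nonnegative
  value under `L`, frees a multiple of `⟨α, X - u⟩²` that makes `R` positive definite at `u`.
  Positivity of `L` on such forms is a matricial Positivstellensatz with compact parameters: by a
  limit argument it reduces to positive bilinear forms over the polynomial ring, and the extreme
  ones among these are point evaluations times Gram matrices.
* If `g_k` is sos-concave, Taylor's formula along the segment from `u` to `X`, with its remainder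
  computed by a quadrature rule with positive weights, writes the linear part as `g_k` plus sums of
  squares times the polynomials `g_i(u + s(X - u))`, which need not lie in the quadratic module.
  When `g_i` is strictly quasiconcave, they are treated as above. When `g_i` is sos-concave, its
  certificate expands `g_i(u + s(X - u))` in the same way. Each expansion brings one more of the
  finitely many squares in the certificates under control, up to arbitrarily small multiples of
  moments, so that the recursion terminates.
-/

namespace LasserreExactness

open Filter Topology

section PositiveForms

variable {A V : Type*} [CommRing A] [AddCommGroup V] [Module ℝ V] [Module A V]

/-- A symmetric `A`-balanced bilinear form on the `A`-module `V` that is *positive* on `M ⊆ A`: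
`B (f • p) p ≥ 0` for all `f ∈ M`. On `V = A^κ` these are the matrix-valued functionals that are
nonnegative on the matricial quadratic module generated by `M`. -/
structure IsPositiveForm (M : Set A) (B : LinearMap.BilinForm ℝ V) : Prop where
  symm : ∀ p q, B p q = B q p
  balanced : ∀ (a : A) p q, B (a • p) q = B p (a • q)
  nonneg : ∀ f ∈ M, ∀ p, 0 ≤ B (f • p) p

namespace IsPositiveForm

variable {M : Set A} {B : LinearMap.BilinForm ℝ V}

lemma smul (hB : IsPositiveForm M B) {c : ℝ} (hc : 0 ≤ c) : IsPositiveForm M (c • B) where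
  symm p q := by simp only [LinearMap.smul_apply, hB.symm p q]
  balanced a p q := by simp only [LinearMap.smul_apply, hB.balanced]
  nonneg f hf p := mul_nonneg hc (hB.nonneg f hf p)

lemma apply_smul_smul (hB : IsPositiveForm M B) (a b : A) (p : V) :
    B (a • p) (b • p) = B ((a * b) • p) p := by
  rw [← hB.balanced, smul_smul, mul_comm]

lemma apply_mul_smul (hB : IsPositiveForm M B) (f a b : A) (p : V) :
    B (f • a • p) (b • p) = B ((f * (a * b)) • p) p := by
  rw [smul_smul, hB.apply_smul_smul, mul_assoc]

section One

variable (h1 : (1 : A) ∈ M)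
include h1

lemma apply_self_nonneg (hB : IsPositiveForm M B) (p : V) : 0 ≤ B p p := by
  simpa using hB.nonneg 1 h1 p

lemma two_mul_apply_le (hB : IsPositiveForm M B) (p q : V) : 2 * B p q ≤ B p p + B q q := by
  have := hB.apply_self_nonneg h1 (p - q)
  simp only [map_sub, LinearMap.sub_apply, hB.symm q p] at this
  linarith

lemma two_mul_abs_apply_le (hB : IsPositiveForm M B) (p q : V) :
    2 * |B p q| ≤ B p p + B q q := by
  have hneg := hB.two_mul_apply_le h1 (-p) q
  simp only [map_neg, LinearMap.neg_apply, neg_neg] at hneg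
  have hpos := hB.two_mul_apply_le h1 p q
  rcases abs_cases (B p q) with ⟨h, _⟩ | ⟨h, _⟩ <;> linarith

lemma apply_add_self_le (hB : IsPositiveForm M B) (p q : V) :
    B (p + q) (p + q) ≤ 2 * (B p p + B q q) := by
  have := hB.two_mul_apply_le h1 p q
  simp only [map_add, LinearMap.add_apply, hB.symm q p]
  linarith

end One

end IsPositiveForm

variable [Algebra ℝ A] [IsScalarTower ℝ A V]

/-- A subset `M` of an `ℝ`-algebra is *square-bounding* if every square is dominated by a positive
constant modulo `M`. For a quadratic module this is the Archimedean property. -/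
def IsSquareBounding {A : Type*} [CommRing A] [Algebra ℝ A] (M : Set A) : Prop :=
  ∀ a : A, ∃ N : ℝ, 0 < N ∧ algebraMap ℝ A N - a ^ 2 ∈ M

/-- The form `(p, q) ↦ B (a • p) q`. -/
def twist (B : LinearMap.BilinForm ℝ V) (a : A) : LinearMap.BilinForm ℝ V :=
  B ∘ₗ Algebra.lsmul ℝ ℝ V a

@[simp] lemma twist_apply (B : LinearMap.BilinForm ℝ V) (a : A) (p q : V) :
    twist B a p q = B (a • p) q := rfl

namespace IsPositiveForm

variable {M : Set A} {B : LinearMap.BilinForm ℝ V}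

lemma twist_sq (hB : IsPositiveForm M B) (c : A) : IsPositiveForm M (twist B (c ^ 2)) where
  symm p q := by rw [twist_apply, twist_apply, hB.balanced, hB.symm]
  balanced a p q := by rw [twist_apply, twist_apply, smul_comm, hB.balanced]
  nonneg f hf p := by
    have := hB.nonneg f hf (c • p)
    rwa [hB.apply_mul_smul, ← pow_two, mul_comm, mul_smul] at this

lemma sq_le_mul (hB : IsPositiveForm M B) {f : A} (hf : f ∈ M) (p q : V) :
    B (f • p) q ^ 2 ≤ B (f • p) p * B (f • q) q :=
  (twist B f).apply_sq_le_of_symm (hB.nonneg f hf)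
    ⟨fun p q => by simp only [twist_apply, RingHom.id_apply, hB.balanced f p q, hB.symm p]⟩ p q

lemma apply_smul_self_le (hB : IsPositiveForm M B) {N : ℝ} {c : A}
    (hN : algebraMap ℝ A N - c ^ 2 ∈ M) (p : V) : B (c • p) (c • p) ≤ N * B p p := by
  have := hB.nonneg _ hN p
  simp only [sub_smul, algebraMap_smul, map_sub, LinearMap.sub_apply, map_smul,
    LinearMap.smul_apply, smul_eq_mul] at this
  rw [hB.apply_smul_smul, ← pow_two]
  linarith

lemma apply_pow_smul_self_le (hB : IsPositiveForm M B) {N : ℝ} {c : A} (hN0 : 0 ≤ N)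
    (hN : algebraMap ℝ A N - c ^ 2 ∈ M) (p : V) (j : ℕ) :
    B (c ^ j • p) (c ^ j • p) ≤ N ^ j * B p p := by
  induction j with
  | zero => simp
  | succ j ih =>
    calc B (c ^ (j + 1) • p) (c ^ (j + 1) • p)
        = B (c • c ^ j • p) (c • c ^ j • p) := by rw [smul_smul, ← pow_succ']
      _ ≤ N * B (c ^ j • p) (c ^ j • p) := hB.apply_smul_self_le hN _
      _ ≤ N * (N ^ j * B p p) := mul_le_mul_of_nonneg_left ih hN0
      _ = N ^ (j + 1) * B p p := by ring

end IsPositiveForm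

/-- The ratios of successive terms of a log-convex sequence only grow. -/
lemma apply_one_le_apply_zero_of_logConvex {b : ℕ → ℝ} {C : ℝ} (h0 : ∀ j, 0 ≤ b j)
    (hC : ∀ j, b j ≤ C) (hb : ∀ j, b (j + 1) ^ 2 ≤ b j * b (j + 2)) : b 1 ≤ b 0 := by
  by_contra! hlt
  have hb0 : 0 < b 0 := by nlinarith [hb 0, h0 0, h0 1, h0 2]
  set q := b 1 / b 0 with hq
  have hq1 : 1 < q := (one_lt_div hb0).2 hlt
  have hratio : ∀ j, 0 < b j ∧ q * b j ≤ b (j + 1) := by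
    intro j
    induction j with
    | zero => exact ⟨hb0, by rw [hq, div_mul_cancel₀ _ hb0.ne']⟩
    | succ j ih =>
      obtain ⟨hpos, hstep⟩ := ih
      have hpos' : 0 < b (j + 1) := by nlinarith
      refine ⟨hpos', le_of_mul_le_mul_left ?_ hpos⟩
      nlinarith [hb j]
  have hgrow : ∀ j, q ^ j * b 0 ≤ b j := by
    intro j
    induction j with
    | zero => simp
    | succ j ih => rw [pow_succ]; nlinarith [(hratio j).2]
  obtain ⟨k, hk⟩ := pow_unbounded_of_one_lt (C / b 0) hq1
  rw [div_lt_iff₀ hb0] at hk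
  linarith [hgrow k, hC k]

namespace IsPositiveForm

variable {M : Set A} {B : LinearMap.BilinForm ℝ V}

/-- Nothing says that `M` is closed under multiplication by `N - c²`; instead the sequence
`N⁻ʲ B (f cʲ p) (cʲ p)` is bounded and log-convex. -/
lemma apply_smul_smul_le_of_mem (hB : IsPositiveForm M B) (h1 : (1 : A) ∈ M) {N : ℝ} {c : A}
    (hN0 : 0 < N) (hN : algebraMap ℝ A N - c ^ 2 ∈ M) {f : A} (hf : f ∈ M) (p : V) :
    N⁻¹ * B (f • c • p) (c • p) ≤ B (f • p) p := by
  set b : ℕ → ℝ := fun j => N⁻¹ ^ j * B (f • c ^ j • p) (c ^ j • p) with hb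
  have hbound : ∀ j, b j ≤ B (f • p) (f • p) + B p p := by
    intro j
    have hform : B (f • c ^ j • p) (c ^ j • p) ≤ N ^ j * (B (f • p) (f • p) + B p p) := by
      have hAG := hB.two_mul_apply_le h1 (f • c ^ j • p) (c ^ j • p)
      have hfp := hB.apply_pow_smul_self_le hN0.le hN (f • p) j
      have hp := hB.apply_pow_smul_self_le hN0.le hN p j
      have hnn := hB.nonneg f hf (c ^ j • p)
      rw [smul_comm] at hfp
      linarith
    calc b j ≤ N⁻¹ ^ j * (N ^ j * (B (f • p) (f • p) + B p p)) :=
          mul_le_mul_of_nonneg_left hform (by positivity)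
      _ = B (f • p) (f • p) + B p p := by
          rw [← mul_assoc, ← mul_pow, inv_mul_cancel₀ hN0.ne', one_pow, one_mul]
  have hlog : ∀ j, b (j + 1) ^ 2 ≤ b j * b (j + 2) := by
    intro j
    have hmid : B (f • c ^ (j + 1) • p) (c ^ (j + 1) • p) =
        B (f • c ^ j • p) (c ^ (j + 2) • p) := by
      rw [hB.apply_mul_smul, hB.apply_mul_smul]
      ring_nf
    have hCS := mul_le_mul_of_nonneg_left (hB.sq_le_mul hf (c ^ j • p) (c ^ (j + 2) • p))
      (by positivity : 0 ≤ (N⁻¹ ^ (j + 1)) ^ 2)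
    simp only [hb, hmid]
    calc (N⁻¹ ^ (j + 1) * B (f • c ^ j • p) (c ^ (j + 2) • p)) ^ 2
        = (N⁻¹ ^ (j + 1)) ^ 2 * B (f • c ^ j • p) (c ^ (j + 2) • p) ^ 2 := by ring
      _ ≤ _ := hCS
      _ = _ := by ring
  have := apply_one_le_apply_zero_of_logConvex
    (fun j => mul_nonneg (by positivity) (hB.nonneg f hf _)) hbound hlog
  simpa [hb] using this

lemma sub_twist_sq (hB : IsPositiveForm M B) (h1 : (1 : A) ∈ M) {N : ℝ} {c : A}
    (hN0 : 0 < N) (hN : algebraMap ℝ A N - c ^ 2 ∈ M) :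
    IsPositiveForm M (B - N⁻¹ • twist B (c ^ 2)) where
  symm p q := by
    simp only [LinearMap.sub_apply, LinearMap.smul_apply, hB.symm p q, (hB.twist_sq c).symm p q]
  balanced a p q := by
    simp only [LinearMap.sub_apply, LinearMap.smul_apply, hB.balanced, (hB.twist_sq c).balanced]
  nonneg f hf p := by
    have := hB.apply_smul_smul_le_of_mem h1 hN0 hN hf p
    rw [hB.apply_mul_smul, ← pow_two] at this
    simpa [smul_smul, mul_comm (c ^ 2) f] using this

end IsPositiveForm

end PositiveForms

lemma exists_extremePoint_sum_apply_le {ι E : Type*} [Fintype ι] {K : Set (E → E → ℝ)}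
    (hK : IsCompact K) {f : E → E → ℝ} (hf : f ∈ K) (p q : ι → E) :
    ∃ e ∈ K.extremePoints ℝ, ∑ i, e (p i) (q i) ≤ ∑ i, f (p i) (q i) := by
  let J : (E → E → ℝ) →L[ℝ] ℝ :=
    -∑ i, ContinuousLinearMap.proj (q i) ∘L ContinuousLinearMap.proj (p i)
  have hJ : ∀ e, J e = -∑ i, e (p i) (q i) := fun e => by simp [J]
  obtain ⟨e₀, he₀, hmax⟩ := hK.exists_isMaxOn ⟨f, hf⟩ J.continuous.continuousOn
  have hexp : IsExposed ℝ K (J.toExposed K) := ContinuousLinearMap.toExposed.isExposed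
  obtain ⟨e, he⟩ := (hexp.isCompact hK).extremePoints_nonempty ⟨e₀, he₀, fun y hy => hmax hy⟩
  refine ⟨e, hexp.isExtreme.extremePoints_subset_extremePoints he, ?_⟩
  have := he.1.2 f hf
  rw [hJ, hJ] at this
  linarith

lemma sum_sum_mul_pos_of_posSemidef {κ : Type*} [Fintype κ] {G H : Matrix κ κ ℝ}
    (hG : G.PosSemidef) (htr : 0 < G.trace)
    (hH : ∀ ξ : κ → ℝ, ξ ≠ 0 → 0 < ∑ r, ∑ s, H r s * (ξ r * ξ s)) :
    0 < ∑ r, ∑ s, H r s * G r s := by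
  obtain ⟨k, v, rfl⟩ := Matrix.posSemidef_iff_eq_sum_vecMulVec.1 hG
  have hsum : ∑ r, ∑ s, H r s * (∑ i, vecMulVec (v i) (star (v i))) r s =
      ∑ i, ∑ r, ∑ s, H r s * (v i r * v i s) := by
    simp only [Matrix.sum_apply, vecMulVec_apply, star_trivial, Finset.mul_sum]
    rw [eq_comm, Finset.sum_comm]
    exact Finset.sum_congr rfl fun r _ => Finset.sum_comm
  obtain ⟨i, hi⟩ : ∃ i, v i ≠ 0 := by
    by_contra! h0
    simp [h0] at htr
  rw [hsum]
  refine Finset.sum_pos' (fun j _ => ?_) ⟨i, Finset.mem_univ i, hH _ hi⟩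
  by_cases hj : v j = 0
  · simp [hj]
  · exact (hH _ hj).le

section NormalizedForms

variable {A V κ : Type*} [CommRing A] [AddCommGroup V] [Module ℝ V] [Module A V] [Fintype κ]

/-- The trace `∑ r, B (b r) (b r)` of a bilinear form with respect to a finite family `b`, which
serves to normalize positive forms. -/
def formTrace (b : κ → V) (B : LinearMap.BilinForm ℝ V) : ℝ :=
  ∑ r, B (b r) (b r)

/-- The positive forms of trace one, as a subset of the topological vector space `V → V → ℝ`. -/
def normalizedForms (M : Set A) (b : κ → V) : Set (V → V → ℝ) :=
  (fun B p q => B p q) '' {B : LinearMap.BilinForm ℝ V | IsPositiveForm M B ∧ formTrace b B = 1}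

variable {M : Set A} {b : κ → V} {B : LinearMap.BilinForm ℝ V}

lemma formTrace_add (b : κ → V) (B B' : LinearMap.BilinForm ℝ V) :
    formTrace b (B + B') = formTrace b B + formTrace b B' := by
  simp only [formTrace, LinearMap.add_apply, Finset.sum_add_distrib]

lemma formTrace_smul (b : κ → V) (c : ℝ) (B : LinearMap.BilinForm ℝ V) :
    formTrace b (c • B) = c * formTrace b B := by
  simp only [formTrace, LinearMap.smul_apply, smul_eq_mul, Finset.mul_sum]

lemma IsPositiveForm.formTrace_nonneg (hB : IsPositiveForm M B) (h1 : (1 : A) ∈ M) (b : κ → V) :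
    0 ≤ formTrace b B :=
  Finset.sum_nonneg fun r _ => hB.apply_self_nonneg h1 (b r)

lemma IsPositiveForm.posSemidef_gram (hB : IsPositiveForm M B) (h1 : (1 : A) ∈ M)
    {κ : Type*} [Finite κ] (b : κ → V) : (Matrix.of fun r s => B (b r) (b s)).PosSemidef := by
  cases nonempty_fintype κ
  refine Matrix.PosSemidef.of_dotProduct_mulVec_nonneg ?_ fun ξ => ?_
  · ext r s
    simp [hB.symm (b s)]
  · have := hB.apply_self_nonneg h1 (∑ r, ξ r • b r)
    simp only [map_sum, map_smul, LinearMap.sum_apply, LinearMap.smul_apply, smul_eq_mul,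
      Finset.mul_sum] at this
    simp only [dotProduct, mulVec, Pi.star_apply, star_trivial, Matrix.of_apply, Finset.mul_sum]
    refine this.trans_eq (Finset.sum_congr rfl fun r _ => Finset.sum_congr rfl fun s _ => ?_)
    rw [hB.symm, mul_comm (B _ _)]

lemma exists_isPositiveForm_tendsto {ι : Type*} (𝒰 : Ultrafilter ι)
    {B : ι → LinearMap.BilinForm ℝ V}
    (hsymm : ∀ p q, ∀ᶠ i in 𝒰, B i p q = B i q p)
    (hbal : ∀ (a : A) p q, ∀ᶠ i in 𝒰, B i (a • p) q = B i p (a • q))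
    (hnonneg : ∀ f ∈ M, ∀ p, ∀ᶠ i in 𝒰, 0 ≤ B i (f • p) p)
    (hbdd : ∀ p q, ∃ C, ∀ᶠ i in 𝒰, |B i p q| ≤ C) :
    ∃ B' : LinearMap.BilinForm ℝ V, IsPositiveForm M B' ∧
      ∀ p q, Tendsto (fun i => B i p q) 𝒰 (𝓝 (B' p q)) := by
  have hlim : ∀ p q, ∃ y, Tendsto (fun i => B i p q) 𝒰 (𝓝 y) := fun p q => by
    obtain ⟨C, hC⟩ := hbdd p q
    obtain ⟨y, -, hy⟩ := (isCompact_Icc (a := -C) (b := C)).ultrafilter_le_nhds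
      (𝒰.map fun i => B i p q) (le_principal_iff.2 (hC.mono fun i hi => abs_le.1 hi))
    exact ⟨y, hy⟩
  choose l hl using hlim
  refine ⟨LinearMap.mk₂ ℝ l (fun p p' q => ?_) (fun c p q => ?_) (fun p q q' => ?_)
    (fun c p q => ?_), ⟨fun p q => ?_, fun a p q => ?_, fun f hf p => ?_⟩, hl⟩
  · exact tendsto_nhds_unique (hl _ _) (by simpa using (hl p q).add (hl p' q))
  · exact tendsto_nhds_unique (hl _ _) (by simpa using (hl p q).const_mul c)
  · exact tendsto_nhds_unique (hl _ _) (by simpa using (hl p q).add (hl p q'))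
  · exact tendsto_nhds_unique (hl _ _) (by simpa using (hl p q).const_mul c)
  · exact tendsto_nhds_unique ((hl p q).congr' (hsymm p q)) (hl q p)
  · exact tendsto_nhds_unique ((hl _ q).congr' (hbal a p q)) (hl p _)
  · exact ge_of_tendsto (hl _ p) (hnonneg f hf p)

variable [Algebra ℝ A] [IsScalarTower ℝ A V]

lemma exists_apply_self_le (h1 : (1 : A) ∈ M) (hM : IsSquareBounding M)
    (hb : Submodule.span A (Set.range b) = ⊤) (p : V) :
    ∃ C, ∀ B : LinearMap.BilinForm ℝ V, IsPositiveForm M B → B p p ≤ C * formTrace b B := by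
  have hp : p ∈ Submodule.span A (Set.range b) := hb ▸ Submodule.mem_top
  induction hp using Submodule.span_induction with
  | mem p hp =>
    obtain ⟨r, rfl⟩ := hp
    refine ⟨1, fun B hB => ?_⟩
    rw [one_mul]
    exact Finset.single_le_sum (f := fun r => B (b r) (b r))
      (fun s _ => hB.apply_self_nonneg h1 (b s)) (Finset.mem_univ r)
  | zero => exact ⟨0, fun B _ => by simp⟩
  | add p q _ _ ihp ihq =>
    obtain ⟨C, hC⟩ := ihp
    obtain ⟨D, hD⟩ := ihq
    refine ⟨2 * (C + D), fun B hB => ?_⟩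
    linarith [hB.apply_add_self_le h1 p q, hC B hB, hD B hB]
  | smul a p _ ih =>
    obtain ⟨C, hC⟩ := ih
    obtain ⟨N, hN0, hN⟩ := hM a
    refine ⟨N * C, fun B hB => (hB.apply_smul_self_le hN p).trans ?_⟩
    rw [mul_assoc]
    exact mul_le_mul_of_nonneg_left (hC B hB) hN0.le

lemma exists_abs_apply_le (h1 : (1 : A) ∈ M) (hM : IsSquareBounding M)
    (hb : Submodule.span A (Set.range b) = ⊤) (p q : V) :
    ∃ C, ∀ B : LinearMap.BilinForm ℝ V, IsPositiveForm M B → |B p q| ≤ C * formTrace b B := by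
  obtain ⟨C, hC⟩ := exists_apply_self_le h1 hM hb p
  obtain ⟨D, hD⟩ := exists_apply_self_le h1 hM hb q
  refine ⟨(C + D) / 2, fun B hB => ?_⟩
  linarith [hB.two_mul_abs_apply_le h1 p q, hC B hB, hD B hB]

lemma IsPositiveForm.eq_zero_of_formTrace_eq_zero (hB : IsPositiveForm M B) (h1 : (1 : A) ∈ M)
    (hM : IsSquareBounding M) (hb : Submodule.span A (Set.range b) = ⊤)
    (h0 : formTrace b B = 0) : B = 0 := by
  ext p q
  obtain ⟨C, hC⟩ := exists_abs_apply_le h1 hM hb p q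
  simpa [h0] using hC B hB

lemma isCompact_normalizedForms (h1 : (1 : A) ∈ M) (hM : IsSquareBounding M)
    (hb : Submodule.span A (Set.range b) = ⊤) : IsCompact (normalizedForms M b) := by
  rw [isCompact_iff_ultrafilter_le_nhds]
  intro 𝒰 h𝒰
  set coe : LinearMap.BilinForm ℝ V → V → V → ℝ := fun B p q => B p q
  have hmem : coe '' {B | IsPositiveForm M B ∧ formTrace b B = 1} ∈ 𝒰 := le_principal_iff.1 h𝒰
  set 𝒱 := Ultrafilter.ofComapInfPrincipal hmem
  have hpos : ∀ᶠ B in 𝒱, IsPositiveForm M B ∧ formTrace b B = 1 :=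
    Ultrafilter.ofComapInfPrincipal_mem hmem
  obtain ⟨B', hB', hlim⟩ := exists_isPositiveForm_tendsto (M := M) 𝒱 (B := id)
    (fun p q => hpos.mono fun B hB => hB.1.symm p q)
    (fun a p q => hpos.mono fun B hB => hB.1.balanced a p q)
    (fun f hf p => hpos.mono fun B hB => hB.1.nonneg f hf p)
    fun p q => by
      obtain ⟨C, hC⟩ := exists_abs_apply_le h1 hM hb p q
      exact ⟨C, hpos.mono fun B hB => by simpa [hB.2] using hC B hB.1⟩
  have htrace : formTrace b B' = 1 :=
    tendsto_nhds_unique (tendsto_finsetSum _ fun r _ => hlim (b r) (b r))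
      (tendsto_const_nhds.congr' (hpos.mono fun B hB => hB.2.symm))
  refine ⟨coe B', ⟨B', ⟨hB', htrace⟩, rfl⟩, ?_⟩
  rw [← Ultrafilter.ofComapInfPrincipal_eq_of_map hmem]
  exact tendsto_pi_nhds.2 fun p => tendsto_pi_nhds.2 fun q => hlim p q

lemma eq_formTrace_smul_of_mem_extremePoints (h1 : (1 : A) ∈ M) (hM : IsSquareBounding M)
    (hb : Submodule.span A (Set.range b) = ⊤) {B₁ B₂ : LinearMap.BilinForm ℝ V}
    (hB₁ : IsPositiveForm M B₁) (hB₂ : IsPositiveForm M B₂) (htr : formTrace b (B₁ + B₂) = 1)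
    (hext : (fun p q => (B₁ + B₂) p q) ∈ (normalizedForms M b).extremePoints ℝ) :
    B₁ = formTrace b B₁ • (B₁ + B₂) := by
  rcases (hB₁.formTrace_nonneg h1 b).eq_or_lt with h | hpos₁
  · rw [← h, zero_smul, hB₁.eq_zero_of_formTrace_eq_zero h1 hM hb h.symm]
  rcases (hB₂.formTrace_nonneg h1 b).eq_or_lt with h | hpos₂
  · have hB₂0 := hB₂.eq_zero_of_formTrace_eq_zero h1 hM hb h.symm
    rw [hB₂0, add_zero] at htr ⊢
    rw [htr, one_smul]
  have hmem : ∀ {B}, IsPositiveForm M B → 0 < formTrace b B →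
      (fun p q => ((formTrace b B)⁻¹ • B) p q) ∈ normalizedForms M b := fun hB h =>
    ⟨_, ⟨hB.smul (inv_nonneg.2 h.le), by rw [formTrace_smul, inv_mul_cancel₀ h.ne']⟩, rfl⟩
  have hseg := hext.2 (hmem hB₁ hpos₁) (hmem hB₂ hpos₂)
    ⟨formTrace b B₁, formTrace b B₂, hpos₁, hpos₂, formTrace_add b B₁ B₂ ▸ htr, by
      ext p q
      simp [hpos₁.ne', hpos₂.ne']⟩
  have heq : (formTrace b B₁)⁻¹ • B₁ = B₁ + B₂ := by
    ext p q
    exact congrFun (congrFun hseg p) q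
  rw [← heq, smul_inv_smul₀ hpos₁.ne']

lemma exists_twist_eq_smul_of_mem_extremePoints (h1 : (1 : A) ∈ M) (hM : IsSquareBounding M)
    (hb : Submodule.span A (Set.range b) = ⊤) (hB : IsPositiveForm M B)
    (htr : formTrace b B = 1)
    (hext : (fun p q => B p q) ∈ (normalizedForms M b).extremePoints ℝ) (a : A) :
    ∃ t : ℝ, twist B a = t • B := by
  have hsq : ∀ c : A, ∃ t : ℝ, twist B (c ^ 2) = t • B := by
    intro c
    obtain ⟨N, hN0, hN⟩ := hM c
    have hsum : N⁻¹ • twist B (c ^ 2) + (B - N⁻¹ • twist B (c ^ 2)) = B := by abel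
    have := eq_formTrace_smul_of_mem_extremePoints h1 hM hb
      ((hB.twist_sq c).smul (inv_nonneg.2 hN0.le)) (hB.sub_twist_sq h1 hN0 hN)
      (hsum.symm ▸ htr) (hsum.symm ▸ hext)
    rw [hsum, inv_smul_eq_iff₀ hN0.ne', smul_smul] at this
    exact ⟨_, this⟩
  obtain ⟨t, ht⟩ := hsq a
  obtain ⟨t', ht'⟩ := hsq (a + 1)
  refine ⟨(t' - t - 1) / 2, ?_⟩
  ext p q
  have h := LinearMap.congr_fun₂ ht p q
  have h' := LinearMap.congr_fun₂ ht' p q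
  simp only [twist_apply, LinearMap.smul_apply, smul_eq_mul, add_sq, one_pow, mul_one, two_mul,
    add_smul, one_smul, map_add, LinearMap.add_apply] at h h' ⊢
  linarith

lemma exists_algHom_of_twist_eq_smul (hB : ∀ a : A, ∃ t : ℝ, twist B a = t • B) {p₀ : V}
    (hp₀ : B p₀ p₀ ≠ 0) : ∃ φ : A →ₐ[ℝ] ℝ, ∀ a p q, B (a • p) q = φ a * B p q := by
  choose t ht using hB
  have key : ∀ a p q, B (a • p) q = t a * B p q := fun a p q => LinearMap.congr_fun₂ (ht a) p q
  have hinj : ∀ {x y : ℝ}, x * B p₀ p₀ = y * B p₀ p₀ → x = y := fun h => mul_right_cancel₀ hp₀ h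
  refine ⟨AlgHom.ofLinearMap
    { toFun := t
      map_add' := fun a a' => hinj ?_
      map_smul' := fun c a => hinj ?_ } (hinj ?_) fun a a' => hinj ?_, key⟩
  · rw [← key, add_smul, map_add, LinearMap.add_apply, key, key, add_mul]
  · rw [← key, smul_assoc, map_smul, LinearMap.smul_apply, key, RingHom.id_apply, smul_eq_mul,
      smul_eq_mul, mul_assoc]
  · change t 1 * _ = _
    rw [← key, one_smul, one_mul]
  · change t (a * a') * _ = t a * t a' * _
    rw [← key, mul_smul, key, key, mul_assoc]

lemma exists_algHom_of_mem_extremePoints (h1 : (1 : A) ∈ M) (hM : IsSquareBounding M)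
    (hb : Submodule.span A (Set.range b) = ⊤) (hB : IsPositiveForm M B)
    (htr : formTrace b B = 1)
    (hext : (fun p q => B p q) ∈ (normalizedForms M b).extremePoints ℝ) :
    ∃ φ : A →ₐ[ℝ] ℝ, (∀ f ∈ M, 0 ≤ φ f) ∧ ∀ a p q, B (a • p) q = φ a * B p q := by
  obtain ⟨r, hr⟩ : ∃ r, 0 < B (b r) (b r) := by
    by_contra! hno
    have : formTrace b B ≤ 0 := Finset.sum_nonpos fun r _ => hno r
    linarith
  obtain ⟨φ, hφ⟩ := exists_algHom_of_twist_eq_smul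
    (exists_twist_eq_smul_of_mem_extremePoints h1 hM hb hB htr hext) hr.ne'
  refine ⟨φ, fun f hf => ?_, hφ⟩
  have := hB.nonneg f hf (b r)
  rw [hφ] at this
  exact nonneg_of_mul_nonneg_left this hr

/-- At an extreme point the form is a character of `A` times a Gram matrix, where the assumption on
`H` applies; so the minimum over all normalized forms is positive. -/
theorem IsPositiveForm.sum_apply_pos (hB : IsPositiveForm M B) (h1 : (1 : A) ∈ M)
    (hM : IsSquareBounding M) (hb : Submodule.span A (Set.range b) = ⊤) (htr : formTrace b B = 1)
    {H : κ → κ → A} (hH : ∀ φ : A →ₐ[ℝ] ℝ, (∀ f ∈ M, 0 ≤ φ f) →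
      ∀ ξ : κ → ℝ, ξ ≠ 0 → 0 < ∑ r, ∑ s, φ (H r s) * (ξ r * ξ s)) :
    0 < ∑ r, ∑ s, B (H r s • b r) (b s) := by
  obtain ⟨e, he, hle⟩ := exists_extremePoint_sum_apply_le (isCompact_normalizedForms h1 hM hb)
    ⟨B, ⟨hB, htr⟩, rfl⟩ (fun i : κ × κ => H i.1 i.2 • b i.1) (fun i => b i.2)
  obtain ⟨B₀, ⟨hB₀, htr₀⟩, rfl⟩ := he.1
  obtain ⟨φ, hφ, hmul⟩ := exists_algHom_of_mem_extremePoints h1 hM hb hB₀ htr₀ he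
  have hpos := sum_sum_mul_pos_of_posSemidef (hB₀.posSemidef_gram h1 b)
    (zero_lt_one.trans_eq htr₀.symm) (hH φ hφ)
  simp only [Fintype.sum_prod_type, hmul] at hle
  exact hpos.trans_le hle

end NormalizedForms

section TruncatedPositivity

variable {n m : ℕ}

/-- `L` is nonnegative on the `d`-truncated quadratic module generated by `g`. -/
def IsTruncPositive (g : Fin m → MvPolynomial (Fin n) ℝ) (d : ℕ)
    (L : Module.Dual ℝ (MvPolynomial (Fin n) ℝ)) : Prop :=
  ∀ i q, 2 * q.totalDegree + (withOne g i).totalDegree ≤ d → 0 ≤ L (q ^ 2 * withOne g i)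

/-- The filter generated by the sets of functionals that are nonnegative on the `d`-truncated
quadratic module, for all `d`. A property holding eventually along it is one that is forced by
nonnegativity up to some degree. -/
def positivityFilter (g : Fin m → MvPolynomial (Fin n) ℝ) :
    Filter (Module.Dual ℝ (MvPolynomial (Fin n) ℝ)) :=
  ⨅ d, 𝓟 {L | IsTruncPositive g d L}

/-- The functional `p ↦ L (W² p)`. -/
def mulSq (W : MvPolynomial (Fin n) ℝ) (L : Module.Dual ℝ (MvPolynomial (Fin n) ℝ)) :
    Module.Dual ℝ (MvPolynomial (Fin n) ℝ) :=
  L ∘ₗ LinearMap.mulLeft ℝ (W ^ 2)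

@[simp] lemma mulSq_apply (W p : MvPolynomial (Fin n) ℝ)
    (L : Module.Dual ℝ (MvPolynomial (Fin n) ℝ)) : mulSq W L p = L (W ^ 2 * p) := rfl

variable {g : Fin m → MvPolynomial (Fin n) ℝ} {d e : ℕ}
  {L : Module.Dual ℝ (MvPolynomial (Fin n) ℝ)}

lemma IsTruncPositive.mono (hL : IsTruncPositive g e L) (hde : d ≤ e) : IsTruncPositive g d L :=
  fun i q hq => hL i q (hq.trans hde)

lemma IsTruncPositive.mulSq (hL : IsTruncPositive g (d + 2 * e) L) {W : MvPolynomial (Fin n) ℝ}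
    (hW : W.totalDegree ≤ e) : IsTruncPositive g d (mulSq W L) := by
  intro i q hq
  have hdeg := totalDegree_mul W q
  have hnonneg := hL i (W * q) (by lia)
  rwa [mul_pow, mul_assoc] at hnonneg

lemma eventually_positivityFilter {P : Module.Dual ℝ (MvPolynomial (Fin n) ℝ) → Prop} :
    (∀ᶠ L in positivityFilter g, P L) ↔ ∃ d, ∀ L, IsTruncPositive g d L → P L := by
  have hbasis : (positivityFilter g).HasBasis (fun _ => True)
      fun d => {L | IsTruncPositive g d L} :=
    hasBasis_iInf_principal
      (Antitone.directed_ge fun d e hde L hL => IsTruncPositive.mono hL hde)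
  simpa using hbasis.eventually_iff

lemma eventually_mulSq {P : Module.Dual ℝ (MvPolynomial (Fin n) ℝ) → Prop}
    (h : ∀ᶠ L in positivityFilter g, P L) (e : ℕ) :
    ∀ᶠ L in positivityFilter g, ∀ W : MvPolynomial (Fin n) ℝ, W.totalDegree ≤ e →
      P (mulSq W L) := by
  obtain ⟨d, hd⟩ := eventually_positivityFilter.1 h
  exact eventually_positivityFilter.2 ⟨d + 2 * e, fun L hL W hW => hd _ (hL.mulSq hW)⟩

lemma isSOS_sq (p : MvPolynomial (Fin n) ℝ) : IsSOS (p ^ 2) :=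
  ⟨1, fun _ => p, by simp⟩

lemma isSOS_add {p q : MvPolynomial (Fin n) ℝ} (hp : IsSOS p) (hq : IsSOS q) : IsSOS (p + q) := by
  obtain ⟨k, u, rfl⟩ := hp
  obtain ⟨l, v, rfl⟩ := hq
  exact ⟨k + l, Fin.append u v, by simp [Fin.sum_univ_add]⟩

lemma mul_withOne_mem_QM {s : MvPolynomial (Fin n) ℝ} (hs : IsSOS s) (i : Fin (m + 1)) :
    s * withOne g i ∈ QM g := by
  refine ⟨Pi.single i s, fun j => ?_, ?_⟩
  · rcases eq_or_ne j i with rfl | hj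
    · simpa using hs
    · exact ⟨0, Fin.elim0, by simp [hj]⟩
  · rw [Finset.sum_eq_single i (fun j _ hj => by simp [hj]) (by simp), Pi.single_eq_same]

lemma one_mem_QM : (1 : MvPolynomial (Fin n) ℝ) ∈ QM g := by
  simpa [withOne] using mul_withOne_mem_QM (g := g) (isSOS_sq 1) 0

lemma withOne_mem_QM (i : Fin (m + 1)) : withOne g i ∈ QM g := by
  simpa using mul_withOne_mem_QM (g := g) (isSOS_sq 1) i

lemma add_mem_QM {p q : MvPolynomial (Fin n) ℝ} (hp : p ∈ QM g) (hq : q ∈ QM g) :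
    p + q ∈ QM g := by
  obtain ⟨s, hs, rfl⟩ := hp
  obtain ⟨t, ht, rfl⟩ := hq
  exact ⟨s + t, fun i => isSOS_add (hs i) (ht i), by simp [add_mul, Finset.sum_add_distrib]⟩

lemma eval_withOne_nonneg {x : Fin n → ℝ} (hx : x ∈ SolSet g) (i : Fin (m + 1)) :
    0 ≤ eval x (withOne g i) := by
  refine Fin.cases ?_ (fun i => ?_) i
  · simp [withOne]
  · simpa [withOne] using hx i

lemma eval_nonneg_of_mem_QM {f : MvPolynomial (Fin n) ℝ} (hf : f ∈ QM g) {x : Fin n → ℝ}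
    (hx : x ∈ SolSet g) : 0 ≤ eval x f := by
  obtain ⟨s, hs, rfl⟩ := hf
  choose l q hq using hs
  simp only [hq, map_sum, map_mul, map_pow]
  exact Finset.sum_nonneg fun i _ =>
    mul_nonneg (Finset.sum_nonneg fun j _ => sq_nonneg _) (eval_withOne_nonneg hx i)

lemma eventually_nonneg_of_mem_QM {f : MvPolynomial (Fin n) ℝ} (hf : f ∈ QM g) (e : ℕ) :
    ∀ᶠ L in positivityFilter g, ∀ v : MvPolynomial (Fin n) ℝ, v.totalDegree ≤ e →
      0 ≤ L (v ^ 2 * f) := by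
  suffices h : ∀ᶠ L in positivityFilter g, 0 ≤ L f from eventually_mulSq h e
  obtain ⟨s, hs, rfl⟩ := hf
  choose l q hq using hs
  have hterm : ∀ i j, ∀ᶠ L in positivityFilter g, 0 ≤ L (q i j ^ 2 * withOne g i) := fun i j =>
    eventually_positivityFilter.2 ⟨_, fun L hL => hL i (q i j) le_rfl⟩
  filter_upwards [eventually_all.2 fun i => eventually_all.2 (hterm i)] with L hL
  simp only [hq, Finset.sum_mul, map_sum]
  exact Finset.sum_nonneg fun i _ => Finset.sum_nonneg fun j _ => hL i j

lemma eventually_nonneg_sq (g : Fin m → MvPolynomial (Fin n) ℝ) (e : ℕ) :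
    ∀ᶠ L in positivityFilter g, ∀ v : MvPolynomial (Fin n) ℝ, v.totalDegree ≤ e →
      0 ≤ L (v ^ 2) := by
  simpa using eventually_nonneg_of_mem_QM (one_mem_QM (g := g)) e

lemma isClosed_SolSet (g : Fin m → MvPolynomial (Fin n) ℝ) : IsClosed (SolSet g) := by
  have hInter : SolSet g = ⋂ i, {x | 0 ≤ eval x (g i)} := by
    ext
    simp [SolSet]
  rw [hInter]
  exact isClosed_iInter fun i => isClosed_le continuous_const (MvPolynomial.continuous_eval (g i))

lemma isCompact_SolSet (harch : IsArchimedeanQM (QM g)) : IsCompact (SolSet g) := by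
  choose N hN using fun i : Fin n => harch (X i ^ 2)
  refine (isCompact_univ_pi fun i : Fin n => isCompact_Icc (a := -√(N i)) (b := √(N i)))
    |>.of_isClosed_subset (isClosed_SolSet g) fun x hx i _ => abs_le.1 (Real.abs_le_sqrt ?_)
  simpa using eval_nonneg_of_mem_QM (hN i) hx

lemma isSquareBounding_QM (harch : IsArchimedeanQM (QM g)) : IsSquareBounding (QM g) := by
  intro p
  obtain ⟨N, hN⟩ := harch (p ^ 2)
  refine ⟨N + 1, by positivity, ?_⟩
  convert add_mem_QM one_mem_QM hN using 1
  simp only [map_add, map_natCast, map_one]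
  ring

lemma exists_mem_SolSet_of_algHom {φ : MvPolynomial (Fin n) ℝ →ₐ[ℝ] ℝ}
    (hφ : ∀ f ∈ QM g, 0 ≤ φ f) : ∃ x ∈ SolSet g, ∀ p, φ p = eval x p := by
  have heval : ∀ p, φ p = eval (fun i => φ (X i)) p := fun p => by
    rw [← coe_aeval_eq_eval, RingHom.coe_coe]
    exact DFunLike.congr_fun (aeval_unique φ) p
  refine ⟨_, fun i => ?_, heval⟩
  rw [← heval]
  simpa [withOne] using hφ _ (withOne_mem_QM i.succ)

lemma two_mul_abs_apply_mul_le {p q : MvPolynomial (Fin n) ℝ} (hadd : 0 ≤ L ((p + q) ^ 2))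
    (hsub : 0 ≤ L ((p - q) ^ 2)) : 2 * |L (p * q)| ≤ L (p ^ 2) + L (q ^ 2) := by
  simp only [add_sq, sub_sq, map_add, map_sub, two_mul, add_mul] at hadd hsub
  rcases abs_cases (L (p * q)) with ⟨h, _⟩ | ⟨h, _⟩ <;> linarith

/-- Multiplication by a fixed polynomial is bounded for the seminorm `v ↦ L (v²)^(1/2)`. -/
lemma eventually_abs_apply_mul_le (harch : IsArchimedeanQM (QM g)) (p : MvPolynomial (Fin n) ℝ)
    (e : ℕ) : ∃ C, ∀ᶠ L in positivityFilter g, ∀ v w : MvPolynomial (Fin n) ℝ,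
      v.totalDegree ≤ e → w.totalDegree ≤ e → |L (p * (v * w))| ≤ C * (L (v ^ 2) + L (w ^ 2)) := by
  obtain ⟨N, hN0, hN⟩ := isSquareBounding_QM harch p
  refine ⟨N + 1, ?_⟩
  filter_upwards [eventually_nonneg_of_mem_QM hN e,
    eventually_nonneg_sq g (p.totalDegree + e)] with L hLN hLsq v w hv hw
  have hpv := totalDegree_mul p v
  have hadd := hLsq (p * v + w) ((totalDegree_add _ _).trans (max_le (by lia) (by lia)))
  have hsub := hLsq (p * v - w) ((totalDegree_sub _ _).trans (max_le (by lia) (by lia)))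
  have hmul := hLN v hv
  have hv0 := hLsq v (by lia)
  have hw0 := hLsq w (by lia)
  have hsq : v ^ 2 * (algebraMap ℝ _ N - p ^ 2) = N • v ^ 2 - (p * v) ^ 2 := by
    rw [smul_eq_C_mul, ← algebraMap_eq]
    ring
  rw [hsq, map_sub, map_smul, smul_eq_mul] at hmul
  have habs := two_mul_abs_apply_mul_le hadd hsub
  rw [mul_assoc] at habs
  nlinarith

end TruncatedPositivity

section ContinuousFamilies

variable {Ω : Type*} [TopologicalSpace Ω] {n : ℕ}

/-- A family of real polynomials is *continuous* if it comes from a polynomial with coefficients in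
`C(Ω, ℝ)`; in particular its degrees are bounded. -/
@[fun_prop]
def IsContinuousFamily (p : Ω → MvPolynomial (Fin n) ℝ) : Prop :=
  ∃ P : MvPolynomial (Fin n) C(Ω, ℝ), (fun ω => mapAlgHom (ContinuousMap.evalAlgHom ℝ ℝ ω) P) = p

namespace IsContinuousFamily

variable {p q : Ω → MvPolynomial (Fin n) ℝ}

@[fun_prop]
lemma const (p : MvPolynomial (Fin n) ℝ) : IsContinuousFamily fun _ : Ω => p := by
  refine ⟨p.map (algebraMap ℝ C(Ω, ℝ)), funext fun ω => ?_⟩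
  rw [mapAlgHom_apply, MvPolynomial.map_map]
  exact MvPolynomial.map_id p

@[fun_prop]
lemma C_comp {c : Ω → ℝ} (hc : Continuous c) :
    IsContinuousFamily fun ω => (C (c ω) : MvPolynomial (Fin n) ℝ) :=
  ⟨C ⟨c, hc⟩, funext fun _ => MvPolynomial.map_C _ _⟩

@[fun_prop]
lemma add (hp : IsContinuousFamily p) (hq : IsContinuousFamily q) :
    IsContinuousFamily fun ω => p ω + q ω := by
  obtain ⟨P, rfl⟩ := hp
  obtain ⟨Q, rfl⟩ := hq
  exact ⟨P + Q, funext fun _ => map_add _ P Q⟩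

@[fun_prop]
lemma mul (hp : IsContinuousFamily p) (hq : IsContinuousFamily q) :
    IsContinuousFamily fun ω => p ω * q ω := by
  obtain ⟨P, rfl⟩ := hp
  obtain ⟨Q, rfl⟩ := hq
  exact ⟨P * Q, funext fun _ => map_mul _ P Q⟩

@[fun_prop]
lemma neg (hp : IsContinuousFamily p) : IsContinuousFamily fun ω => -p ω := by
  obtain ⟨P, rfl⟩ := hp
  exact ⟨-P, funext fun _ => map_neg _ P⟩

@[fun_prop]
lemma sub (hp : IsContinuousFamily p) (hq : IsContinuousFamily q) :
    IsContinuousFamily fun ω => p ω - q ω := by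
  simpa only [sub_eq_add_neg] using hp.add hq.neg

@[fun_prop]
lemma pow (hp : IsContinuousFamily p) (k : ℕ) : IsContinuousFamily fun ω => p ω ^ k := by
  obtain ⟨P, rfl⟩ := hp
  exact ⟨P ^ k, funext fun _ => map_pow _ P k⟩

@[fun_prop]
lemma smul {c : Ω → ℝ} (hc : Continuous c) (hp : IsContinuousFamily p) :
    IsContinuousFamily fun ω => c ω • p ω := by
  simpa only [smul_eq_C_mul] using (C_comp hc).mul hp

@[fun_prop]
lemma sum {ι : Type*} {s : Finset ι} {p : ι → Ω → MvPolynomial (Fin n) ℝ}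
    (hp : ∀ i, IsContinuousFamily (p i)) : IsContinuousFamily fun ω => ∑ i ∈ s, p i ω := by
  choose P hP using hp
  simp only [← hP]
  exact ⟨∑ i ∈ s, P i, funext fun _ => map_sum _ P s⟩

lemma dotProduct {κ : Type*} [Fintype κ] {v w : Ω → κ → MvPolynomial (Fin n) ℝ}
    (hv : ∀ r, IsContinuousFamily fun ω => v ω r) (hw : ∀ r, IsContinuousFamily fun ω => w ω r) :
    IsContinuousFamily fun ω => v ω ⬝ᵥ w ω :=
  .sum fun r => (hv r).mul (hw r)

lemma comp {Ω' : Type*} [TopologicalSpace Ω'] (hp : IsContinuousFamily p) {f : Ω' → Ω}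
    (hf : Continuous f) : IsContinuousFamily fun ω => p (f ω) := by
  obtain ⟨P, rfl⟩ := hp
  exact ⟨mapAlgHom (ContinuousMap.compRightAlgHom ℝ ℝ ⟨f, hf⟩) P, funext fun _ =>
    MvPolynomial.map_map _ _ P⟩

lemma exists_totalDegree_le (hp : IsContinuousFamily p) : ∃ D, ∀ ω, (p ω).totalDegree ≤ D := by
  obtain ⟨P, rfl⟩ := hp
  exact ⟨P.totalDegree, fun _ => Finset.sup_mono (support_map_subset _ P)⟩

lemma tendsto_apply (hp : IsContinuousFamily p) {ι : Type*} {l : Filter ι}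
    {L : ι → Module.Dual ℝ (MvPolynomial (Fin n) ℝ)} {L' : Module.Dual ℝ (MvPolynomial (Fin n) ℝ)}
    (hL : ∀ q, Tendsto (fun i => L i q) l (𝓝 (L' q))) {w : ι → Ω} {ω₀ : Ω}
    (hw : Tendsto w l (𝓝 ω₀)) : Tendsto (fun i => L i (p (w i))) l (𝓝 (L' (p ω₀))) := by
  obtain ⟨P, rfl⟩ := hp
  induction P using MvPolynomial.induction_on' with
  | monomial a c =>
    have key : ∀ (F : Module.Dual ℝ (MvPolynomial (Fin n) ℝ)) ω,
        F (mapAlgHom (ContinuousMap.evalAlgHom ℝ ℝ ω) (monomial a c)) =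
          c ω * F (monomial a 1) := by
      intro F ω
      rw [← smul_eq_mul, ← map_smul, smul_monomial, smul_eq_mul, mul_one]
      exact congrArg F (map_monomial _ a c)
    simp only [key]
    exact ((c.continuous.tendsto ω₀).comp hw).mul (hL _)
  | add P Q hP hQ =>
    simp only [map_add]
    exact hP.add hQ

lemma continuous_eval (hp : IsContinuousFamily p) :
    Continuous fun z : Ω × (Fin n → ℝ) => eval z.2 (p z.1) := by
  refine continuous_iff_continuousAt.2 fun z => ?_
  refine hp.tendsto_apply (L := fun z : Ω × (Fin n → ℝ) => (aeval z.2).toLinearMap)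
    (L' := (aeval z.2).toLinearMap) (fun q => ?_) continuous_fst.continuousAt
  exact ((MvPolynomial.continuous_eval q).comp continuous_snd).continuousAt

end IsContinuousFamily

end ContinuousFamilies

section MomentForms

variable {A κ : Type*} [CommRing A] [Algebra ℝ A] [Fintype κ]

/-- The form `(p, q) ↦ L ((∑ r, p r * v r) * (∑ r, q r * v r))` on `A^κ`. -/
def momentForm (L : Module.Dual ℝ A) (v : κ → A) : LinearMap.BilinForm ℝ (κ → A) :=
  ((LinearMap.mul ℝ A).compr₂ L).compl₁₂
    ((Fintype.linearCombination A v).restrictScalars ℝ)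
    ((Fintype.linearCombination A v).restrictScalars ℝ)

lemma momentForm_apply (L : Module.Dual ℝ A) (v p q : κ → A) :
    momentForm L v p q = L ((∑ r, p r * v r) * ∑ r, q r * v r) := rfl

lemma momentForm_apply_comm (L : Module.Dual ℝ A) (v p q : κ → A) :
    momentForm L v p q = momentForm L v q p := by
  rw [momentForm_apply, mul_comm, momentForm_apply]

lemma momentForm_smul_left (L : Module.Dual ℝ A) (a : A) (v p q : κ → A) :
    momentForm L v (a • p) q = momentForm L v p (a • q) := by
  simp only [momentForm_apply, Pi.smul_apply, smul_eq_mul, mul_assoc, ← Finset.mul_sum]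
  rw [mul_left_comm]

lemma momentForm_smul_self (L : Module.Dual ℝ A) (a : A) (v p : κ → A) :
    momentForm L v (a • p) p = L ((∑ r, p r * v r) ^ 2 * a) := by
  simp only [momentForm_apply, Pi.smul_apply, smul_eq_mul, mul_assoc, ← Finset.mul_sum]
  exact congrArg L (by ring)

lemma momentForm_eq_sum (L : Module.Dual ℝ A) (v p q : κ → A) :
    momentForm L v p q = ∑ r, ∑ s, L (p r * q s * (v r * v s)) := by
  rw [momentForm_apply, Finset.sum_mul_sum, map_sum]
  simp only [map_sum, mul_mul_mul_comm]

lemma momentForm_smul_single_single [DecidableEq κ] (L : Module.Dual ℝ A) (a : A) (v : κ → A)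
    (r s : κ) :
    momentForm L v (a • Pi.single r 1) (Pi.single s 1) = L (a * (v r * v s)) := by
  simp [momentForm_apply, Pi.single_apply, mul_assoc]

end MomentForms

section MomentForms

variable {n m : ℕ} {g : Fin m → MvPolynomial (Fin n) ℝ} {κ : Type*} [Fintype κ]

lemma eventually_momentForm_smul_self_nonneg {f : MvPolynomial (Fin n) ℝ} (hf : f ∈ QM g)
    (p : κ → MvPolynomial (Fin n) ℝ) (e : ℕ) :
    ∀ᶠ L in positivityFilter g, ∀ v : κ → MvPolynomial (Fin n) ℝ,
      (∀ r, (v r).totalDegree ≤ e) → 0 ≤ momentForm L v (f • p) p := by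
  filter_upwards [eventually_nonneg_of_mem_QM hf (∑ r, ((p r).totalDegree + e))] with L hL v hv
  rw [momentForm_smul_self]
  refine hL _ (totalDegree_finsetSum_le fun r hr => ?_)
  exact ((totalDegree_mul _ _).trans (Nat.add_le_add_left (hv r) _)).trans
    (Finset.single_le_sum (f := fun r => (p r).totalDegree + e) (fun _ _ => Nat.zero_le _) hr)

lemma eventually_abs_momentForm_le (harch : IsArchimedeanQM (QM g))
    (p q : κ → MvPolynomial (Fin n) ℝ) (e : ℕ) :
    ∃ C, ∀ᶠ L in positivityFilter g, ∀ v : κ → MvPolynomial (Fin n) ℝ,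
      (∀ r, (v r).totalDegree ≤ e) → |momentForm L v p q| ≤ C * ∑ r, L (v r ^ 2) := by
  choose C hC using fun r s => eventually_abs_apply_mul_le harch (p r * q s) e
  refine ⟨∑ r, ∑ s, 2 * |C r s|, ?_⟩
  filter_upwards [eventually_all.2 fun r => eventually_all.2 fun s => hC r s,
    eventually_nonneg_sq g e] with L hL hsq v hv
  have hle : ∀ r, L (v r ^ 2) ≤ ∑ t, L (v t ^ 2) := fun r =>
    Finset.single_le_sum (f := fun t => L (v t ^ 2)) (fun t _ => hsq _ (hv t)) (Finset.mem_univ r)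
  rw [momentForm_eq_sum, Finset.sum_mul]
  refine (Finset.abs_sum_le_sum_abs _ _).trans (Finset.sum_le_sum fun r _ => ?_)
  rw [Finset.sum_mul]
  refine (Finset.abs_sum_le_sum_abs _ _).trans (Finset.sum_le_sum fun s _ => ?_)
  calc |L (p r * q s * (v r * v s))|
      ≤ C r s * (L (v r ^ 2) + L (v s ^ 2)) := hL r s _ _ (hv r) (hv s)
    _ ≤ |C r s| * (L (v r ^ 2) + L (v s ^ 2)) :=
        mul_le_mul_of_nonneg_right (le_abs_self _) (add_nonneg (hsq _ (hv r)) (hsq _ (hv s)))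
    _ ≤ |C r s| * (∑ t, L (v t ^ 2) + ∑ t, L (v t ^ 2)) :=
        mul_le_mul_of_nonneg_left (add_le_add (hle r) (hle s)) (abs_nonneg _)
    _ = 2 * |C r s| * ∑ t, L (v t ^ 2) := by ring

lemma exists_isPositiveForm_tendsto_momentForm [DecidableEq κ] (harch : IsArchimedeanQM (QM g))
    {ι : Type*} (𝒰 : Ultrafilter ι) {L : ι → Module.Dual ℝ (MvPolynomial (Fin n) ℝ)}
    (hL : Tendsto L 𝒰 (positivityFilter g)) {v : ι → κ → MvPolynomial (Fin n) ℝ} {e : ℕ}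
    (hv : ∀ i r, (v i r).totalDegree ≤ e) (hpos : ∀ᶠ i in 𝒰, 0 < ∑ r, L i (v i r ^ 2)) :
    ∃ B : LinearMap.BilinForm ℝ (κ → MvPolynomial (Fin n) ℝ), IsPositiveForm (QM g) B ∧
      formTrace (fun r => Pi.single r 1) B = 1 ∧
      ∀ p q, Tendsto (fun i => (∑ r, L i (v i r ^ 2))⁻¹ * momentForm (L i) (v i) p q) 𝒰
        (𝓝 (B p q)) := by
  obtain ⟨B, hB, hlim⟩ := exists_isPositiveForm_tendsto (M := QM g) 𝒰
    (B := fun i => (∑ r, L i (v i r ^ 2))⁻¹ • momentForm (L i) (v i))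
    (fun p q => .of_forall fun i => by
      simp only [LinearMap.smul_apply, momentForm_apply_comm _ _ p q])
    (fun a p q => .of_forall fun i => by
      simp only [LinearMap.smul_apply, momentForm_smul_left])
    (fun f hf p => by
      filter_upwards [hpos, hL.eventually (eventually_momentForm_smul_self_nonneg hf p e)]
        with i hi hnonneg
      exact mul_nonneg (inv_nonneg.2 hi.le) (hnonneg _ (hv i)))
    (fun p q => by
      obtain ⟨C, hC⟩ := eventually_abs_momentForm_le harch p q e
      refine ⟨C, ?_⟩
      filter_upwards [hpos, hL.eventually hC] with i hi hle
      rw [LinearMap.smul_apply, LinearMap.smul_apply, smul_eq_mul, abs_mul,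
        abs_of_pos (inv_pos.2 hi), inv_mul_le_iff₀ hi, mul_comm]
      exact hle _ (hv i))
  refine ⟨B, hB, ?_, hlim⟩
  refine tendsto_nhds_unique (tendsto_finsetSum Finset.univ fun r _ => hlim _ _)
    (tendsto_const_nhds.congr' ?_)
  filter_upwards [hpos] with i hi
  have hdiag : ∀ r, momentForm (L i) (v i) (Pi.single r 1) (Pi.single r 1) = L i (v i r ^ 2) := by
    intro r
    rw [pow_two, ← one_mul (v i r * _), ← momentForm_smul_single_single, one_smul]
  simp only [LinearMap.smul_apply, smul_eq_mul, hdiag, ← Finset.mul_sum]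
  exact (inv_mul_cancel₀ hi.ne').symm

end MomentForms

section MatrixPositivity

lemma dotProduct_mulVec_eq_sum {R κ : Type*} [CommSemiring R] [Fintype κ] (H : Matrix κ κ R)
    (v w : κ → R) : v ⬝ᵥ H *ᵥ w = ∑ r, ∑ s, H r s * (v r * w s) := by
  simp only [dotProduct, mulVec, Finset.mul_sum, mul_left_comm]

variable {n m : ℕ} {g : Fin m → MvPolynomial (Fin n) ℝ}

lemma eventually_apply_mul_eq_zero (g : Fin m → MvPolynomial (Fin n) ℝ) (e : ℕ) :
    ∀ᶠ L in positivityFilter g, ∀ v u : MvPolynomial (Fin n) ℝ, v.totalDegree ≤ e →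
      u.totalDegree ≤ e → L (v ^ 2) ≤ 0 → L (v * u) = 0 := by
  filter_upwards [eventually_nonneg_sq g e] with L hL v u hv hu hle
  have hbound : ∀ t : ℝ, 2 * |t * L (v * u)| ≤ L (u ^ 2) := by
    intro t
    have htv : (t • v).totalDegree ≤ e := (totalDegree_smul_le t v).trans hv
    have h := two_mul_abs_apply_mul_le
      (hL _ ((totalDegree_add (t • v) u).trans (max_le htv hu)))
      (hL _ ((totalDegree_sub (t • v) u).trans (max_le htv hu)))
    rw [smul_pow, smul_mul_assoc, map_smul, map_smul, smul_eq_mul, smul_eq_mul] at h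
    linarith [mul_nonpos_of_nonneg_of_nonpos (sq_nonneg t) hle]
  by_contra hne
  have h := hbound ((L (u ^ 2) + 1) / L (v * u))
  rw [div_mul_cancel₀ _ hne] at h
  linarith [le_abs_self (L (u ^ 2) + 1), hL u hu]

variable {κ Ω : Type*} [TopologicalSpace Ω] {K : Set Ω}
  {R : Ω → Matrix κ κ (MvPolynomial (Fin n) ℝ)} {v : Ω → κ → MvPolynomial (Fin n) ℝ}

lemma exists_forall_totalDegree_le [Finite κ] (hv : ∀ r, IsContinuousFamily fun ω => v ω r) :
    ∃ D, ∀ ω r, (v ω r).totalDegree ≤ D := by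
  cases nonempty_fintype κ
  choose D hD using fun r => (hv r).exists_totalDegree_le
  exact ⟨Finset.univ.sup D, fun ω r => (hD r ω).trans (Finset.le_sup (Finset.mem_univ r))⟩

variable [Fintype κ]

lemma eventually_apply_dotProduct_mulVec_eq_zero
    (hR : ∀ r s, IsContinuousFamily fun ω => R ω r s)
    (hv : ∀ r, IsContinuousFamily fun ω => v ω r) :
    ∀ᶠ L in positivityFilter g, ∀ ω, ∑ r, L (v ω r ^ 2) ≤ 0 → L (v ω ⬝ᵥ R ω *ᵥ v ω) = 0 := by
  obtain ⟨D, hD⟩ := exists_forall_totalDegree_le hv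
  obtain ⟨E, hE⟩ := exists_forall_totalDegree_le (v := fun ω r => (R ω *ᵥ v ω) r) fun r => by
    simp only [mulVec, dotProduct]
    fun_prop
  filter_upwards [eventually_apply_mul_eq_zero g (max D E), eventually_nonneg_sq g D]
    with L hL hsq ω hle
  have hzero : ∀ r, L (v ω r ^ 2) ≤ 0 := fun r =>
    (Finset.single_le_sum (f := fun r => L (v ω r ^ 2)) (fun r _ => hsq _ (hD ω r))
      (Finset.mem_univ r)).trans hle
  rw [dotProduct, map_sum]
  exact Finset.sum_eq_zero fun r _ =>
    hL _ _ (le_max_of_le_left (hD ω r)) (le_max_of_le_right (hE ω r)) (hzero r)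

lemma eventually_apply_dotProduct_mulVec_pos_of_tendsto (harch : IsArchimedeanQM (QM g))
    (hR : ∀ r s, IsContinuousFamily fun ω => R ω r s) (hv : ∀ r, IsContinuousFamily fun ω => v ω r)
    {ω₀ : Ω} (hpos : ∀ x ∈ SolSet g, ∀ ξ : κ → ℝ, ξ ≠ 0 → 0 < ξ ⬝ᵥ (R ω₀).map (eval x) *ᵥ ξ)
    {ι : Type*} (𝒰 : Ultrafilter ι) {L : ι → Module.Dual ℝ (MvPolynomial (Fin n) ℝ)}
    (hL : Tendsto L 𝒰 (positivityFilter g)) {w : ι → Ω} (hw : Tendsto w 𝒰 (𝓝 ω₀))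
    (hν : ∀ᶠ i in 𝒰, 0 < ∑ r, L i (v (w i) r ^ 2)) :
    ∀ᶠ i in 𝒰, 0 < L i (v (w i) ⬝ᵥ R (w i) *ᵥ v (w i)) := by
  classical
  obtain ⟨D, hD⟩ := exists_forall_totalDegree_le hv
  obtain ⟨B, hB, htr, hlim⟩ := exists_isPositiveForm_tendsto_momentForm harch 𝒰 hL
    (v := fun i => v (w i)) (fun i r => hD (w i) r) hν
  have hBpos : 0 < ∑ r, ∑ s, B (R ω₀ r s • Pi.single r 1) (Pi.single s 1) := by
    refine hB.sum_apply_pos one_mem_QM (isSquareBounding_QM harch) ?_ htr fun φ hφ ξ hξ => ?_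
    · exact (congrArg (fun b => Submodule.span _ (Set.range b))
        (funext (Pi.basisFun_apply _ κ))).symm.trans (Pi.basisFun _ κ).span_eq
    · obtain ⟨x, hx, hφx⟩ := exists_mem_SolSet_of_algHom hφ
      simpa only [hφx, dotProduct_mulVec_eq_sum, Matrix.map_apply] using hpos x hx ξ hξ
  have hconv : Tendsto (fun i => (∑ r, L i (v (w i) r ^ 2))⁻¹ *
      L i (v (w i) ⬝ᵥ R (w i) *ᵥ v (w i))) 𝒰
      (𝓝 (∑ r, ∑ s, B (R ω₀ r s • Pi.single r 1) (Pi.single s 1))) := by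
    simp only [dotProduct_mulVec_eq_sum, map_sum, Finset.mul_sum]
    refine tendsto_finsetSum _ fun r _ => tendsto_finsetSum _ fun s _ => ?_
    have hlim' := fun q : MvPolynomial (Fin n) ℝ => hlim (q • Pi.single r 1) (Pi.single s 1)
    simp only [momentForm_smul_single_single] at hlim'
    exact (hR r s).tendsto_apply (L := fun i => (∑ r, L i (v (w i) r ^ 2))⁻¹ •
      L i ∘ₗ LinearMap.mulRight ℝ (v (w i) r * v (w i) s)) (L' := B.flip (Pi.single s 1) ∘ₗ
      (LinearMap.toSpanSingleton _ _ (Pi.single r 1)).restrictScalars ℝ) hlim' hw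
  filter_upwards [hν, hconv.eventually (lt_mem_nhds hBpos)] with i hi hi'
  exact pos_of_mul_pos_right hi' (inv_nonneg.2 hi.le)

theorem eventually_apply_dotProduct_mulVec_nonneg_of_posDef (harch : IsArchimedeanQM (QM g))
    (hK : IsCompact K) (hR : ∀ r s, IsContinuousFamily fun ω => R ω r s)
    (hv : ∀ r, IsContinuousFamily fun ω => v ω r)
    (hpos : ∀ ω ∈ K, ∀ x ∈ SolSet g, ∀ ξ : κ → ℝ, ξ ≠ 0 →
      0 < ξ ⬝ᵥ (R ω).map (eval x) *ᵥ ξ) :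
    ∀ᶠ L in positivityFilter g, ∀ ω ∈ K, 0 ≤ L (v ω ⬝ᵥ R ω *ᵥ v ω) := by
  refine eventually_prod_principal_iff
    (p := fun z : Module.Dual ℝ (MvPolynomial (Fin n) ℝ) × Ω =>
      0 ≤ z.1 (v z.2 ⬝ᵥ R z.2 *ᵥ v z.2)) |>.1 ?_
  refine mem_iff_ultrafilter.2 fun 𝒰 h𝒰 => ?_
  have hL : Tendsto Prod.fst 𝒰 (positivityFilter g) := (tendsto_fst (g := 𝓟 K)).mono_left h𝒰
  obtain ⟨ω₀, hω₀, hw⟩ := hK.ultrafilter_le_nhds' (𝒰.map Prod.snd)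
    (tendsto_principal.1 ((tendsto_snd (f := positivityFilter g)).mono_left h𝒰))
  rcases 𝒰.em fun z => 0 < ∑ r, z.1 (v z.2 r ^ 2) with hν | hν
  · exact (eventually_apply_dotProduct_mulVec_pos_of_tendsto harch hR hv (hpos ω₀ hω₀) 𝒰 hL hw
      hν).mono fun _ => le_of_lt
  · filter_upwards [hν, hL.eventually (eventually_apply_dotProduct_mulVec_eq_zero hR hv)]
      with z hz hzero
    exact (hzero z.2 (not_lt.1 hz)).ge

end MatrixPositivity

section PenalizedForms

lemma continuous_map_eval {n : ℕ} {Ω κ : Type*} [TopologicalSpace Ω]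
    {R : Ω → Matrix κ κ (MvPolynomial (Fin n) ℝ)}
    (hR : ∀ r s, IsContinuousFamily fun ω => R ω r s) :
    Continuous fun z : Ω × (Fin n → ℝ) => (R z.1).map (eval z.2) :=
  continuous_matrix fun r s => (hR r s).continuous_eval

lemma exists_forall_pos_add_mul {X : Type*} [TopologicalSpace X] {K : Set X} (hK : IsCompact K)
    {f h : X → ℝ} (hf : Continuous f) (hh : Continuous h) (hnonneg : ∀ x ∈ K, 0 ≤ h x)
    (hpos : ∀ x ∈ K, h x = 0 → 0 < f x) : ∃ l₀ : ℝ, ∀ l ≥ l₀, ∀ x ∈ K, 0 < f x + l * h x := by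
  obtain ⟨c, hc, hch⟩ := (hK.inter_right (isClosed_le hf continuous_const)).exists_forall_le'
    hh.continuousOn fun x hx => (hnonneg x hx.1).lt_of_ne' fun h0 => (hpos x hx.1 h0).not_ge hx.2
  obtain ⟨a, ha⟩ := hK.bddBelow_image hf.continuousOn
  refine ⟨max 0 ((1 - a) / c), fun l hl x hx => ?_⟩
  rcases le_or_gt (f x) 0 with hfx | hfx
  · have hlc : 1 - a ≤ l * c := (div_le_iff₀ hc).1 ((le_max_right _ _).trans hl)
    have hlh : l * c ≤ l * h x :=
      mul_le_mul_of_nonneg_left (hch x ⟨hx, hfx⟩) ((le_max_left _ _).trans hl)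
    linarith [ha (Set.mem_image_of_mem f hx)]
  · exact add_pos_of_pos_of_nonneg hfx
      (mul_nonneg ((le_max_left _ _).trans hl) (hnonneg x hx))

lemma dotProduct_vecMulVec_self_mulVec {R κ : Type*} [CommSemiring R] [Fintype κ] (a v : κ → R) :
    v ⬝ᵥ vecMulVec a a *ᵥ v = (a ⬝ᵥ v) ^ 2 := by
  rw [vecMulVec_mulVec, op_smul_eq_smul, dotProduct_smul, smul_eq_mul, dotProduct_comm v, pow_two]

variable {κ : Type*} [Fintype κ]

lemma dotProduct_self_pos {ξ : κ → ℝ} (hξ : ξ ≠ 0) : 0 < ξ ⬝ᵥ ξ := by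
  simpa only [star_trivial] using dotProduct_self_star_pos_iff.2 hξ

lemma smul_dotProduct_mulVec_smul {R : Type*} [CommSemiring R] (H : Matrix κ κ R) (c : R)
    (ξ : κ → R) : (c • ξ) ⬝ᵥ H *ᵥ (c • ξ) = c ^ 2 * (ξ ⬝ᵥ H *ᵥ ξ) := by
  rw [mulVec_smul, smul_dotProduct, dotProduct_smul, smul_eq_mul, smul_eq_mul, pow_two, mul_assoc]

lemma dotProduct_mulVec_pos_of_forall_sphere {H : Matrix κ κ ℝ}
    (hH : ∀ ξ ∈ Metric.sphere (0 : κ → ℝ) 1, 0 < ξ ⬝ᵥ H *ᵥ ξ) {ξ : κ → ℝ} (hξ : ξ ≠ 0) :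
    0 < ξ ⬝ᵥ H *ᵥ ξ := by
  have h := hH (‖ξ‖⁻¹ • ξ) (by simpa using norm_smul_inv_norm (𝕜 := ℝ) hξ)
  rw [smul_dotProduct_mulVec_smul] at h
  exact pos_of_mul_pos_right h (sq_nonneg _)

lemma exists_forall_dotProduct_add_smul_mulVec_pos {X : Type*} [TopologicalSpace X] {K : Set X}
    (hK : IsCompact K) {H E : X → Matrix κ κ ℝ} (hH : Continuous H) (hE : Continuous E)
    (hnonneg : ∀ x ∈ K, ∀ ξ, 0 ≤ ξ ⬝ᵥ E x *ᵥ ξ)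
    (hpos : ∀ x ∈ K, ∀ ξ, ξ ≠ 0 → ξ ⬝ᵥ E x *ᵥ ξ = 0 → 0 < ξ ⬝ᵥ H x *ᵥ ξ) :
    ∃ l₀ : ℝ, ∀ l ≥ l₀, ∀ x ∈ K, ∀ ξ, ξ ≠ 0 → 0 < ξ ⬝ᵥ (H x + l • E x) *ᵥ ξ := by
  obtain ⟨l₀, hl₀⟩ := exists_forall_pos_add_mul (hK.prod (isCompact_sphere (0 : κ → ℝ) 1))
    (f := fun z => z.2 ⬝ᵥ H z.1 *ᵥ z.2) (h := fun z => z.2 ⬝ᵥ E z.1 *ᵥ z.2) (by fun_prop)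
    (by fun_prop) (fun z hz => hnonneg _ hz.1 _)
    (fun z hz => hpos _ hz.1 _ (ne_zero_of_mem_unit_sphere ⟨z.2, hz.2⟩))
  refine ⟨l₀, fun l hl x hx ξ => dotProduct_mulVec_pos_of_forall_sphere fun η hη => ?_⟩
  rw [add_mulVec, dotProduct_add, smul_mulVec, dotProduct_smul, smul_eq_mul]
  exact hl₀ l hl (x, η) ⟨hx, hη⟩

section LagrangeMatrix

variable [DecidableEq κ]

/-- The matrix of the quadratic form `w ↦ (v ⬝ᵥ v) * (w ⬝ᵥ w) - (v ⬝ᵥ w) ^ 2`, which vanishes at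
`v`. Adding multiples of it to a matrix does not change the value of its form at `v`. -/
def lagrangeMatrix {R : Type*} [CommRing R] (v : κ → R) : Matrix κ κ R :=
  (v ⬝ᵥ v) • 1 - vecMulVec v v

lemma dotProduct_lagrangeMatrix_mulVec {R : Type*} [CommRing R] (v w : κ → R) :
    w ⬝ᵥ lagrangeMatrix v *ᵥ w = (v ⬝ᵥ v) * (w ⬝ᵥ w) - (v ⬝ᵥ w) ^ 2 := by
  rw [lagrangeMatrix, sub_mulVec, dotProduct_sub, smul_mulVec, one_mulVec, dotProduct_smul,
    dotProduct_vecMulVec_self_mulVec, smul_eq_mul]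

lemma map_lagrangeMatrix {R S : Type*} [CommRing R] [CommRing S] (f : R →+* S) (v : κ → R) :
    (lagrangeMatrix v).map f = lagrangeMatrix (f ∘ v) := by
  ext r s
  simp [lagrangeMatrix, RingHom.map_dotProduct, vecMulVec_apply, one_apply, apply_ite f]

lemma dotProduct_self_mul_lagrangeMatrix {R : Type*} [CommRing R] (v w : κ → R) :
    (w ⬝ᵥ w) * (w ⬝ᵥ lagrangeMatrix v *ᵥ w) =
      ((w ⬝ᵥ w) • v - (v ⬝ᵥ w) • w) ⬝ᵥ ((w ⬝ᵥ w) • v - (v ⬝ᵥ w) • w) := by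
  simp only [dotProduct_lagrangeMatrix_mulVec, dotProduct_sub, sub_dotProduct, dotProduct_smul,
    smul_dotProduct, smul_eq_mul, dotProduct_comm w v]
  ring

lemma dotProduct_lagrangeMatrix_mulVec_nonneg (v w : κ → ℝ) :
    0 ≤ w ⬝ᵥ lagrangeMatrix v *ᵥ w := by
  rw [dotProduct_lagrangeMatrix_mulVec]
  simpa only [dotProduct, ← pow_two, sub_nonneg] using
    Finset.sum_mul_sq_le_sq_mul_sq Finset.univ v w

lemma eq_smul_of_dotProduct_lagrangeMatrix_mulVec_eq_zero {v w : κ → ℝ} (hw : w ≠ 0)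
    (h : w ⬝ᵥ lagrangeMatrix v *ᵥ w = 0) : ∃ c : ℝ, v = c • w := by
  have hzero := dotProduct_self_mul_lagrangeMatrix v w
  rw [h, mul_zero, eq_comm, dotProduct_self_eq_zero, sub_eq_zero] at hzero
  refine ⟨(w ⬝ᵥ w)⁻¹ * (v ⬝ᵥ w), ?_⟩
  rw [mul_smul, ← hzero, inv_smul_smul₀ (dotProduct_self_pos hw).ne']

lemma isContinuousFamily_lagrangeMatrix {n : ℕ} {Ω : Type*} [TopologicalSpace Ω]
    {v : Ω → κ → MvPolynomial (Fin n) ℝ} (hv : ∀ r, IsContinuousFamily fun ω => v ω r) (r s : κ) :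
    IsContinuousFamily fun ω => lagrangeMatrix (v ω) r s := by
  simp only [lagrangeMatrix, dotProduct, Matrix.sub_apply, Matrix.smul_apply, vecMulVec_apply,
    smul_eq_mul]
  fun_prop

end LagrangeMatrix

variable {n m : ℕ} {g : Fin m → MvPolynomial (Fin n) ℝ} {Ω : Type*} [TopologicalSpace Ω]
  {K : Set Ω} {R : Ω → Matrix κ κ (MvPolynomial (Fin n) ℝ)}
  {v : Ω → κ → MvPolynomial (Fin n) ℝ}

theorem eventually_apply_dotProduct_mulVec_nonneg (harch : IsArchimedeanQM (QM g))
    (hK : IsCompact K) (hR : ∀ r s, IsContinuousFamily fun ω => R ω r s)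
    (hv : ∀ r, IsContinuousFamily fun ω => v ω r)
    (hzero : ∀ ω ∈ K, ∀ x ∈ SolSet g, eval x ∘ v ω = 0 → ∀ ξ : κ → ℝ, ξ ≠ 0 →
      0 < ξ ⬝ᵥ (R ω).map (eval x) *ᵥ ξ)
    (hne : ∀ ω ∈ K, ∀ x ∈ SolSet g, eval x ∘ v ω ≠ 0 →
      0 < (eval x ∘ v ω) ⬝ᵥ (R ω).map (eval x) *ᵥ (eval x ∘ v ω)) :
    ∀ᶠ L in positivityFilter g, ∀ ω ∈ K, 0 ≤ L (v ω ⬝ᵥ R ω *ᵥ v ω) := by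
  classical
  have hE := isContinuousFamily_lagrangeMatrix hv
  obtain ⟨l, hl⟩ := exists_forall_dotProduct_add_smul_mulVec_pos
    (hK.prod (isCompact_SolSet harch)) (H := fun z => (R z.1).map (eval z.2))
    (E := fun z => lagrangeMatrix (eval z.2 ∘ v z.1)) (continuous_map_eval hR)
    (by simpa only [map_lagrangeMatrix] using continuous_map_eval hE)
    (fun z _ ξ => dotProduct_lagrangeMatrix_mulVec_nonneg _ ξ)
    (fun z hz ξ hξ h0 => by
      obtain ⟨c, hc⟩ := eq_smul_of_dotProduct_lagrangeMatrix_mulVec_eq_zero hξ h0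
      by_cases hvx : eval z.2 ∘ v z.1 = 0
      · exact hzero z.1 hz.1 z.2 hz.2 hvx ξ hξ
      · have hpos := hne z.1 hz.1 z.2 hz.2 hvx
        rw [hc, smul_dotProduct_mulVec_smul] at hpos
        exact pos_of_mul_pos_right hpos (sq_nonneg c))
  have hR' : ∀ r s, IsContinuousFamily fun ω => (R ω + l • lagrangeMatrix (v ω)) r s :=
    fun r s => (hR r s).add (.smul continuous_const (hE r s))
  filter_upwards [eventually_apply_dotProduct_mulVec_nonneg_of_posDef harch hK hR' hv
    fun ω hω x hx ξ hξ => by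
      rw [Matrix.map_add _ (map_add (eval x)), Matrix.map_smul _ _ (smul_eval x · l),
        map_lagrangeMatrix]
      exact hl l le_rfl (ω, x) ⟨hω, hx⟩ ξ hξ] with L hL ω hω
  simpa only [add_mulVec, dotProduct_add, smul_mulVec, dotProduct_smul,
    dotProduct_lagrangeMatrix_mulVec, ← pow_two, sub_self, smul_zero, add_zero] using hL ω hω

end PenalizedForms

section TruncatedInverse

variable {A B : Type*} [CommRing A] [Algebra ℝ A] [CommRing B] [Algebra ℝ B]

/-- The partial sum of length `N` of the geometric series of `1 / z` around `z = G`. -/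
def truncInv (G : ℝ) (N : ℕ) (z : A) : A :=
  G⁻¹ • ∑ j ∈ Finset.range N, (1 - G⁻¹ • z) ^ j

lemma mul_truncInv (G : ℝ) (N : ℕ) (z : A) : z * truncInv G N z = 1 - (1 - G⁻¹ • z) ^ N := by
  rw [← mul_neg_geom_sum, sub_sub_cancel, truncInv, mul_smul_comm, smul_mul_assoc]

lemma map_truncInv (f : A →ₐ[ℝ] B) (G : ℝ) (N : ℕ) (z : A) :
    f (truncInv G N z) = truncInv G N (f z) := by
  simp only [truncInv, map_smul, map_sum, map_pow, map_sub, map_one]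

lemma truncInv_zero (G : ℝ) (N : ℕ) : truncInv G N (0 : ℝ) = G⁻¹ * N := by
  simp [truncInv]

variable {G z : ℝ}

lemma one_sub_inv_smul_nonneg (hG : 0 < G) (hz : z ≤ G) : 0 ≤ 1 - G⁻¹ • z := by
  rwa [smul_eq_mul, sub_nonneg, inv_mul_le_iff₀ hG, mul_one]

lemma monotone_truncInv (hG : 0 < G) (hz : z ≤ G) : Monotone fun N => truncInv G N z := by
  refine monotone_nat_of_le_succ fun N => ?_
  simp only [truncInv, Finset.sum_range_succ, smul_eq_mul]
  exact mul_le_mul_of_nonneg_left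
    (le_add_of_nonneg_right (pow_nonneg (one_sub_inv_smul_nonneg hG hz) N)) (inv_nonneg.2 hG.le)

lemma mul_mul_one_sub_inv_smul_pow_le (hG : 0 < G) (h0 : 0 ≤ z) (hz : z ≤ G) (N : ℕ) :
    N * (z * (1 - G⁻¹ • z) ^ N) ≤ G := by
  set y := G⁻¹ • z with hy
  have hy0 : 0 ≤ y := mul_nonneg (inv_nonneg.2 hG.le) h0
  have hy1 : 0 ≤ 1 - y := one_sub_inv_smul_nonneg hG hz
  have hpow : (1 + y) ^ N * (1 - y) ^ N ≤ 1 := by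
    rw [← mul_pow]
    exact pow_le_one₀ (by positivity) (by linarith [sq_nonneg y])
  have hbernoulli : (1 + N * y) * (1 - y) ^ N ≤ 1 :=
    (mul_le_mul_of_nonneg_right (one_add_mul_le_pow (by linarith) N) (pow_nonneg hy1 N)).trans hpow
  have hzy : z = G * y := by rw [hy, smul_eq_mul, mul_inv_cancel_left₀ hG.ne']
  calc N * (z * (1 - y) ^ N) = G * ((1 + N * y) * (1 - y) ^ N - (1 - y) ^ N) := by
        rw [hzy]; ring
    _ ≤ G * 1 := by gcongr; linarith [pow_nonneg hy1 N]
    _ = G := mul_one G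

end TruncatedInverse

lemma exists_pos_forall_le {π X : Type*} [Finite π] [TopologicalSpace X] {K : Set X}
    (hK : IsCompact K) {f : X → π → ℝ} (hf : Continuous f) :
    ∃ G, 0 < G ∧ ∀ x ∈ K, ∀ p, f x p ≤ G := by
  cases nonempty_fintype π
  obtain ⟨G, hG, hle⟩ := (hK.image hf).isBounded.exists_pos_norm_le
  exact ⟨G, hG, fun x hx p => (le_abs_self _).trans ((norm_le_pi_norm _ p).trans
    (hle _ (Set.mem_image_of_mem f hx)))⟩

section PositivityAlongTangents

lemma eval_dotProduct_mulVec {σ κ : Type*} [Fintype κ] (H : Matrix κ κ (MvPolynomial σ ℝ))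
    (v : κ → MvPolynomial σ ℝ) (x : σ → ℝ) :
    eval x (v ⬝ᵥ H *ᵥ v) = (eval x ∘ v) ⬝ᵥ H.map (eval x) *ᵥ (eval x ∘ v) := by
  rw [RingHom.map_dotProduct]
  exact congrArg _ (funext fun r => RingHom.map_mulVec _ _ _ _)

lemma exists_dotProduct_mulVec_pos_of_monotone {X κ : Type*} [TopologicalSpace X] [Fintype κ]
    {K : Set X} (hK : IsCompact K) {H : ℕ → X → Matrix κ κ ℝ} (hH : ∀ N, Continuous (H N))
    (hmono : ∀ x ∈ K, ∀ ξ, Monotone fun N => ξ ⬝ᵥ H N x *ᵥ ξ) {v : X → κ → ℝ} (hv : Continuous v)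
    {N₀ : ℕ} (hzero : ∀ x ∈ K, v x = 0 → ∀ ξ, ξ ≠ 0 → 0 < ξ ⬝ᵥ H N₀ x *ᵥ ξ)
    {θ : X → ℝ} (hθ : Continuous θ) (hpos : ∀ x ∈ K, v x ≠ 0 → 0 < θ x) {b : ℝ}
    (hb : ∀ (N : ℕ), ∀ x ∈ K, N * (θ x - v x ⬝ᵥ H N x *ᵥ v x) ≤ b) :
    ∃ N ≥ N₀, ∀ x ∈ K, v x ≠ 0 → 0 < v x ⬝ᵥ H N x *ᵥ v x := by
  obtain ⟨ρ, hρ, hnear⟩ := ((hK.prod (isCompact_sphere (0 : κ → ℝ) 1)).inter_right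
    (t := {z : X × (κ → ℝ) | z.2 ⬝ᵥ H N₀ z.1 *ᵥ z.2 ≤ 0})
    (isClosed_le (by fun_prop) (by fun_prop)))
    |>.exists_forall_le' (f := fun z => v z.1 ⬝ᵥ v z.1) (by fun_prop) fun z hz =>
      dotProduct_self_pos fun h => (hzero z.1 hz.1.1 h z.2
        (ne_zero_of_mem_unit_sphere ⟨z.2, hz.1.2⟩)).not_ge hz.2
  obtain ⟨c, hc, hfar⟩ := (hK.inter_right (t := {x | ρ ≤ v x ⬝ᵥ v x})
    (isClosed_le (by fun_prop) (by fun_prop))).exists_forall_le' hθ.continuousOn fun x hx =>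
      hpos x hx.1 fun h => hρ.not_ge (by simpa [h] using hx.2)
  obtain ⟨N₁, hN₁⟩ := exists_nat_gt (b / c)
  refine ⟨max N₀ N₁, le_max_left _ _, fun x hx hvx => ?_⟩
  rcases lt_or_ge (v x ⬝ᵥ v x) ρ with hlt | hge
  · refine (dotProduct_mulVec_pos_of_forall_sphere (fun ξ hξ => ?_) hvx).trans_le
      (hmono x hx _ (le_max_left N₀ N₁))
    exact not_le.1 fun h => hlt.not_ge (hnear (x, ξ) ⟨⟨hx, hξ⟩, h⟩)
  · refine (?_ : 0 < v x ⬝ᵥ H N₁ x *ᵥ v x).trans_le (hmono x hx _ (le_max_right N₀ N₁))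
    have hcθ := mul_le_mul_of_nonneg_left (hfar x ⟨hx, hge⟩) (Nat.cast_nonneg (α := ℝ) N₁)
    rw [div_lt_iff₀ hc] at hN₁
    by_contra! hle
    linarith [hb N₁ x hx, mul_nonpos_of_nonneg_of_nonpos (Nat.cast_nonneg (α := ℝ) N₁) hle]

variable {π κ : Type*} [Fintype π]

/-- The matrix `R` with the squares of the linear forms `α p`, weighted by the truncated inverses of
`z p`, added. If `z p = α p ⬝ᵥ v`, these squares almost add up to `∑ p, z p` at `v`. -/
def addWeightedSquares {A : Type*} [CommRing A] [Algebra ℝ A] (R : Matrix κ κ A) (z : π → A)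
    (α : π → κ → A) (G : ℝ) (N : ℕ) : Matrix κ κ A :=
  R + ∑ p, truncInv G N (z p) • vecMulVec (α p) (α p)

section Algebra

variable {A B : Type*} [CommRing A] [Algebra ℝ A] [CommRing B] [Algebra ℝ B]
  (R : Matrix κ κ A) (z : π → A) (α : π → κ → A) (G : ℝ) (N : ℕ)

lemma map_addWeightedSquares (f : A →ₐ[ℝ] B) :
    (addWeightedSquares R z α G N).map f =
      addWeightedSquares (R.map f) (f ∘ z) (fun p => f ∘ α p) G N := by
  ext r s
  simp [addWeightedSquares, Matrix.sum_apply, vecMulVec_apply, map_truncInv]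

variable [Fintype κ]

lemma dotProduct_addWeightedSquares_mulVec (ξ : κ → A) :
    ξ ⬝ᵥ addWeightedSquares R z α G N *ᵥ ξ =
      ξ ⬝ᵥ R *ᵥ ξ + ∑ p, truncInv G N (z p) * (α p ⬝ᵥ ξ) ^ 2 := by
  rw [addWeightedSquares, add_mulVec, dotProduct_add, sum_mulVec, dotProduct_sum]
  simp only [smul_mulVec, dotProduct_smul, dotProduct_vecMulVec_self_mulVec, smul_eq_mul]

lemma sum_add_dotProduct_mulVec_eq {v : κ → A} (hz : ∀ p, z p = α p ⬝ᵥ v) :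
    ∑ p, z p + v ⬝ᵥ R *ᵥ v =
      v ⬝ᵥ addWeightedSquares R z α G N *ᵥ v + ∑ p, z p * (1 - G⁻¹ • z p) ^ N := by
  have hsplit : ∀ p, z p = truncInv G N (z p) * (α p ⬝ᵥ v) ^ 2 + z p * (1 - G⁻¹ • z p) ^ N := by
    intro p
    rw [← hz]
    linear_combination -(z p) * mul_truncInv G N (z p)
  rw [dotProduct_addWeightedSquares_mulVec, add_assoc, ← Finset.sum_add_distrib, add_comm]
  exact congrArg _ (Finset.sum_congr rfl fun p _ => hsplit p)

end Algebra

section Positivity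

variable {X : Type*} [TopologicalSpace X] [Fintype κ] {K : Set X} {R : X → Matrix κ κ ℝ}
  {z : X → π → ℝ} {α : X → π → κ → ℝ} {v : X → κ → ℝ} {G : ℝ}

lemma exists_addWeightedSquares_posDef_of_eq_zero (hK : IsCompact K) (hR : Continuous R)
    (hα : Continuous α) (hv : Continuous v) (hG : 0 < G) (hz : ∀ x ∈ K, ∀ p, z x p = α x p ⬝ᵥ v x)
    (hpos : ∀ x ∈ K, v x = 0 → ∀ ξ, ξ ≠ 0 → (∀ p, α x p ⬝ᵥ ξ = 0) → 0 < ξ ⬝ᵥ R x *ᵥ ξ) :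
    ∃ N₀ : ℕ, ∀ N ≥ N₀, ∀ x ∈ K, v x = 0 → ∀ ξ, ξ ≠ 0 →
      0 < ξ ⬝ᵥ addWeightedSquares (R x) (z x) (α x) G N *ᵥ ξ := by
  have hform : ∀ x ξ, ξ ⬝ᵥ (∑ p, vecMulVec (α x p) (α x p)) *ᵥ ξ = ∑ p, (α x p ⬝ᵥ ξ) ^ 2 := by
    intro x ξ
    simp only [sum_mulVec, dotProduct_sum, dotProduct_vecMulVec_self_mulVec]
  obtain ⟨l, hl⟩ := exists_forall_dotProduct_add_smul_mulVec_pos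
    (hK.inter_right (isClosed_eq hv continuous_const)) hR
    (E := fun x => ∑ p, vecMulVec (α x p) (α x p)) (by fun_prop)
    (fun x _ ξ => by rw [hform]; positivity)
    (fun x hx ξ hξ h0 => by
      rw [hform, Finset.sum_eq_zero_iff_of_nonneg fun p _ => sq_nonneg _] at h0
      exact hpos x hx.1 hx.2 ξ hξ fun p => pow_eq_zero_iff two_ne_zero |>.1 (h0 p (by simp)))
  obtain ⟨N₀, hN₀⟩ := exists_nat_ge (G * l)
  refine ⟨N₀, fun N hN x hx hvx ξ hξ => ?_⟩
  have hlN : l ≤ G⁻¹ * N := (le_inv_mul_iff₀ hG).2 (hN₀.trans (Nat.cast_le.2 hN))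
  have h := hl _ hlN x ⟨hx, hvx⟩ ξ hξ
  have hz0 : ∀ p, z x p = 0 := fun p => by rw [hz x hx, hvx, dotProduct_zero]
  rw [add_mulVec, dotProduct_add, smul_mulVec, dotProduct_smul, hform, smul_eq_mul] at h
  simpa only [dotProduct_addWeightedSquares_mulVec, hz0, truncInv_zero, ← Finset.mul_sum] using h

lemma exists_addWeightedSquares_pos (hK : IsCompact K) (hR : Continuous R)
    (hα : Continuous α) (hv : Continuous v) (hz : ∀ x ∈ K, ∀ p, z x p = α x p ⬝ᵥ v x)
    (hzc : Continuous z) (h0 : ∀ x ∈ K, ∀ p, 0 ≤ z x p) (hG : 0 < G)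
    (hzG : ∀ x ∈ K, ∀ p, z x p ≤ G)
    (hpos : ∀ x ∈ K, v x = 0 → ∀ ξ, ξ ≠ 0 → (∀ p, α x p ⬝ᵥ ξ = 0) → 0 < ξ ⬝ᵥ R x *ᵥ ξ)
    (hne : ∀ x ∈ K, v x ≠ 0 → 0 < ∑ p, z x p + v x ⬝ᵥ R x *ᵥ v x) :
    ∃ N : ℕ, (∀ x ∈ K, v x = 0 → ∀ ξ, ξ ≠ 0 →
        0 < ξ ⬝ᵥ addWeightedSquares (R x) (z x) (α x) G (2 * N) *ᵥ ξ) ∧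
      ∀ x ∈ K, v x ≠ 0 →
        0 < v x ⬝ᵥ addWeightedSquares (R x) (z x) (α x) G (2 * N) *ᵥ v x := by
  obtain ⟨N₀, hN₀⟩ := exists_addWeightedSquares_posDef_of_eq_zero hK hR hα hv hG hz hpos
  have hmono : ∀ x ∈ K, ∀ ξ, Monotone fun N =>
      ξ ⬝ᵥ addWeightedSquares (R x) (z x) (α x) G (2 * N) *ᵥ ξ := by
    intro x hx ξ N M hNM
    simp only [dotProduct_addWeightedSquares_mulVec]
    gcongr with p
    exact monotone_truncInv hG (hzG x hx p) (Nat.mul_le_mul_left 2 hNM)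
  obtain ⟨N, hN, hNpos⟩ := exists_dotProduct_mulVec_pos_of_monotone hK
    (H := fun N x => addWeightedSquares (R x) (z x) (α x) G (2 * N))
    (fun N => by unfold addWeightedSquares truncInv; fun_prop) hmono hv
    (hN₀ (2 * N₀) (by lia)) (by fun_prop) hne (b := ∑ _p : π, G) fun N x hx => by
      rw [sum_add_dotProduct_mulVec_eq (R x) (z x) (α x) G (2 * N) (hz x hx), add_sub_cancel_left,
        Finset.mul_sum]
      refine Finset.sum_le_sum fun p _ => le_trans ?_
        (mul_mul_one_sub_inv_smul_pow_le hG (h0 x hx p) (hzG x hx p) (2 * N))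
      have hterm := mul_nonneg (h0 x hx p)
        (pow_nonneg (one_sub_inv_smul_nonneg hG (hzG x hx p)) (2 * N))
      gcongr
      lia
  exact ⟨N, hN₀ (2 * N) (by lia), hNpos⟩

end Positivity

variable {n m : ℕ} {g : Fin m → MvPolynomial (Fin n) ℝ} {Ω : Type*} [TopologicalSpace Ω]
  {K : Set Ω} [Fintype κ] {R : Ω → Matrix κ κ (MvPolynomial (Fin n) ℝ)}
  {α : Ω → π → κ → MvPolynomial (Fin n) ℝ} {v : Ω → κ → MvPolynomial (Fin n) ℝ}

lemma exists_eval_addWeightedSquares_pos (hK : IsCompact K) (hS : IsCompact (SolSet g))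
    (hR : ∀ r s, IsContinuousFamily fun ω => R ω r s)
    (hα : ∀ p r, IsContinuousFamily fun ω => α ω p r)
    (hv : ∀ r, IsContinuousFamily fun ω => v ω r)
    (hnonneg : ∀ ω ∈ K, ∀ x ∈ SolSet g, ∀ p, 0 ≤ eval x (α ω p ⬝ᵥ v ω))
    (hzero : ∀ ω ∈ K, ∀ x ∈ SolSet g, eval x ∘ v ω = 0 → ∀ ξ : κ → ℝ, ξ ≠ 0 →
      (∀ p, (eval x ∘ α ω p) ⬝ᵥ ξ = 0) → 0 < ξ ⬝ᵥ (R ω).map (eval x) *ᵥ ξ)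
    (hne : ∀ ω ∈ K, ∀ x ∈ SolSet g, eval x ∘ v ω ≠ 0 →
      0 < eval x (∑ p, α ω p ⬝ᵥ v ω + v ω ⬝ᵥ R ω *ᵥ v ω)) :
    ∃ (G : ℝ) (N : ℕ), ∀ ω ∈ K, ∀ x ∈ SolSet g,
      let H := (addWeightedSquares (R ω) (fun p => α ω p ⬝ᵥ v ω) (α ω) G (2 * N)).map (eval x)
      (eval x ∘ v ω = 0 → ∀ ξ, ξ ≠ 0 → 0 < ξ ⬝ᵥ H *ᵥ ξ) ∧
        (eval x ∘ v ω ≠ 0 → 0 < (eval x ∘ v ω) ⬝ᵥ H *ᵥ (eval x ∘ v ω)) := by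
  have hKS := hK.prod hS
  have hzc : Continuous fun y : Ω × (Fin n → ℝ) => fun p => eval y.2 (α y.1 p ⬝ᵥ v y.1) :=
    continuous_pi fun p => (IsContinuousFamily.dotProduct (hα p) hv).continuous_eval
  obtain ⟨G, hG, hzG⟩ := exists_pos_forall_le hKS hzc
  obtain ⟨N, hN, hNpos⟩ := exists_addWeightedSquares_pos hKS
    (R := fun y : Ω × (Fin n → ℝ) => (R y.1).map (eval y.2)) (α := fun y p => eval y.2 ∘ α y.1 p)
    (v := fun y => eval y.2 ∘ v y.1) (continuous_map_eval hR)
    (continuous_pi fun p => continuous_pi fun r => (hα p r).continuous_eval)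
    (continuous_pi fun r => (hv r).continuous_eval)
    (fun y _ p => RingHom.map_dotProduct (eval y.2) _ _) hzc
    (fun y hy => hnonneg y.1 hy.1 y.2 hy.2) hG hzG
    (fun y hy => hzero y.1 hy.1 y.2 hy.2) (fun y hy hvy => by
      simpa only [map_add, map_sum, eval_dotProduct_mulVec] using hne y.1 hy.1 y.2 hy.2 hvy)
  refine ⟨G, N, fun ω hω x hx => ?_⟩
  have heval : (addWeightedSquares (R ω) (fun p => α ω p ⬝ᵥ v ω) (α ω) G (2 * N)).map (eval x) =
      addWeightedSquares ((R ω).map (eval x)) (fun p => eval x (α ω p ⬝ᵥ v ω))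
        (fun p => eval x ∘ α ω p) G (2 * N) :=
    map_addWeightedSquares (R ω) _ (α ω) G (2 * N) (aeval x)
  exact heval ▸ ⟨hN (ω, x) ⟨hω, hx⟩, hNpos (ω, x) ⟨hω, hx⟩⟩

theorem eventually_apply_sum_add_dotProduct_mulVec_nonneg (harch : IsArchimedeanQM (QM g))
    (hK : IsCompact K) (hR : ∀ r s, IsContinuousFamily fun ω => R ω r s)
    (hα : ∀ p r, IsContinuousFamily fun ω => α ω p r)
    (hv : ∀ r, IsContinuousFamily fun ω => v ω r)
    (hnonneg : ∀ ω ∈ K, ∀ x ∈ SolSet g, ∀ p, 0 ≤ eval x (α ω p ⬝ᵥ v ω))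
    (hzero : ∀ ω ∈ K, ∀ x ∈ SolSet g, eval x ∘ v ω = 0 → ∀ ξ : κ → ℝ, ξ ≠ 0 →
      (∀ p, (eval x ∘ α ω p) ⬝ᵥ ξ = 0) → 0 < ξ ⬝ᵥ (R ω).map (eval x) *ᵥ ξ)
    (hne : ∀ ω ∈ K, ∀ x ∈ SolSet g, eval x ∘ v ω ≠ 0 →
      0 < eval x (∑ p, α ω p ⬝ᵥ v ω + v ω ⬝ᵥ R ω *ᵥ v ω))
    (hL : ∀ᶠ L in positivityFilter g, ∀ ω ∈ K, ∀ p, 0 ≤ L (α ω p ⬝ᵥ v ω)) :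
    ∀ᶠ L in positivityFilter g, ∀ ω ∈ K, 0 ≤ L (∑ p, α ω p ⬝ᵥ v ω + v ω ⬝ᵥ R ω *ᵥ v ω) := by
  obtain ⟨G, N, hpos⟩ := exists_eval_addWeightedSquares_pos hK (isCompact_SolSet harch) hR hα hv
    hnonneg hzero hne
  have hz : ∀ p, IsContinuousFamily fun ω => α ω p ⬝ᵥ v ω := fun p =>
    .dotProduct (hα p) hv
  obtain ⟨D, hD⟩ := exists_forall_totalDegree_le
    (v := fun ω p => (1 - G⁻¹ • (α ω p ⬝ᵥ v ω)) ^ N) fun p => by fun_prop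
  have hLR := eventually_apply_dotProduct_mulVec_nonneg harch hK
    (R := fun ω => addWeightedSquares (R ω) (fun p => α ω p ⬝ᵥ v ω) (α ω) G (2 * N))
    (fun r s => by
      simp only [addWeightedSquares, truncInv, Matrix.add_apply, Matrix.sum_apply,
        Matrix.smul_apply, vecMulVec_apply, smul_eq_mul]
      fun_prop) hv
    (fun ω hω x hx => (hpos ω hω x hx).1) (fun ω hω x hx => (hpos ω hω x hx).2)
  filter_upwards [hLR, eventually_mulSq hL D] with L hLR hLz ω hω
  rw [sum_add_dotProduct_mulVec_eq (R ω) _ (α ω) G (2 * N) (fun _ => rfl), map_add, map_sum]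
  refine add_nonneg (hLR ω hω) (Finset.sum_nonneg fun p _ => ?_)
  simpa only [mulSq_apply, ← pow_mul', mul_comm] using hLz _ (hD ω p) ω hω p

end PositivityAlongTangents

section Quadrature

lemma convexHull_range_eq_image_stdSimplex {ι E : Type*} [Fintype ι] [AddCommGroup E] [Module ℝ E]
    (y : ι → E) : convexHull ℝ (Set.range y) = (fun w => ∑ i, w i • y i) '' stdSimplex ℝ ι := by
  classical
  have hrange :
      Set.range y = Fintype.linearCombination ℝ y '' Set.range fun i => Pi.single i 1 := by
    rw [← Set.range_comp]
    exact congrArg _ (funext fun i => by simp)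
  rw [hrange, ← LinearMap.image_convexHull, convexHull_rangle_single_eq_stdSimplex]
  rfl

lemma isCompact_convexHull {E : Type*} [NormedAddCommGroup E] [NormedSpace ℝ E]
    [FiniteDimensional ℝ E] {s : Set E} (hs : IsCompact s) : IsCompact (convexHull ℝ s) := by
  set N := Module.finrank ℝ E + 1
  have himage : convexHull ℝ s = (fun q : (Fin N → ℝ) × (Fin N → E) => ∑ i, q.1 i • q.2 i) ''
      (stdSimplex ℝ (Fin N) ×ˢ Set.univ.pi fun _ => s) := by
    refine Set.Subset.antisymm (fun x hx => ?_) ?_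
    · rw [convexHull_eq_union] at hx
      simp only [Set.mem_iUnion] at hx
      obtain ⟨t, hts, hindep, hxt⟩ := hx
      have hcard : Fintype.card t ≤ Fintype.card (Fin N) := by
        rw [Fintype.card_fin]
        exact hindep.card_le_finrank_succ.trans (Nat.succ_le_succ (Submodule.finrank_le _))
      have : Nonempty t := (convexHull_nonempty_iff.1 ⟨x, hxt⟩).to_subtype
      obtain ⟨e⟩ := Function.Embedding.nonempty_of_card_le hcard
      have hrange : Set.range (fun i => (Function.invFun e i).1) = t := by
        rw [Set.range_comp' Subtype.val, (Function.invFun_surjective e.injective).range_eq,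
          Set.image_univ, Subtype.range_coe]
      rw [← hrange, convexHull_range_eq_image_stdSimplex] at hxt
      obtain ⟨w, hw, rfl⟩ := hxt
      exact ⟨(w, _), ⟨hw, fun i _ => hts (Subtype.coe_prop _)⟩, rfl⟩
    · rintro _ ⟨⟨w, y⟩, ⟨⟨hw, hw1⟩, hy⟩, rfl⟩
      exact (convex_convexHull ℝ s).sum_mem (fun i _ => hw i) hw1
        fun i _ => subset_convexHull ℝ s (hy i trivial)
  rw [himage]
  exact ((isCompact_stdSimplex ℝ _).prod (isCompact_univ_pi fun _ => hs)).image (by fun_prop)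

lemma intervalIntegral_smul_mem_convexHull {E : Type*} [NormedAddCommGroup E] [NormedSpace ℝ E]
    [FiniteDimensional ℝ E] {a b : ℝ} (hab : a ≤ b) {ρ : ℝ → ℝ} (hρ : Continuous ρ)
    (hρ0 : ∀ s ∈ Set.Icc a b, 0 ≤ ρ s) (hρ1 : ∫ s in a..b, ρ s = 1) {γ : ℝ → E}
    (hγ : Continuous γ) : ∫ s in a..b, ρ s • γ s ∈ convexHull ℝ (γ '' Set.Icc a b) := by
  have := FiniteDimensional.complete ℝ E
  have hint : IntervalIntegrable (fun s => ρ s • γ s) MeasureTheory.volume a b :=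
    (hρ.smul hγ).intervalIntegrable a b
  by_contra hnot
  obtain ⟨f, c, hlt, hc⟩ := geometric_hahn_banach_closed_point (convex_convexHull ℝ _)
    (isCompact_convexHull (isCompact_Icc.image hγ)).isClosed hnot
  rw [← f.intervalIntegral_comp_comm hint] at hc
  refine hc.not_ge ?_
  calc ∫ s in a..b, f (ρ s • γ s) ≤ ∫ s in a..b, ρ s * c := by
        refine intervalIntegral.integral_mono_on hab
          (Continuous.intervalIntegrable (by fun_prop) _ _)
          (Continuous.intervalIntegrable (by fun_prop) _ _) fun s hs => ?_
        rw [map_smul, smul_eq_mul]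
        exact mul_le_mul_of_nonneg_left
          (hlt _ (subset_convexHull ℝ _ (Set.mem_image_of_mem γ hs))).le (hρ0 s hs)
    _ = c := by rw [intervalIntegral.integral_mul_const, hρ1, one_mul]

lemma exists_eval_eq_sum_pow_mul_coeff {m : ℕ} {f : Polynomial ℝ} (hf : f.natDegree ≤ m) :
    ∃ ℓ : (Fin (m + 1) → ℝ) →L[ℝ] ℝ, ∀ s, ℓ (fun k => s ^ (k : ℕ)) = f.eval s := by
  refine ⟨∑ k : Fin (m + 1), f.coeff k • ContinuousLinearMap.proj k, fun s => ?_⟩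
  rw [Polynomial.eval_eq_sum_range' (n := m + 1) (by lia), Finset.sum_range]
  simp

/-- Tchakaloff's theorem on the existence of quadrature formulas, in one variable. -/
theorem exists_quadrature {a b : ℝ} (hab : a ≤ b) {ρ : ℝ → ℝ} (hρ : Continuous ρ)
    (hρ0 : ∀ s ∈ Set.Icc a b, 0 ≤ ρ s) (hρ1 : ∫ s in a..b, ρ s = 1) (m : ℕ) :
    ∃ (ι : Type) (_ : Fintype ι) (x w : ι → ℝ), Function.Injective x ∧
      (∀ i, 0 < w i) ∧ (∀ i, x i ∈ Set.Icc a b) ∧ ∀ f : Polynomial ℝ, f.natDegree ≤ m →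
        ∑ i, w i * f.eval (x i) = ∫ s in a..b, ρ s * f.eval s := by
  let γ : ℝ → Fin (m + 1) → ℝ := fun s k => s ^ (k : ℕ)
  have hγ : Continuous γ := by fun_prop
  have hint : IntervalIntegrable (fun s => ρ s • γ s) MeasureTheory.volume a b :=
    (hρ.smul hγ).intervalIntegrable a b
  obtain ⟨ι, _, y, w, hy, hindep, hw, -, hsum⟩ := eq_pos_convex_span_of_mem_convexHull
    (intervalIntegral_smul_mem_convexHull hab hρ hρ0 hρ1 hγ)
  choose x hx hxy using fun i => hy ⟨i, rfl⟩
  refine ⟨ι, inferInstance, x, w, fun i j hij => hindep.injective ?_, hw, hx, fun f hf => ?_⟩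
  · rw [← hxy i, ← hxy j, hij]
  · obtain ⟨ℓ, hℓ⟩ := exists_eval_eq_sum_pow_mul_coeff hf
    have happly := congrArg ℓ hsum
    rw [← ℓ.intervalIntegral_comp_comm hint, map_sum] at happly
    simpa only [← hxy, map_smul, smul_eq_mul, γ, hℓ] using happly

lemma lt_card_of_quadrature {a b : ℝ} (hab : a < b) {ρ : ℝ → ℝ} (hρ : Continuous ρ)
    (hρ0 : ∀ s ∈ Set.Ioo a b, 0 < ρ s) {ι : Type*} [Fintype ι] {x w : ι → ℝ} {m : ℕ}
    (h : ∀ f : Polynomial ℝ, f.natDegree ≤ 2 * m →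
      ∑ i, w i * f.eval (x i) = ∫ s in a..b, ρ s * f.eval s) : m < Fintype.card ι := by
  by_contra! hcard
  let f : Polynomial ℝ := (∏ i, (Polynomial.X - Polynomial.C (x i))) ^ 2
  have hdeg : f.natDegree ≤ 2 * m := by
    rw [Polynomial.natDegree_pow, Polynomial.natDegree_prod_of_monic _ _
      fun i _ => Polynomial.monic_X_sub_C _]
    simpa using hcard
  have hnode : ∀ i, f.eval (x i) = 0 := fun i => by
    simp [f, Polynomial.eval_prod, Finset.prod_eq_zero (Finset.mem_univ i)]
  obtain ⟨c, hc, hcx⟩ :=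
    ((Set.Ioo_infinite hab).sdiff (Set.finite_range x)).nonempty
  have hpos : 0 < ∫ s in a..b, ρ s * f.eval s := by
    have hρcl : ∀ s ∈ Set.Icc a b, 0 ≤ ρ s := by
      rw [← closure_Ioo hab.ne]
      exact closure_minimal (fun s hs => (hρ0 s hs).le) (isClosed_le continuous_const hρ)
    refine intervalIntegral.integral_pos hab (by fun_prop) (fun s hs => ?_)
      ⟨c, Set.Ioo_subset_Icc_self hc, ?_⟩
    · rw [Polynomial.eval_pow]
      exact mul_nonneg (hρcl s (Set.Ioc_subset_Icc_self hs)) (sq_nonneg _)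
    · rw [Polynomial.eval_pow, Polynomial.eval_prod]
      refine mul_pos (hρ0 c hc) (sq_pos_of_ne_zero (Finset.prod_ne_zero_iff.2 fun i _ => ?_))
      rw [Polynomial.eval_sub, Polynomial.eval_X, Polynomial.eval_C, sub_ne_zero]
      exact fun hci => hcx ⟨i, hci.symm⟩
  rw [← h f hdeg] at hpos
  simp [hnode] at hpos

lemma integral_one_sub_mul_derivative_derivative (F : Polynomial ℝ) :
    ∫ s in (0 : ℝ)..1, (1 - s) * F.derivative.derivative.eval s =
      F.eval 1 - F.eval 0 - F.derivative.eval 0 := by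
  have hderiv : ∀ s : ℝ, HasDerivAt (fun s => (1 - s) * F.derivative.eval s + F.eval s)
      ((1 - s) * F.derivative.derivative.eval s) s := fun s => by
    have hsub : HasDerivAt (fun s : ℝ => 1 - s) (-1) s := (hasDerivAt_id s).const_sub 1
    refine ((hsub.mul (F.derivative.hasDerivAt s)).add (F.hasDerivAt s)).congr_deriv ?_
    ring
  rw [intervalIntegral.integral_eq_sub_of_hasDerivAt (fun s _ => hderiv s)
    (Continuous.intervalIntegrable (by fun_prop) _ _)]
  ring

/-- Nodes `b` and weights `w` of a quadrature rule on `[0, 1]` with positive weights which computes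
the integral remainder `∫ (1 - s) F''(t + h s) ds` in the second order Taylor formula for
polynomials `F` of degree at most `D`. -/
structure IsTaylorRule {ι : Type*} [Fintype ι] (D : ℕ) (b w : ι → ℝ) : Prop where
  injective : Function.Injective b
  weight_pos : ∀ i, 0 < w i
  node_mem : ∀ i, b i ∈ Set.Icc (0 : ℝ) 1
  lt_card : D < Fintype.card ι
  sum_weight : ∑ i, w i = 1 / 2
  eval_add : ∀ F : Polynomial ℝ, F.natDegree ≤ D → ∀ t h : ℝ,
    F.eval (t + h) = F.eval t + h * F.derivative.eval t +
      h ^ 2 * ∑ i, w i * F.derivative.derivative.eval (t + h * b i)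

lemma eval_add_of_forall_sum_eq_integral {ι : Type*} [Fintype ι] {b w : ι → ℝ} {D : ℕ}
    (h : ∀ f : Polynomial ℝ, f.natDegree ≤ D →
      ∑ i, w i * f.eval (b i) = ∫ s in (0 : ℝ)..1, (1 - s) * f.eval s)
    {F : Polynomial ℝ} (hF : F.natDegree ≤ D) (t r : ℝ) :
    F.eval (t + r) = F.eval t + r * F.derivative.eval t +
      r ^ 2 * ∑ i, w i * F.derivative.derivative.eval (t + r * b i) := by
  let ℓ : Polynomial ℝ := Polynomial.C t + Polynomial.C r * Polynomial.X
  have hderiv (q : Polynomial ℝ) :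
      (q.comp ℓ).derivative = Polynomial.C r * q.derivative.comp ℓ := by
    rw [Polynomial.derivative_comp]
    simp [ℓ]
  have hdeg : (F.derivative.derivative.comp ℓ).natDegree ≤ D := by
    have hℓ : ℓ.natDegree ≤ 1 := by simp only [ℓ]; compute_degree
    have h₁ := Polynomial.natDegree_derivative_le F
    have h₂ := Polynomial.natDegree_derivative_le F.derivative
    exact Polynomial.natDegree_comp_le.trans
      ((Nat.mul_le_mul_left _ hℓ).trans (by lia))
  have hremainder := integral_one_sub_mul_derivative_derivative (F.comp ℓ)
  simp only [hderiv, Polynomial.derivative_C_mul, Polynomial.eval_C_mul,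
    mul_left_comm (1 - _) r, intervalIntegral.integral_const_mul, ← h _ hdeg] at hremainder
  simp only [Polynomial.eval_comp, ℓ, Polynomial.eval_add, Polynomial.eval_mul, Polynomial.eval_C,
    Polynomial.eval_X, mul_one, mul_zero, add_zero] at hremainder
  linear_combination -hremainder

lemma integral_one_sub : ∫ s in (0 : ℝ)..1, (1 - s) = 1 / 2 := by
  rw [intervalIntegral.integral_sub (by simp) (by simp)]
  norm_num

lemma exists_isTaylorRule (D : ℕ) :
    ∃ (ι : Type) (_ : Fintype ι) (b w : ι → ℝ), IsTaylorRule D b w := by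
  obtain ⟨ι, _, b, w, hb, hw, hmem, hquad⟩ := exists_quadrature (ρ := fun s => 2 * (1 - s))
    zero_le_one (by fun_prop) (fun s hs => by linarith [hs.2])
    (by rw [intervalIntegral.integral_const_mul, integral_one_sub]; norm_num) (2 * D)
  have hhalf (f : Polynomial ℝ) (hf : f.natDegree ≤ 2 * D) :
      ∑ i, w i / 2 * f.eval (b i) = ∫ s in (0 : ℝ)..1, (1 - s) * f.eval s := by
    have := hquad f hf
    simp only [mul_assoc, intervalIntegral.integral_const_mul] at this
    simp only [div_mul_eq_mul_div, ← Finset.sum_div, this]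
    ring
  refine ⟨ι, inferInstance, b, fun i => w i / 2, hb, fun i => half_pos (hw i), hmem,
    lt_card_of_quadrature zero_lt_one (by fun_prop) (fun s hs => by linarith [hs.2]) hquad, ?_,
    fun F hF => eval_add_of_forall_sum_eq_integral (fun f hf => hhalf f (by lia)) hF⟩
  have := hhalf 1 (by simp)
  simp only [Polynomial.eval_one, mul_one] at this
  rw [this, integral_one_sub]

/-- Nodes `b` and weights `w` of a quadrature rule on `[0, 1]` with positive weights which computes
the defect `(1 - t) F(0) + t F(1) - F(t)` of polynomials `F` of degree at most `D` along a chord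
from their second derivative. -/
structure IsChordRule {ι : Type*} [Fintype ι] (D : ℕ) (t : ℝ) (b w : ι → ℝ) : Prop where
  weight_pos : ∀ i, 0 < w i
  node_mem : ∀ i, b i ∈ Set.Icc (0 : ℝ) 1
  lt_card : D < (Finset.univ.image b).card
  eval_eq : ∀ F : Polynomial ℝ, F.natDegree ≤ D →
    F.eval t = (1 - t) * F.eval 0 + t * F.eval 1 - ∑ i, w i * F.derivative.derivative.eval (b i)

-- The rule combines the Taylor expansions at `t` of `F 0` and `F 1`.
lemma exists_isChordRule (D : ℕ) {t : ℝ} (ht : t ∈ Set.Ioo (0 : ℝ) 1) :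
    ∃ (ι : Type) (_ : Fintype ι) (b w : ι → ℝ), IsChordRule D t b w := by
  obtain ⟨ι, _, b, w, h⟩ := exists_isTaylorRule D
  obtain ⟨ht0, ht1⟩ := ht
  have : 0 < 1 - t := sub_pos.2 ht1
  refine ⟨ι ⊕ ι, inferInstance, Sum.elim (fun i => t + -t * b i) (fun i => t + (1 - t) * b i),
    Sum.elim (fun i => (1 - t) * t ^ 2 * w i) (fun i => t * (1 - t) ^ 2 * w i), ?_, ?_, ?_,
    fun F hF => ?_⟩
  · rintro (i | i) <;> have := h.weight_pos i <;> simp only [Sum.elim_inl, Sum.elim_inr] <;>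
      positivity
  · rintro (i | i) <;> obtain ⟨h0, h1⟩ := h.node_mem i <;> constructor <;>
      simp only [Sum.elim_inl, Sum.elim_inr] <;> nlinarith
  · have hinj : Function.Injective fun i => t + -t * b i :=
      (add_right_injective t).comp
        ((mul_right_injective₀ (neg_ne_zero.2 ht0.ne')).comp h.injective)
    calc D < Fintype.card ι := h.lt_card
      _ = (Finset.univ.image fun i => t + -t * b i).card :=
        (Finset.card_image_of_injective _ hinj).symm
      _ ≤ _ := Finset.card_le_card fun s hs => by
        obtain ⟨i, -, rfl⟩ := Finset.mem_image.1 hs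
        exact Finset.mem_image.2 ⟨Sum.inl i, Finset.mem_univ _, rfl⟩
  · have h1 := h.eval_add F hF t (1 - t)
    have h0 := h.eval_add F hF t (-t)
    rw [add_sub_cancel] at h1
    rw [add_neg_cancel] at h0
    rw [Fintype.sum_sum_type]
    simp only [Sum.elim_inl, Sum.elim_inr, mul_assoc, ← Finset.mul_sum]
    linear_combination -(1 - t) * h0 - t * h1

end Quadrature

section Segments

variable {n : ℕ}

/-- The substitution of the homothety `x ↦ u + s (x - u)` into polynomials. -/
def compHomothety (u : Fin n → ℝ) (s : ℝ) : MvPolynomial (Fin n) ℝ →ₐ[ℝ] MvPolynomial (Fin n) ℝ :=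
  aeval fun i => C ((1 - s) * u i) + C s * X i

@[simp]
lemma eval_compHomothety (x u : Fin n → ℝ) (s : ℝ) (q : MvPolynomial (Fin n) ℝ) :
    eval x (compHomothety u s q) = eval (AffineMap.lineMap u x s) q := by
  induction q using MvPolynomial.induction_on with
  | C a => simp [compHomothety]
  | add p q hp hq => simp [hp, hq]
  | mul_X p i hp =>
    rw [map_mul, map_mul, hp]
    simp [compHomothety, AffineMap.lineMap_apply_module]

lemma compHomothety_zero (u : Fin n → ℝ) (q : MvPolynomial (Fin n) ℝ) :
    compHomothety u 0 q = C (eval u q) :=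
  MvPolynomial.funext fun x => by simp

lemma compHomothety_one (u : Fin n → ℝ) (q : MvPolynomial (Fin n) ℝ) : compHomothety u 1 q = q :=
  MvPolynomial.funext fun x => by simp

@[fun_prop]
lemma isContinuousFamily_compHomothety {Ω : Type*} [TopologicalSpace Ω] {u : Ω → Fin n → ℝ}
    {s : Ω → ℝ} (hu : Continuous u) (hs : Continuous s) (q : MvPolynomial (Fin n) ℝ) :
    IsContinuousFamily fun ω => compHomothety (u ω) (s ω) q := by
  induction q using MvPolynomial.induction_on with
  | C a => simpa [compHomothety] using IsContinuousFamily.const (C a)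
  | add p q hp hq => simpa using hp.add hq
  | mul_X p i hp =>
    simp only [map_mul]
    refine hp.mul ?_
    simp only [compHomothety, aeval_X]
    fun_prop

/-- The restriction of polynomials to the line `s ↦ u + s (x - u)`. -/
def compLineMap (u x : Fin n → ℝ) : MvPolynomial (Fin n) ℝ →ₐ[ℝ] Polynomial ℝ :=
  aeval fun i => Polynomial.C (u i) + Polynomial.C (x i - u i) * Polynomial.X

@[simp]
lemma eval_compLineMap (u x : Fin n → ℝ) (s : ℝ) (q : MvPolynomial (Fin n) ℝ) :
    (compLineMap u x q).eval s = eval (AffineMap.lineMap u x s) q := by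
  induction q using MvPolynomial.induction_on with
  | C a => simp [compLineMap]
  | add p q hp hq => simp [hp, hq]
  | mul_X p i hp =>
    have hX : (compLineMap u x (X i)).eval s = AffineMap.lineMap u x s i := by
      simp [compLineMap, AffineMap.lineMap_apply_module', add_comm, mul_comm]
    rw [map_mul, Polynomial.eval_mul, hp, hX, map_mul, eval_X]

lemma natDegree_compLineMap_le (u x : Fin n → ℝ) (q : MvPolynomial (Fin n) ℝ) :
    (compLineMap u x q).natDegree ≤ q.totalDegree := by
  refine (MvPolynomial.aeval_natDegree_le q le_rfl _ (n := 1) fun i => ?_).trans_eq (mul_one _)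
  compute_degree

lemma derivative_compLineMap (u x : Fin n → ℝ) (q : MvPolynomial (Fin n) ℝ) :
    (compLineMap u x q).derivative =
      ∑ a, Polynomial.C (x a - u a) * compLineMap u x (pderiv a q) := by
  induction q using MvPolynomial.induction_on with
  | C a => simp [compLineMap]
  | add p q hp hq => simp [hp, hq, mul_add, Finset.sum_add_distrib]
  | mul_X p i hp =>
    have hX : (compLineMap u x (X i)).derivative = Polynomial.C (x i - u i) := by
      simp [compLineMap]
    simp only [map_mul, Polynomial.derivative_mul, hp, hX, Derivation.leibniz, smul_eq_mul,
      map_add, mul_add, Finset.sum_add_distrib, pderiv_X, Finset.sum_mul, Pi.single_apply]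
    simp [mul_comm, mul_left_comm, add_comm]

end Segments

section TaylorExpansion

variable {n : ℕ} {Ω : Type*} [TopologicalSpace Ω]

/-- The coordinate functions centred at `u`. -/
def displacement (u : Fin n → ℝ) : Fin n → MvPolynomial (Fin n) ℝ :=
  fun a => X a - C (u a)

/-- The linear part of the Taylor expansion of `q` at `u`. -/
def tangentPart (q : MvPolynomial (Fin n) ℝ) (u : Fin n → ℝ) : MvPolynomial (Fin n) ℝ :=
  (fun a => C (gradEval q u a)) ⬝ᵥ displacement u

/-- The matrix of the integral remainder in the second order Taylor expansion of `q` at `u` with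
step `t`, computed by the quadrature rule with nodes `b` and weights `w`. -/
def taylorMatrix {ι : Type*} [Fintype ι] (b w : ι → ℝ) (t : ℝ) (q : MvPolynomial (Fin n) ℝ)
    (u : Fin n → ℝ) : Matrix (Fin n) (Fin n) (MvPolynomial (Fin n) ℝ) :=
  Matrix.of fun a c => ∑ i, w i • compHomothety u (t * b i) (pderiv a (pderiv c q))

/-- The gradient of `q` averaged along the segment from `u` to `u + t (X - u)`, with the average
computed by the quadrature rule with nodes `b` and weights `w`. -/
def taylorGradient {ι : Type*} [Fintype ι] (b w : ι → ℝ) (t : ℝ) (q : MvPolynomial (Fin n) ℝ)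
    (u : Fin n → ℝ) : Fin n → MvPolynomial (Fin n) ℝ :=
  (fun a => C (gradEval q u a)) + t • (taylorMatrix b w t q u *ᵥ displacement u)

@[fun_prop]
lemma isContinuousFamily_displacement {u : Ω → Fin n → ℝ} (hu : Continuous u) (a : Fin n) :
    IsContinuousFamily fun ω => displacement (u ω) a := by
  simp only [displacement]
  fun_prop

@[fun_prop]
lemma isContinuousFamily_C_eval {u : Ω → Fin n → ℝ} (hu : Continuous u)
    (q : MvPolynomial (Fin n) ℝ) :
    IsContinuousFamily fun ω => (C (eval (u ω) q) : MvPolynomial (Fin n) ℝ) :=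
  IsContinuousFamily.C_comp ((MvPolynomial.continuous_eval q).comp hu)

@[fun_prop]
lemma isContinuousFamily_taylorMatrix {ι : Type*} [Fintype ι] (b w : ι → ℝ) (t : ℝ)
    (q : MvPolynomial (Fin n) ℝ) {u : Ω → Fin n → ℝ} (hu : Continuous u) (a c : Fin n) :
    IsContinuousFamily fun ω => taylorMatrix b w t q (u ω) a c := by
  simp only [taylorMatrix, Matrix.of_apply]
  fun_prop

@[fun_prop]
lemma isContinuousFamily_taylorGradient {ι : Type*} [Fintype ι] (b w : ι → ℝ) (t : ℝ)
    (q : MvPolynomial (Fin n) ℝ) {u : Ω → Fin n → ℝ} (hu : Continuous u) (a : Fin n) :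
    IsContinuousFamily fun ω => taylorGradient b w t q (u ω) a := by
  simp only [taylorGradient, Pi.add_apply, Pi.smul_apply, mulVec, dotProduct, gradEval]
  fun_prop

lemma eval_comp_displacement (u x : Fin n → ℝ) : eval x ∘ displacement u = x - u :=
  funext fun a => by simp [displacement]

lemma eval_tangentPart (q : MvPolynomial (Fin n) ℝ) (u x : Fin n → ℝ) :
    eval x (tangentPart q u) = gradEval q u ⬝ᵥ (x - u) := by
  rw [tangentPart, RingHom.map_dotProduct, eval_comp_displacement]
  exact congrArg (· ⬝ᵥ _) (funext fun a => eval_C _)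

lemma eval_derivative_compLineMap (u x : Fin n → ℝ) (q : MvPolynomial (Fin n) ℝ) (s : ℝ) :
    (compLineMap u x q).derivative.eval s =
      gradEval q (AffineMap.lineMap u x s) ⬝ᵥ (x - u) := by
  simp [derivative_compLineMap, Polynomial.eval_finsetSum, dotProduct, gradEval, mul_comm]

lemma eval_derivative_derivative_compLineMap (u x : Fin n → ℝ) (q : MvPolynomial (Fin n) ℝ)
    (s : ℝ) : (compLineMap u x q).derivative.derivative.eval s =
      (x - u) ⬝ᵥ hessEval q (AffineMap.lineMap u x s) *ᵥ (x - u) := by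
  simp only [derivative_compLineMap, Polynomial.derivative_sum, Polynomial.derivative_C_mul,
    Polynomial.eval_finsetSum, Polynomial.eval_C_mul, eval_compLineMap, Finset.mul_sum,
    dotProduct_mulVec_eq_sum, hessEval, Matrix.of_apply, Pi.sub_apply]
  rw [Finset.sum_comm]
  exact Finset.sum_congr rfl fun a _ => Finset.sum_congr rfl fun c _ => by ring

variable {ι : Type*} [Fintype ι] {b w : ι → ℝ}

lemma map_eval_taylorMatrix (t : ℝ) (q : MvPolynomial (Fin n) ℝ) (u x : Fin n → ℝ) :
    (taylorMatrix b w t q u).map (eval x) =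
      ∑ i, w i • hessEval q (AffineMap.lineMap u x (t * b i)) := by
  ext a c
  simp [taylorMatrix, hessEval, Matrix.sum_apply, smul_eval]

lemma IsTaylorRule.map_eval_taylorMatrix_self {D : ℕ} (h : IsTaylorRule D b w) (t : ℝ)
    (q : MvPolynomial (Fin n) ℝ) (u : Fin n → ℝ) :
    (taylorMatrix b w t q u).map (eval u) = (1 / 2 : ℝ) • hessEval q u := by
  simp only [map_eval_taylorMatrix, AffineMap.lineMap_same, AffineMap.const_apply,
    ← Finset.sum_smul, h.sum_weight]

theorem IsTaylorRule.compHomothety_eq {D : ℕ} (h : IsTaylorRule D b w)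
    {q : MvPolynomial (Fin n) ℝ} (hq : q.totalDegree ≤ D) (u : Fin n → ℝ) (t : ℝ) :
    compHomothety u t q = C (eval u q) + t • tangentPart q u +
      t ^ 2 • (displacement u ⬝ᵥ taylorMatrix b w t q u *ᵥ displacement u) := by
  refine MvPolynomial.funext fun x => ?_
  have heval := h.eval_add (compLineMap u x q) ((natDegree_compLineMap_le u x q).trans hq) 0 t
  simp only [zero_add, eval_compLineMap, eval_derivative_compLineMap, AffineMap.lineMap_apply_zero,
    eval_derivative_derivative_compLineMap] at heval
  simp only [eval_compHomothety, heval, map_add, eval_C, smul_eval, eval_tangentPart,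
    eval_dotProduct_mulVec, eval_comp_displacement, map_eval_taylorMatrix, Matrix.sum_mulVec,
    dotProduct_sum, Matrix.smul_mulVec, dotProduct_smul, smul_eq_mul]

lemma eval_comp_taylorGradient_self (t : ℝ) (q : MvPolynomial (Fin n) ℝ) (u : Fin n → ℝ) :
    eval u ∘ taylorGradient b w t q u = gradEval q u := by
  have hmulVec (a : Fin n) : eval u ((taylorMatrix b w t q u *ᵥ displacement u) a) = 0 := by
    rw [RingHom.map_mulVec, eval_comp_displacement, sub_self, mulVec_zero, Pi.zero_apply]
  exact funext fun a => by simp [taylorGradient, smul_eval, hmulVec]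

lemma taylorGradient_dotProduct_displacement (t : ℝ) (q : MvPolynomial (Fin n) ℝ)
    (u : Fin n → ℝ) : taylorGradient b w t q u ⬝ᵥ displacement u = tangentPart q u +
      t • (displacement u ⬝ᵥ taylorMatrix b w t q u *ᵥ displacement u) := by
  rw [taylorGradient, add_dotProduct, smul_dotProduct, dotProduct_comm (_ *ᵥ _), tangentPart]

theorem IsTaylorRule.compHomothety_eq_add_taylorGradient {D : ℕ} (h : IsTaylorRule D b w)
    {q : MvPolynomial (Fin n) ℝ} (hq : q.totalDegree ≤ D) (u : Fin n → ℝ) (t : ℝ) :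
    compHomothety u t q = C (eval u q) + t • (taylorGradient b w t q u ⬝ᵥ displacement u) := by
  rw [h.compHomothety_eq hq, taylorGradient_dotProduct_displacement, smul_add, smul_smul, ← pow_two,
    add_assoc]

end TaylorExpansion

section StrictQuasiconcavity

lemma coeff_zero_nonneg_of_forall_Ioo {F : Polynomial ℝ}
    (h : ∀ s ∈ Set.Ioo (0 : ℝ) 1, 0 ≤ F.eval s) : 0 ≤ F.coeff 0 := by
  rw [Polynomial.coeff_zero_eq_eval_zero]
  refine ge_of_tendsto ((F.continuous.tendsto 0).mono_left (nhdsWithin_le_nhds (s := Set.Ioi 0))) ?_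
  filter_upwards [Ioo_mem_nhdsGT one_pos] with s hs using h s hs

lemma eval_divX_nonneg_of_forall_Ioo {F : Polynomial ℝ} (h0 : F.coeff 0 = 0)
    (h : ∀ s ∈ Set.Ioo (0 : ℝ) 1, 0 ≤ F.eval s) {s : ℝ} (hs : s ∈ Set.Ioo (0 : ℝ) 1) :
    0 ≤ F.divX.eval s := by
  have hF := h s hs
  rw [← F.divX_mul_X_add, h0] at hF
  refine nonneg_of_mul_nonneg_left (b := s) ?_ hs.1
  simpa using hF

lemma derivative_nonneg_of_forall_Ioo {F : Polynomial ℝ} (h0 : F.eval 0 = 0)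
    (h : ∀ s ∈ Set.Ioo (0 : ℝ) 1, 0 ≤ F.eval s) : 0 ≤ F.derivative.eval 0 ∧
      (F.derivative.eval 0 = 0 → 0 ≤ F.derivative.derivative.eval 0) := by
  simp only [← Polynomial.coeff_zero_eq_eval_zero, Polynomial.coeff_derivative] at h0 ⊢
  have hdivX := fun s hs => eval_divX_nonneg_of_forall_Ioo h0 h (s := s) hs
  have hcoeff₁ := coeff_zero_nonneg_of_forall_Ioo hdivX
  rw [Polynomial.coeff_divX] at hcoeff₁
  refine ⟨by simpa using hcoeff₁, fun h1 => ?_⟩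
  have hcoeff₂ := coeff_zero_nonneg_of_forall_Ioo fun s hs =>
    eval_divX_nonneg_of_forall_Ioo (by simpa [Polynomial.coeff_divX] using h1) hdivX hs
  simp only [Polynomial.coeff_divX] at hcoeff₂
  positivity

variable {n : ℕ} {S : Set (Fin n → ℝ)} {q : MvPolynomial (Fin n) ℝ} {u x : Fin n → ℝ}

lemma gradEval_dotProduct_sub_pos (hS : Convex ℝ S) (hq : ∀ x ∈ S, 0 ≤ eval x q) (hu : u ∈ S)
    (hx : x ∈ S) (h0 : eval u q = 0) (hqc : StrictlyQuasiconcaveAt q u) (hne : x ≠ u) :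
    0 < gradEval q u ⬝ᵥ (x - u) := by
  obtain ⟨hderiv, hderiv₂⟩ := derivative_nonneg_of_forall_Ioo (F := compLineMap u x q)
    (by simpa using h0) fun s hs => by
      rw [eval_compLineMap]
      exact hq _ (hS.lineMap_mem hu hx (Set.Ioo_subset_Icc_self hs))
  simp only [eval_derivative_compLineMap, eval_derivative_derivative_compLineMap,
    AffineMap.lineMap_apply_zero] at hderiv hderiv₂
  refine hderiv.lt_of_ne' fun h => ?_
  exact (hqc _ (sub_ne_zero.2 hne) h).not_ge (hderiv₂ h)

lemma eval_lineMap_pos (hS : Convex ℝ S) (hq : ∀ x ∈ S, 0 ≤ eval x q)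
    (hqc : ∀ x ∈ S ∩ ZSet q, StrictlyQuasiconcaveAt q x) (hu : u ∈ S) (hx : x ∈ S) (hne : x ≠ u)
    {t : ℝ} (ht : t ∈ Set.Ioo (0 : ℝ) 1) : 0 < eval (AffineMap.lineMap u x t) q := by
  set y := AffineMap.lineMap u x t with hy
  have hyS : y ∈ S := hS.lineMap_mem hu hx (Set.Ioo_subset_Icc_self ht)
  refine (hq y hyS).lt_of_ne' fun h0 => ?_
  have huy : u ≠ y := fun h => ht.1.ne' (AffineMap.lineMap_eq_left_iff.1 h.symm |>.resolve_left
    hne.symm)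
  have hxy : x ≠ y := fun h => ht.2.ne (AffineMap.lineMap_eq_right_iff.1 h.symm |>.resolve_left
    hne.symm)
  have hpos_u := gradEval_dotProduct_sub_pos hS hq hyS hu h0 (hqc y ⟨hyS, h0⟩) huy
  have hpos_x := gradEval_dotProduct_sub_pos hS hq hyS hx h0 (hqc y ⟨hyS, h0⟩) hxy
  have hcomb : (1 - t) • (u - y) + t • (x - y) = 0 := by
    rw [hy, AffineMap.lineMap_apply_module]
    module
  have hzero := congrArg (gradEval q y ⬝ᵥ ·) hcomb
  simp only [dotProduct_add, dotProduct_smul, smul_eq_mul, dotProduct_zero] at hzero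
  linarith [mul_pos (sub_pos.2 ht.2) hpos_u, mul_pos ht.1 hpos_x]

variable {m : ℕ} {g : Fin m → MvPolynomial (Fin n) ℝ}

lemma eventually_mul_sq_nonneg (g : Fin m → MvPolynomial (Fin n) ℝ) (j : Fin m) (e : ℕ) :
    ∀ᶠ L in positivityFilter g, ∀ p : MvPolynomial (Fin n) ℝ, p.totalDegree ≤ e →
      0 ≤ L (p ^ 2 * g j) :=
  eventually_nonneg_of_mem_QM (withOne_mem_QM j.succ) e

theorem eventually_tangentPart_nonneg (hconv : Convex ℝ (SolSet g))
    (harch : IsArchimedeanQM (QM g)) {j : Fin m}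
    (hqc : ∀ x ∈ SolSet g ∩ ZSet (g j), StrictlyQuasiconcaveAt (g j) x) :
    ∀ᶠ L in positivityFilter g, ∀ u ∈ SolSet g ∩ ZSet (g j), 0 ≤ L (tangentPart (g j) u) := by
  obtain ⟨ι, _, b, w, h⟩ := exists_isTaylorRule (g j).totalDegree
  have hgrad : ∀ u ∈ SolSet g ∩ ZSet (g j),
      taylorGradient b w 1 (g j) u ⬝ᵥ displacement u = g j := fun u hu => by
    have := h.compHomothety_eq_add_taylorGradient (q := g j) le_rfl u 1
    rwa [compHomothety_one, show eval u (g j) = 0 from hu.2, C_0, zero_add, one_smul,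
      eq_comm] at this
  have htangent (u : Fin n → ℝ) :
      ∑ _ : Unit, taylorGradient b w 1 (g j) u ⬝ᵥ displacement u +
        displacement u ⬝ᵥ (-taylorMatrix b w 1 (g j) u) *ᵥ displacement u =
      tangentPart (g j) u := by
    simp [taylorGradient_dotProduct_displacement, Matrix.neg_mulVec]
  have hcompact : IsCompact (SolSet g ∩ ZSet (g j)) := (isCompact_SolSet harch).inter_right
    (isClosed_eq (MvPolynomial.continuous_eval _) continuous_const)
  simp only [← htangent]
  refine eventually_apply_sum_add_dotProduct_mulVec_nonneg harch hcompact
    (R := fun u => -taylorMatrix b w 1 (g j) u) (v := displacement)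
    (α := fun u (_ : Unit) => taylorGradient b w 1 (g j) u) (fun r s => ?_) (by fun_prop)
    (by fun_prop) (fun u hu x hx _ => by rw [hgrad u hu]; exact hx j)
    (fun u hu x _ hxu ξ hξ hα => ?_) (fun u hu x hx hxu => ?_) ?_
  · simp only [Matrix.neg_apply]
    fun_prop
  · obtain rfl : x = u := by rwa [eval_comp_displacement, sub_eq_zero] at hxu
    have hneg := hqc x hu ξ hξ (by simpa only [eval_comp_taylorGradient_self] using hα ())
    rw [Matrix.map_neg _ (map_neg _), h.map_eval_taylorMatrix_self, Matrix.neg_mulVec,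
      dotProduct_neg, Matrix.smul_mulVec, dotProduct_smul, smul_eq_mul]
    linarith
  · rw [htangent, eval_tangentPart]
    refine gradEval_dotProduct_sub_pos hconv (fun y hy => hy j) hu.1 hx hu.2 (hqc u hu) ?_
    rwa [eval_comp_displacement, ne_eq, sub_eq_zero] at hxu
  · filter_upwards [eventually_mul_sq_nonneg g j 0] with L hL u hu _
    simpa [hgrad u hu] using hL 1 (by simp)

end StrictQuasiconcavity

section ChordExpansion

variable {n : ℕ} {Ω : Type*} [TopologicalSpace Ω] {ι : Type*} [Fintype ι]

/-- The vector `(q(u), X - u)`, in which the expansion of `q` along chords starting at `u` is a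
quadratic form. -/
def augDisplacement (q : MvPolynomial (Fin n) ℝ) (u : Fin n → ℝ) :
    Unit ⊕ Fin n → MvPolynomial (Fin n) ℝ :=
  Sum.elim (fun _ => C (eval u q)) (displacement u)

/-- The vector whose product with `augDisplacement q u` is the substitution of the homothety with
centre `u` and ratio `t` into `q`. -/
def augGradient (b w : ι → ℝ) (t : ℝ) (q : MvPolynomial (Fin n) ℝ) (u : Fin n → ℝ) :
    Unit ⊕ Fin n → MvPolynomial (Fin n) ℝ :=
  Sum.elim 1 (t • taylorGradient b w t q u)

/-- The matrix of the remainder in the linear interpolation of `q` along chords starting at `u`. -/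
def chordMatrix (b w : ι → ℝ) (t : ℝ) (q : MvPolynomial (Fin n) ℝ) (u : Fin n → ℝ) :
    Matrix (Fin n) (Fin n) (MvPolynomial (Fin n) ℝ) :=
  t ^ 2 • taylorMatrix b w t q u - t • taylorMatrix b w 1 q u

@[fun_prop]
lemma isContinuousFamily_augDisplacement (q : MvPolynomial (Fin n) ℝ) {u : Ω → Fin n → ℝ}
    (hu : Continuous u) (r : Unit ⊕ Fin n) :
    IsContinuousFamily fun ω => augDisplacement q (u ω) r := by
  cases r <;> simp only [augDisplacement, Sum.elim_inl, Sum.elim_inr] <;> fun_prop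

@[fun_prop]
lemma isContinuousFamily_augGradient (b w : ι → ℝ) (t : ℝ) (q : MvPolynomial (Fin n) ℝ)
    {u : Ω → Fin n → ℝ} (hu : Continuous u) (r : Unit ⊕ Fin n) :
    IsContinuousFamily fun ω => augGradient b w t q (u ω) r := by
  cases r <;> simp only [augGradient, Sum.elim_inl, Sum.elim_inr, Pi.smul_apply, Pi.one_apply] <;>
    fun_prop

@[fun_prop]
lemma isContinuousFamily_fromBlocks_chordMatrix (b w : ι → ℝ) (t : ℝ)
    (q : MvPolynomial (Fin n) ℝ) {u : Ω → Fin n → ℝ} (hu : Continuous u) (r s : Unit ⊕ Fin n) :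
    IsContinuousFamily fun ω => fromBlocks 0 0 0 (chordMatrix b w t q (u ω)) r s := by
  rcases r with r | r <;> rcases s with s | s <;> simp only [fromBlocks_apply₁₁,
    fromBlocks_apply₁₂, fromBlocks_apply₂₁, fromBlocks_apply₂₂, chordMatrix, Matrix.zero_apply,
    Matrix.sub_apply, Matrix.smul_apply] <;> fun_prop

lemma eval_comp_augDisplacement_eq_zero_iff {q : MvPolynomial (Fin n) ℝ} {u x : Fin n → ℝ} :
    eval x ∘ augDisplacement q u = 0 ↔ eval u q = 0 ∧ x = u := by
  rw [augDisplacement, Sum.comp_elim, eval_comp_displacement, ← Sum.elim_zero_zero, Sum.elim_eq_iff,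
    sub_eq_zero]
  simp [funext_iff]

lemma eval_comp_augGradient_self (b w : ι → ℝ) (t : ℝ) (q : MvPolynomial (Fin n) ℝ)
    (u : Fin n → ℝ) :
    eval u ∘ augGradient b w t q u = Sum.elim (fun _ => 1) (t • gradEval q u) := by
  rw [augGradient, Sum.comp_elim, ← eval_comp_taylorGradient_self (b := b) (w := w) t q u]
  congr 1 <;> funext a <;> simp [smul_eval]

lemma fromBlocks_zero_quadraticForm {l k A : Type*} [Fintype l] [Fintype k] [CommRing A]
    (D : Matrix k k A) (v : l ⊕ k → A) :
    v ⬝ᵥ fromBlocks 0 0 0 D *ᵥ v = (v ∘ Sum.inr) ⬝ᵥ D *ᵥ (v ∘ Sum.inr) := by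
  conv_lhs => rw [← Sum.elim_comp_inl_inr v]
  rw [fromBlocks_mulVec, sumElim_dotProduct_sumElim]
  simp

variable {b w : ι → ℝ} {q : MvPolynomial (Fin n) ℝ} (h : IsTaylorRule q.totalDegree b w)
include h

lemma IsTaylorRule.augGradient_dotProduct (t : ℝ) (u : Fin n → ℝ) :
    augGradient b w t q u ⬝ᵥ augDisplacement q u = compHomothety u t q := by
  rw [augGradient, augDisplacement, sumElim_dotProduct_sumElim, smul_dotProduct,
    h.compHomothety_eq_add_taylorGradient le_rfl]
  simp

lemma IsTaylorRule.chord_expansion (t : ℝ) (u : Fin n → ℝ) :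
    compHomothety u t q = t • q + (1 - t) • C (eval u q) +
      displacement u ⬝ᵥ chordMatrix b w t q u *ᵥ displacement u := by
  have h1 := h.compHomothety_eq le_rfl u 1
  rw [compHomothety_one, one_smul, one_pow, one_smul] at h1
  nth_rw 2 [h1]
  rw [h.compHomothety_eq le_rfl, chordMatrix, Matrix.sub_mulVec, dotProduct_sub,
    Matrix.smul_mulVec, Matrix.smul_mulVec, dotProduct_smul, dotProduct_smul]
  module

lemma IsTaylorRule.map_eval_chordMatrix_self (t : ℝ) (u : Fin n → ℝ) :
    (chordMatrix b w t q u).map (eval u) = ((t ^ 2 - t) / 2) • hessEval q u := by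
  have hsmul (c : ℝ) (M : Matrix (Fin n) (Fin n) (MvPolynomial (Fin n) ℝ)) :
      (c • M).map (eval u) = c • M.map (eval u) := Matrix.map_smul _ _ (fun p => smul_eval u p c) M
  rw [chordMatrix, Matrix.map_sub _ (map_sub _), hsmul, hsmul, h.map_eval_taylorMatrix_self,
    h.map_eval_taylorMatrix_self]
  module

end ChordExpansion

section ChordPositivity

variable {n : ℕ} {ι : Type*} [Fintype ι]

/-- The two gradients whose products with `augDisplacement q u` are `t • q` and
`(1 - t) • C (q(u))`. -/
def secantGradient (b w : ι → ℝ) (t : ℝ) (q : MvPolynomial (Fin n) ℝ) (u : Fin n → ℝ)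
    (p : Bool) : Unit ⊕ Fin n → MvPolynomial (Fin n) ℝ :=
  bif p then t • augGradient b w 1 q u else (1 - t) • augGradient b w 0 q u

/-- The matrix which, together with `secantGradient b w t q u`, represents `p - δ • p ^ 2`, where
`p` is the substitution of the homothety with centre `u` and ratio `t` into `q`. -/
def secantMatrix (b w : ι → ℝ) (t δ : ℝ) (q : MvPolynomial (Fin n) ℝ) (u : Fin n → ℝ) :
    Matrix (Unit ⊕ Fin n) (Unit ⊕ Fin n) (MvPolynomial (Fin n) ℝ) :=
  fromBlocks 0 0 0 (chordMatrix b w t q u) -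
    δ • vecMulVec (augGradient b w t q u) (augGradient b w t q u)

@[fun_prop]
lemma isContinuousFamily_secantGradient {Ω : Type*} [TopologicalSpace Ω] (b w : ι → ℝ) (t : ℝ)
    (q : MvPolynomial (Fin n) ℝ) {u : Ω → Fin n → ℝ} (hu : Continuous u) (p : Bool)
    (r : Unit ⊕ Fin n) : IsContinuousFamily fun ω => secantGradient b w t q (u ω) p r := by
  cases p <;> simp only [secantGradient, cond_false, cond_true, Pi.smul_apply] <;> fun_prop

@[fun_prop]
lemma isContinuousFamily_secantMatrix {Ω : Type*} [TopologicalSpace Ω] (b w : ι → ℝ) (t δ : ℝ)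
    (q : MvPolynomial (Fin n) ℝ) {u : Ω → Fin n → ℝ} (hu : Continuous u) (r s : Unit ⊕ Fin n) :
    IsContinuousFamily fun ω => secantMatrix b w t δ q (u ω) r s := by
  simp only [secantMatrix, Matrix.sub_apply, Matrix.smul_apply, vecMulVec_apply]
  fun_prop

section

variable {b w : ι → ℝ} {q : MvPolynomial (Fin n) ℝ} (h : IsTaylorRule q.totalDegree b w)
include h

lemma IsTaylorRule.secantGradient_dotProduct (t : ℝ) (u : Fin n → ℝ) (p : Bool) :
    secantGradient b w t q u p ⬝ᵥ augDisplacement q u =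
      bif p then t • q else (1 - t) • C (eval u q) := by
  cases p
  · rw [secantGradient, cond_false, smul_dotProduct, h.augGradient_dotProduct, compHomothety_zero,
      cond_false]
  · rw [secantGradient, cond_true, smul_dotProduct, h.augGradient_dotProduct, compHomothety_one,
      cond_true]

lemma IsTaylorRule.sum_secantGradient_add_secantMatrix (t δ : ℝ) (u : Fin n → ℝ) :
    ∑ p, secantGradient b w t q u p ⬝ᵥ augDisplacement q u +
        augDisplacement q u ⬝ᵥ secantMatrix b w t δ q u *ᵥ augDisplacement q u =
      compHomothety u t q - δ • compHomothety u t q ^ 2 := by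
  rw [secantMatrix, sub_mulVec, dotProduct_sub, smul_mulVec, dotProduct_smul,
    dotProduct_vecMulVec_self_mulVec, h.augGradient_dotProduct, fromBlocks_zero_quadraticForm,
    Fintype.sum_bool, h.secantGradient_dotProduct, h.secantGradient_dotProduct, cond_true,
    cond_false, augDisplacement, Sum.elim_comp_inr, ← add_sub_assoc, ← h.chord_expansion]

lemma IsTaylorRule.dotProduct_map_eval_secantMatrix_self (t δ : ℝ) (u : Fin n → ℝ)
    (ξ : Unit ⊕ Fin n → ℝ) :
    ξ ⬝ᵥ (secantMatrix b w t δ q u).map (eval u) *ᵥ ξ =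
      (t ^ 2 - t) / 2 * ((ξ ∘ Sum.inr) ⬝ᵥ hessEval q u *ᵥ (ξ ∘ Sum.inr)) -
        δ * (Sum.elim (fun _ => 1) (t • gradEval q u) ⬝ᵥ ξ) ^ 2 := by
  have hmap : (secantMatrix b w t δ q u).map (eval u) =
      fromBlocks 0 0 0 (((t ^ 2 - t) / 2) • hessEval q u) -
        δ • vecMulVec (Sum.elim (fun _ : Unit => (1 : ℝ)) (t • gradEval q u))
          (Sum.elim (fun _ => 1) (t • gradEval q u)) := by
    rw [← h.map_eval_chordMatrix_self, ← eval_comp_augGradient_self b w]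
    ext r s
    rcases r with r | r <;> rcases s with s | s <;>
      simp [secantMatrix, vecMulVec_apply, smul_eval]
  rw [hmap, sub_mulVec, dotProduct_sub, smul_mulVec, dotProduct_smul,
    dotProduct_vecMulVec_self_mulVec, fromBlocks_zero_quadraticForm, smul_mulVec, dotProduct_smul,
    smul_eq_mul, smul_eq_mul]

lemma IsTaylorRule.dotProduct_map_eval_secantMatrix_pos {u : Fin n → ℝ}
    (hqc : StrictlyQuasiconcaveAt q u) {t : ℝ} (ht : t ∈ Set.Ioo (0 : ℝ) 1) (δ : ℝ)
    {ξ : Unit ⊕ Fin n → ℝ} (hξ : ξ ≠ 0)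
    (hα : ∀ p, (eval u ∘ secantGradient b w t q u p) ⬝ᵥ ξ = 0) :
    0 < ξ ⬝ᵥ (secantMatrix b w t δ q u).map (eval u) *ᵥ ξ := by
  have hsmul (c : ℝ) (s : ℝ) : (eval u ∘ (c • augGradient b w s q u)) ⬝ᵥ ξ =
      c * (ξ (Sum.inl ()) + s * (gradEval q u ⬝ᵥ (ξ ∘ Sum.inr))) := by
    have hcomp : eval u ∘ (c • augGradient b w s q u) = c • (eval u ∘ augGradient b w s q u) :=
      funext fun r => smul_eval u _ c
    rw [hcomp, smul_dotProduct, eval_comp_augGradient_self, ← Sum.elim_comp_inl_inr ξ,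
      sumElim_dotProduct_sumElim, smul_dotProduct]
    simp
  have hinl : ξ (Sum.inl ()) = 0 := by
    simpa [secantGradient, hsmul, sub_ne_zero.2 ht.2.ne'] using hα false
  have hinr : gradEval q u ⬝ᵥ (ξ ∘ Sum.inr) = 0 := by
    simpa [secantGradient, hsmul, hinl, ht.1.ne'] using hα true
  have hne : ξ ∘ Sum.inr ≠ 0 := fun h0 => hξ <| by
    rw [← Sum.elim_comp_inl_inr ξ, h0]
    ext (_ | _) <;> simp [hinl]
  have haug : Sum.elim (fun _ : Unit => (1 : ℝ)) (t • gradEval q u) ⬝ᵥ ξ = 0 := by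
    rw [← Sum.elim_comp_inl_inr ξ, sumElim_dotProduct_sumElim, smul_dotProduct, hinr]
    simp [hinl]
  rw [h.dotProduct_map_eval_secantMatrix_self, haug]
  nlinarith [hqc _ hne hinr, mul_pos ht.1 (sub_pos.2 ht.2)]

end

variable {m : ℕ} {g : Fin m → MvPolynomial (Fin n) ℝ}

lemma eventually_nonneg_of_nonneg (g : Fin m → MvPolynomial (Fin n) ℝ) :
    ∀ᶠ L in positivityFilter g, ∀ c : ℝ, 0 ≤ c → 0 ≤ L (C c) := by
  filter_upwards [eventually_nonneg_sq g 0] with L hL c hc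
  simpa [← C_pow, Real.sq_sqrt hc] using hL (C √c) (totalDegree_C _).le

lemma sub_smul_sq_pos {y δ G : ℝ} (hy : 0 < y) (hyG : y ≤ G) (hδ : δ * G < 1) (hδ0 : 0 ≤ δ) :
    0 < y - δ * y ^ 2 := by
  nlinarith [mul_le_mul_of_nonneg_left hyG hδ0]

theorem exists_eventually_smul_sq_le_compHomothety (hconv : Convex ℝ (SolSet g))
    (harch : IsArchimedeanQM (QM g)) {j : Fin m}
    (hqc : ∀ x ∈ SolSet g ∩ ZSet (g j), StrictlyQuasiconcaveAt (g j) x) {t : ℝ}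
    (ht : t ∈ Set.Ioo (0 : ℝ) 1) :
    ∃ δ > 0, ∀ᶠ L in positivityFilter g, ∀ u ∈ SolSet g,
      δ * L (compHomothety u t (g j) ^ 2) ≤ L (compHomothety u t (g j)) := by
  obtain ⟨G, hG, hgG⟩ := exists_pos_forall_le (isCompact_SolSet harch)
    (f := fun x (_ : Unit) => eval x (g j))
    (continuous_pi fun _ => MvPolynomial.continuous_eval (g j))
  obtain ⟨ι, _, b, w, h⟩ := exists_isTaylorRule (g j).totalDegree
  refine ⟨(2 * G)⁻¹, by positivity, ?_⟩
  refine (eventually_apply_sum_add_dotProduct_mulVec_nonneg harch (isCompact_SolSet harch)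
    (v := augDisplacement (g j)) (α := secantGradient b w t (g j))
    (R := secantMatrix b w t (2 * G)⁻¹ (g j)) (by fun_prop) (by fun_prop) (by fun_prop)
    (fun u hu x hx p => ?_) (fun u hu x _ hxu ξ hξ hα => ?_) (fun u hu x hx hxu => ?_) ?_).mono
    fun L hL u hu => ?_
  · rw [h.secantGradient_dotProduct]
    cases p
    · simpa [smul_eval] using mul_nonneg (sub_nonneg.2 ht.2.le) (hu j)
    · simpa [smul_eval] using mul_nonneg ht.1.le (hx j)
  · obtain ⟨h0, rfl⟩ := eval_comp_augDisplacement_eq_zero_iff.1 hxu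
    exact h.dotProduct_map_eval_secantMatrix_pos (hqc x ⟨hu, h0⟩) ht _ hξ hα
  · have hpos : 0 < eval (AffineMap.lineMap u x t) (g j) := by
      rcases eq_or_ne x u with rfl | hne
      · rw [AffineMap.lineMap_same_apply]
        exact (hx j).lt_of_ne' fun h0 => hxu (eval_comp_augDisplacement_eq_zero_iff.2 ⟨h0, rfl⟩)
      · exact eval_lineMap_pos hconv (fun y hy => hy j) hqc hu hx hne ht
    rw [h.sum_secantGradient_add_secantMatrix]
    simpa [smul_eval] using sub_smul_sq_pos hpos
      (hgG _ (hconv.lineMap_mem hu hx (Set.Ioo_subset_Icc_self ht)) ())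
      (by field_simp; norm_num) (by positivity)
  · filter_upwards [eventually_mul_sq_nonneg g j 0, eventually_nonneg_of_nonneg g]
      with L hLj hLC u hu p
    rw [h.secantGradient_dotProduct]
    cases p
    · simpa using mul_nonneg (sub_nonneg.2 ht.2.le) (hLC _ (hu j))
    · simpa using mul_nonneg ht.1.le (by simpa using hLj 1 (by simp))
  · have hnonneg := hL u hu
    rwa [h.sum_secantGradient_add_secantMatrix, map_sub, map_smul, sub_nonneg] at hnonneg

end ChordPositivity

section Domination

variable {n m : ℕ} {g : Fin m → MvPolynomial (Fin n) ℝ} {Ω : Type*} [TopologicalSpace Ω]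
  {K : Set Ω} {X : Ω → Module.Dual ℝ (MvPolynomial (Fin n) ℝ) → ℝ}
  {p q H : Ω → MvPolynomial (Fin n) ℝ}

lemma eventually_apply_mul_sq_nonneg_of_pos (harch : IsArchimedeanQM (QM g)) (hK : IsCompact K)
    (hH : IsContinuousFamily H) (hp : IsContinuousFamily p)
    (hpos : ∀ ω ∈ K, ∀ x ∈ SolSet g, 0 < eval x (H ω)) :
    ∀ᶠ L in positivityFilter g, ∀ ω ∈ K, 0 ≤ L (H ω * p ω ^ 2) := by
  refine (eventually_apply_dotProduct_mulVec_nonneg_of_posDef harch hK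
    (R := fun ω => of fun _ _ : Unit => H ω) (v := fun ω _ => p ω) (fun _ _ => hH) (fun _ => hp)
    fun ω hω x hx ξ hξ => ?_).mono fun L hL ω hω => ?_
  · have hξ' : ξ () ≠ 0 := fun h => hξ (funext fun _ => h)
    have := mul_pos (hpos ω hω x hx) (sq_pos_of_ne_zero hξ')
    simpa only [dotProduct_mulVec_eq_sum, Finset.univ_unique, Finset.sum_singleton, map_apply,
      of_apply, PUnit.default_eq_unit, ← sq] using this
  · simpa only [dotProduct_mulVec_eq_sum, Finset.univ_unique, Finset.sum_singleton, of_apply, ← sq]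
      using hL ω hω

lemma IsContinuousFamily.eventually_sq_nonneg (g : Fin m → MvPolynomial (Fin n) ℝ)
    (hp : IsContinuousFamily p) : ∀ᶠ L in positivityFilter g, ∀ ω, 0 ≤ L (p ω ^ 2) := by
  obtain ⟨D, hD⟩ := hp.exists_totalDegree_le
  exact (eventually_nonneg_sq g D).mono fun L hL ω => hL _ (hD ω)

theorem exists_eventually_apply_sq_mul_sq_le (harch : IsArchimedeanQM (QM g)) (hK : IsCompact K)
    (hp : IsContinuousFamily p) (hq : IsContinuousFamily q) :
    ∃ M > 0, ∀ᶠ L in positivityFilter g, ∀ ω ∈ K, L (q ω ^ 2 * p ω ^ 2) ≤ M * L (p ω ^ 2) := by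
  obtain ⟨B, hB, hqB⟩ := exists_pos_forall_le (hK.prod (isCompact_SolSet harch))
    (f := fun (z : Ω × (Fin n → ℝ)) (_ : Unit) => eval z.2 (q z.1) ^ 2)
    (continuous_pi fun _ => hq.continuous_eval.pow 2)
  refine ⟨B + 1, by positivity, (eventually_apply_mul_sq_nonneg_of_pos harch hK
    (H := fun ω => C (B + 1) - q ω ^ 2) (by fun_prop) hp fun ω hω x hx => ?_).mono
    fun L hL ω hω => ?_⟩
  · rw [map_sub, eval_C, map_pow]
    linarith [hqB (ω, x) ⟨hω, hx⟩ ()]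
  · have := hL ω hω
    rw [sub_mul, map_sub, ← smul_eq_C_mul, map_smul, smul_eq_mul] at this
    exact sub_nonneg.1 this

/-- The continuous family `p` is dominated by `X` on `K`: as soon as `L` is nonnegative on a
sufficiently large truncation of the quadratic module, `L(p(ω)²) ≤ c * X(ω, L)` for all `ω ∈ K`,
with a constant `c` depending neither on `ω` nor on `L`. -/
def IsDominated (g : Fin m → MvPolynomial (Fin n) ℝ) (K : Set Ω)
    (X : Ω → Module.Dual ℝ (MvPolynomial (Fin n) ℝ) → ℝ) (p : Ω → MvPolynomial (Fin n) ℝ) : Prop :=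
  IsContinuousFamily p ∧
    ∃ c : ℝ, ∀ᶠ L in positivityFilter g, ∀ ω ∈ K, L (p ω ^ 2) ≤ c * X ω L

namespace IsDominated

lemma zero : IsDominated g K X fun _ => 0 :=
  ⟨.const 0, 0, by simp⟩

lemma neg (hp : IsDominated g K X p) : IsDominated g K X fun ω => -p ω := by
  obtain ⟨hp, c, hc⟩ := hp
  exact ⟨hp.neg, c, by simpa only [neg_sq] using hc⟩

lemma add (hp : IsDominated g K X p) (hq : IsDominated g K X q) :
    IsDominated g K X fun ω => p ω + q ω := by
  obtain ⟨hp, c, hc⟩ := hp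
  obtain ⟨hq, c', hc'⟩ := hq
  refine ⟨hp.add hq, 2 * c + 2 * c', ?_⟩
  filter_upwards [hc, hc', (hp.sub hq).eventually_sq_nonneg g] with L hpL hqL hsq ω hω
  have parallelogram : (p ω + q ω) ^ 2 =
      (2 : ℝ) • p ω ^ 2 + (2 : ℝ) • q ω ^ 2 - (p ω - q ω) ^ 2 := by
    simp only [smul_eq_C_mul, map_ofNat]
    ring
  rw [parallelogram, map_sub, map_add, map_smul, map_smul, smul_eq_mul, smul_eq_mul]
  linarith [hpL ω hω, hqL ω hω, hsq ω]

lemma sub (hp : IsDominated g K X p) (hq : IsDominated g K X q) :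
    IsDominated g K X fun ω => p ω - q ω := by
  simpa only [sub_eq_add_neg] using hp.add hq.neg

lemma sum {ι : Type*} {t : Finset ι} {f : ι → Ω → MvPolynomial (Fin n) ℝ}
    (hf : ∀ i ∈ t, IsDominated g K X (f i)) : IsDominated g K X fun ω => ∑ i ∈ t, f i ω := by
  classical
  induction t using Finset.induction_on with
  | empty => simpa only [Finset.sum_empty] using zero
  | insert i t hi ih =>
    simp only [Finset.sum_insert hi]
    exact (hf i (Finset.mem_insert_self _ _)).add
      (ih fun j hj => hf j (Finset.mem_insert_of_mem hj))

lemma mul_right (harch : IsArchimedeanQM (QM g)) (hK : IsCompact K) (hp : IsDominated g K X p)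
    (hq : IsContinuousFamily q) : IsDominated g K X fun ω => p ω * q ω := by
  obtain ⟨hp, c, hc⟩ := hp
  obtain ⟨M, hM, hqM⟩ := exists_eventually_apply_sq_mul_sq_le harch hK hp hq
  refine ⟨hp.mul hq, M * c, ?_⟩
  filter_upwards [hc, hqM] with L hcL hqL ω hω
  calc L ((p ω * q ω) ^ 2) = L (q ω ^ 2 * p ω ^ 2) := by rw [mul_pow, mul_comm]
    _ ≤ M * L (p ω ^ 2) := hqL ω hω
    _ ≤ M * c * X ω L := by
      rw [mul_assoc]
      exact mul_le_mul_of_nonneg_left (hcL ω hω) hM.le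

end IsDominated
end Domination

section Interpolation

variable {n m : ℕ} {g : Fin m → MvPolynomial (Fin n) ℝ}

lemma linearMap_eval_eq_sum_lagrange_basis (T : Polynomial ℝ →ₗ[ℝ] Polynomial ℝ) {J : Finset ℝ}
    {P : Polynomial ℝ} (hP : P.natDegree < J.card) (s : ℝ) :
    (T P).eval s = ∑ b ∈ J, P.eval b * (T (Lagrange.basis J id b)).eval s := by
  conv_lhs => rw [Lagrange.eq_interpolate (f := P) (Set.injOn_id _)
    (Polynomial.degree_le_natDegree.trans_lt (by exact_mod_cast hP)), Lagrange.interpolate_apply]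
  simp only [← Polynomial.smul_eq_C_mul, map_sum, map_smul, Polynomial.eval_finsetSum,
    Polynomial.eval_smul, smul_eq_mul, id]

/-- Typically `T` is the identity, or the derivative with respect to the parameter. -/
theorem IsDominated.of_nodes (harch : IsArchimedeanQM (QM g)) {K : Set ((Fin n → ℝ) × ℝ)}
    (hK : IsCompact K)
    {X : (Fin n → ℝ) × ℝ → Module.Dual ℝ (MvPolynomial (Fin n) ℝ) → ℝ}
    {p q : (Fin n → ℝ) × ℝ → MvPolynomial (Fin n) ℝ} {J : Finset ℝ}
    (T : Polynomial ℝ →ₗ[ℝ] Polynomial ℝ)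
    (P : (Fin n → ℝ) → (Fin n → ℝ) → Polynomial ℝ) (hdeg : ∀ u x, (P u x).natDegree < J.card)
    (hp : ∀ u x s, eval x (p (u, s)) = (P u x).eval s)
    (hq : ∀ u x s, eval x (q (u, s)) = (T (P u x)).eval s)
    (hnodes : ∀ b ∈ J, IsDominated g K X fun ω => p (ω.1, b)) : IsDominated g K X q := by
  have hsum : q = fun ω => ∑ b ∈ J, p (ω.1, b) * C ((T (Lagrange.basis J id b)).eval ω.2) :=
    funext fun ⟨u, s⟩ => MvPolynomial.funext fun x => by
      simp only [hq, hp, linearMap_eval_eq_sum_lagrange_basis T (hdeg u x), map_sum, map_mul,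
        eval_C]
  rw [hsum]
  exact .sum fun b hb => (hnodes b hb).mul_right harch hK (.C_comp (by fun_prop))

end Interpolation

section ChordForm

variable {n : ℕ}

/-- The polynomial `⟨r(u + s(X - u)), X - u⟩`. -/
def chordForm (r : Fin n → MvPolynomial (Fin n) ℝ) (u : Fin n → ℝ) (s : ℝ) :
    MvPolynomial (Fin n) ℝ :=
  (fun a => compHomothety u s (r a)) ⬝ᵥ displacement u

lemma eval_chordForm (r : Fin n → MvPolynomial (Fin n) ℝ) (u x : Fin n → ℝ) (s : ℝ) :
    eval x (chordForm r u s) = (fun a => eval (AffineMap.lineMap u x s) (r a)) ⬝ᵥ (x - u) := by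
  rw [← eval_comp_displacement u x]
  simp only [chordForm, dotProduct, map_sum, map_mul, eval_compHomothety, Function.comp_apply]

@[fun_prop]
lemma isContinuousFamily_chordForm {Ω : Type*} [TopologicalSpace Ω] {u : Ω → Fin n → ℝ}
    (hu : Continuous u) {s : Ω → ℝ} (hs : Continuous s) (r : Fin n → MvPolynomial (Fin n) ℝ) :
    IsContinuousFamily fun ω => chordForm r (u ω) (s ω) := by
  unfold chordForm dotProduct
  fun_prop

lemma pderiv_comm (a b : Fin n) (p : MvPolynomial (Fin n) ℝ) :
    pderiv a (pderiv b p) = pderiv b (pderiv a p) := by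
  have hzero : ⁅(pderiv a : Derivation ℝ (MvPolynomial (Fin n) ℝ) (MvPolynomial (Fin n) ℝ)),
      (pderiv b : Derivation ℝ (MvPolynomial (Fin n) ℝ) (MvPolynomial (Fin n) ℝ))⁆ = 0 :=
    derivation_ext fun i => by
      simp only [Derivation.commutator_apply, pderiv_X, Pi.single_apply, Derivation.coe_zero,
        Pi.zero_apply]
      split_ifs <;> simp
  rw [← sub_eq_zero, ← Derivation.commutator_apply, hzero, Derivation.zero_apply]

end ChordForm

section DominatedSquares

variable {n m : ℕ} {g : Fin m → MvPolynomial (Fin n) ℝ} {Ω : Type*} [TopologicalSpace Ω]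
  {K : Set Ω} {X : Ω → Module.Dual ℝ (MvPolynomial (Fin n) ℝ) → ℝ}

theorem IsDominated.of_mul_left (harch : IsArchimedeanQM (QM g)) (hK : IsCompact K)
    {c p : Ω → MvPolynomial (Fin n) ℝ} (hc : IsContinuousFamily c) (hp : IsContinuousFamily p)
    (hpos : ∀ ω ∈ K, ∀ x ∈ SolSet g, 0 < eval x (c ω))
    (h : IsDominated g K X fun ω => c ω * p ω) : IsDominated g K X p := by
  obtain ⟨-, M, hM⟩ := h
  obtain ⟨c₀, hc₀, hcc₀⟩ := (hK.prod (isCompact_SolSet harch)).exists_forall_le'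
    (hc.pow 2).continuous_eval.continuousOn (a := 0) fun z hz => by
      rw [map_pow]
      exact sq_pos_of_pos (hpos z.1 hz.1 z.2 hz.2)
  have hlower := eventually_apply_mul_sq_nonneg_of_pos harch hK
    (H := fun ω => c ω ^ 2 - C (c₀ / 2)) (by fun_prop) hp fun ω hω x hx => by
      rw [map_sub, eval_C]
      linarith [hcc₀ (ω, x) ⟨hω, hx⟩]
  refine ⟨hp, 2 / c₀ * M, ?_⟩
  filter_upwards [hM, hlower] with L hML hL ω hω
  have hle := hL ω hω
  rw [sub_mul, map_sub, ← smul_eq_C_mul, map_smul, smul_eq_mul, ← mul_pow] at hle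
  rw [mul_assoc, div_mul_eq_mul_div, le_div_iff₀ hc₀]
  linarith [hML ω hω]

theorem IsDominated.of_sum_mul_sq (harch : IsArchimedeanQM (QM g)) (hK : IsCompact K)
    {E : Type*} {s : Finset E} {c W : E → Ω → MvPolynomial (Fin n) ℝ}
    (hc : ∀ e, IsContinuousFamily (c e)) (hW : ∀ e, IsContinuousFamily (W e))
    (hpos : ∀ e ∈ s, ∀ ω ∈ K, ∀ x ∈ SolSet g, 0 < eval x (c e ω))
    (h : IsDominated g K X fun ω => ∑ e ∈ s, c e ω * W e ω ^ 2) {e : E} (he : e ∈ s) :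
    IsDominated g K X fun ω => W e ω ^ 2 := by
  refine .of_mul_left harch hK (hc e) ((hW e).pow 2) (hpos e he) ?_
  obtain ⟨-, M, hM⟩ := h
  have hcross : ∀ z ∈ s ×ˢ s, ∀ᶠ L in positivityFilter g, ∀ ω ∈ K,
      0 ≤ L ((c z.1 ω * c z.2 ω) * (W z.1 ω * W z.2 ω) ^ 2) := fun z hz => by
    rw [Finset.mem_product] at hz
    refine eventually_apply_mul_sq_nonneg_of_pos harch hK ((hc _).mul (hc _)) ((hW _).mul (hW _))
      fun ω hω x hx => ?_
    rw [map_mul]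
    exact mul_pos (hpos _ hz.1 ω hω x hx) (hpos _ hz.2 ω hω x hx)
  rw [← Filter.eventually_all_finset] at hcross
  refine ⟨(hc e).mul ((hW e).pow 2), M, ?_⟩
  filter_upwards [hM, hcross] with L hML hL ω hω
  calc L ((c e ω * W e ω ^ 2) ^ 2) = L ((c e ω * c e ω) * (W e ω * W e ω) ^ 2) := by
        congr 1
        ring
    _ ≤ ∑ z ∈ s ×ˢ s, L ((c z.1 ω * c z.2 ω) * (W z.1 ω * W z.2 ω) ^ 2) :=
        Finset.single_le_sum
          (f := fun z : E × E => L ((c z.1 ω * c z.2 ω) * (W z.1 ω * W z.2 ω) ^ 2))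
          (fun z hz => hL z hz ω hω) (Finset.mk_mem_product he he)
    _ = L ((∑ e ∈ s, c e ω * W e ω ^ 2) ^ 2) := by
        rw [sq (∑ e ∈ s, c e ω * W e ω ^ 2), Finset.sum_mul_sum, ← Finset.sum_product', map_sum]
        exact Finset.sum_congr rfl fun z _ => congrArg L (by ring)
    _ ≤ M * X ω L := hML ω hω

end DominatedSquares

section ChordQuadForm

variable {n : ℕ}

/-- The polynomial `⟨X - u, M(u + s(X - u)) (X - u)⟩`, as a linear function of the polynomial
matrix `M`. -/
def chordQuadForm (u : Fin n → ℝ) (s : ℝ) :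
    Matrix (Fin n) (Fin n) (MvPolynomial (Fin n) ℝ) →ₗ[ℝ] MvPolynomial (Fin n) ℝ where
  toFun M := displacement u ⬝ᵥ M.map (compHomothety u s) *ᵥ displacement u
  map_add' M N := by rw [Matrix.map_add _ (map_add _), add_mulVec, dotProduct_add]
  map_smul' c M := by
    rw [Matrix.map_smul _ _ (map_smul _ c), smul_mulVec, dotProduct_smul, RingHom.id_apply]

lemma chordQuadForm_apply (u : Fin n → ℝ) (s : ℝ)
    (M : Matrix (Fin n) (Fin n) (MvPolynomial (Fin n) ℝ)) :
    chordQuadForm u s M = displacement u ⬝ᵥ M.map (compHomothety u s) *ᵥ displacement u :=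
  rfl

lemma eval_chordQuadForm (u x : Fin n → ℝ) (s : ℝ)
    (M : Matrix (Fin n) (Fin n) (MvPolynomial (Fin n) ℝ)) :
    eval x (chordQuadForm u s M) =
      (x - u) ⬝ᵥ M.map (eval (AffineMap.lineMap u x s)) *ᵥ (x - u) := by
  rw [chordQuadForm_apply, eval_dotProduct_mulVec, eval_comp_displacement, Matrix.map_map]
  simp only [Function.comp_def, eval_compHomothety]

lemma chordQuadForm_smul (u : Fin n → ℝ) (s : ℝ) (q : MvPolynomial (Fin n) ℝ)
    (M : Matrix (Fin n) (Fin n) (MvPolynomial (Fin n) ℝ)) :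
    chordQuadForm u s (q • M) = compHomothety u s q * chordQuadForm u s M := by
  simp only [chordQuadForm_apply, dotProduct_mulVec_eq_sum, Finset.mul_sum, map_apply,
    Matrix.smul_apply, smul_eq_mul, map_mul, mul_assoc]

lemma chordQuadForm_vecMulVec (u : Fin n → ℝ) (s : ℝ) (p q : Fin n → MvPolynomial (Fin n) ℝ) :
    chordQuadForm u s (vecMulVec p q) = chordForm p u s * chordForm q u s := by
  rw [chordQuadForm_apply, dotProduct_mulVec_eq_sum, chordForm, chordForm, dotProduct, dotProduct,
    Finset.sum_mul_sum]
  refine Finset.sum_congr rfl fun a _ => Finset.sum_congr rfl fun c _ => ?_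
  rw [map_apply, vecMulVec_apply, map_mul]
  ring

/-- The Hessian matrix of a polynomial. -/
def hessian (f : MvPolynomial (Fin n) ℝ) : Matrix (Fin n) (Fin n) (MvPolynomial (Fin n) ℝ) :=
  of fun a c => pderiv a (pderiv c f)

lemma eval_chordQuadForm_hessian (f : MvPolynomial (Fin n) ℝ) (u x : Fin n → ℝ) (s : ℝ) :
    eval x (chordQuadForm u s (hessian f)) =
      (compLineMap u x f).derivative.derivative.eval s := by
  rw [eval_chordQuadForm, eval_derivative_derivative_compLineMap]
  rfl

/-- The identity `-Hess f = ∑ e ∈ s, G e • r e (r e)ᵀ`, which exhibits `f` as concave where all the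
`G e` are nonnegative. -/
def IsConcavityCertificate {E : Type*} (f : MvPolynomial (Fin n) ℝ) (s : Finset E)
    (G : E → MvPolynomial (Fin n) ℝ) (r : E → Fin n → MvPolynomial (Fin n) ℝ) : Prop :=
  -hessian f = ∑ e ∈ s, G e • vecMulVec (r e) (r e)

variable {E : Type*} {f : MvPolynomial (Fin n) ℝ} {s : Finset E} {G : E → MvPolynomial (Fin n) ℝ}
  {r : E → Fin n → MvPolynomial (Fin n) ℝ}

lemma IsConcavityCertificate.chordQuadForm_hessian (h : IsConcavityCertificate f s G r)
    (u : Fin n → ℝ) (t : ℝ) : chordQuadForm u t (hessian f) =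
      -∑ e ∈ s, compHomothety u t (G e) * chordForm (r e) u t ^ 2 := by
  rw [← neg_neg (hessian f), h]
  simp only [map_neg, map_sum, chordQuadForm_smul, chordQuadForm_vecMulVec, sq]

lemma IsConcavityCertificate.chordForm_gradient_pderiv (h : IsConcavityCertificate f s G r)
    (a : Fin n) (u : Fin n → ℝ) (t : ℝ) :
    chordForm (fun c => pderiv c (pderiv a f)) u t =
      -∑ e ∈ s, chordForm (r e) u t * compHomothety u t (G e) * compHomothety u t (r e a) := by
  have hentry : ∀ c, pderiv c (pderiv a f) = -∑ e ∈ s, G e * (r e c * r e a) := fun c => by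
    have := congrFun₂ h c a
    simp only [Matrix.neg_apply, Matrix.sum_apply, Matrix.smul_apply, vecMulVec_apply,
      smul_eq_mul] at this
    rw [← this, neg_neg, hessian, of_apply]
  simp only [chordForm, dotProduct, hentry, map_neg, map_sum, map_mul, neg_mul, Finset.sum_mul,
    Finset.sum_neg_distrib]
  rw [Finset.sum_comm]
  exact congrArg _ (Finset.sum_congr rfl fun e _ => Finset.sum_congr rfl fun c _ => by ring)

end ChordQuadForm

section Towards

variable {n : ℕ}

/-- The derivation `∑ a, (o a - X a) ∂/∂X a`, the derivative in the direction of the point `o`. -/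
def derivTowards (o : Fin n → ℝ) :
    Derivation ℝ (MvPolynomial (Fin n) ℝ) (MvPolynomial (Fin n) ℝ) :=
  -∑ a, displacement o a • pderiv a

lemma derivTowards_apply (o : Fin n → ℝ) (q : MvPolynomial (Fin n) ℝ) :
    derivTowards o q = -∑ a, displacement o a * pderiv a q := by
  rw [derivTowards, Derivation.neg_apply, ← Derivation.coeFnAddMonoidHom_apply, map_sum,
    Finset.sum_apply]
  rfl

lemma eval_derivTowards (o y : Fin n → ℝ) (q : MvPolynomial (Fin n) ℝ) :
    eval y (derivTowards o q) = gradEval q y ⬝ᵥ (o - y) := by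
  simp only [derivTowards_apply, dotProduct, gradEval, displacement, map_neg, map_sum, map_mul,
    map_sub, eval_X, eval_C, ← Finset.sum_neg_distrib, Pi.sub_apply]
  exact Finset.sum_congr rfl fun a _ => by ring

lemma map_derivTowards_hessian (o : Fin n → ℝ) (f : MvPolynomial (Fin n) ℝ) :
    (hessian f).map (derivTowards o) = -∑ a, displacement o a • hessian (pderiv a f) := by
  ext1 c d
  simp only [map_apply, hessian, of_apply, derivTowards_apply, Matrix.neg_apply, Matrix.sum_apply,
    Matrix.smul_apply, smul_eq_mul]
  exact congrArg _ (Finset.sum_congr rfl fun a _ => by rw [pderiv_comm a c, pderiv_comm a d])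

lemma map_derivation_smul_vecMulVec_self
    (D : Derivation ℝ (MvPolynomial (Fin n) ℝ) (MvPolynomial (Fin n) ℝ))
    (G : MvPolynomial (Fin n) ℝ) (r : Fin n → MvPolynomial (Fin n) ℝ) :
    (G • vecMulVec r r).map D =
      D G • vecMulVec r r + G • (vecMulVec (D ∘ r) r + vecMulVec r (D ∘ r)) := by
  ext1 c d
  simp only [map_apply, Matrix.smul_apply, Matrix.add_apply, vecMulVec_apply, smul_eq_mul,
    Derivation.leibniz, Function.comp_apply]
  ring

lemma IsConcavityCertificate.chordQuadForm_map_derivTowards_hessian {E : Type*}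
    {f : MvPolynomial (Fin n) ℝ} {s : Finset E} {G : E → MvPolynomial (Fin n) ℝ}
    {r : E → Fin n → MvPolynomial (Fin n) ℝ} (h : IsConcavityCertificate f s G r)
    (o u : Fin n → ℝ) (t : ℝ) :
    chordQuadForm u t ((hessian f).map (derivTowards o)) =
      -∑ e ∈ s, (compHomothety u t (derivTowards o (G e)) * chordForm (r e) u t ^ 2 +
        chordForm (r e) u t * compHomothety u t (G e) *
          (2 * chordForm (derivTowards o ∘ r e) u t)) := by
  have hmap : (hessian f).map (derivTowards o) =
      -∑ e ∈ s, (G e • vecMulVec (r e) (r e)).map (derivTowards o) := by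
    rw [← neg_neg (hessian f), h]
    ext1 c d
    simp only [map_apply, Matrix.neg_apply, Matrix.sum_apply, map_neg, map_sum]
  simp only [hmap, map_derivation_smul_vecMulVec_self, map_neg, map_sum, map_add,
    chordQuadForm_smul, chordQuadForm_vecMulVec]
  exact congrArg _ (Finset.sum_congr rfl fun e _ => by ring)

end Towards

section Propagation

variable {n m : ℕ} {g : Fin m → MvPolynomial (Fin n) ℝ} {K : Set ((Fin n → ℝ) × ℝ)}
  {X : (Fin n → ℝ) × ℝ → Module.Dual ℝ (MvPolynomial (Fin n) ℝ) → ℝ} {J : Finset ℝ}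

lemma IsDominated.chordForm_mul_compHomothety_of_nodes (harch : IsArchimedeanQM (QM g))
    (hK : IsCompact K) (hJ : J.Nonempty) {r : Fin n → MvPolynomial (Fin n) ℝ}
    {q : MvPolynomial (Fin n) ℝ} (hdeg : ∀ a, q.totalDegree + (r a).totalDegree < J.card)
    (hnodes : ∀ b ∈ J, IsDominated g K X fun ω => chordForm r ω.1 b * compHomothety ω.1 b q) :
    IsDominated g K X fun ω => chordForm r ω.1 ω.2 * compHomothety ω.1 ω.2 q := by
  refine .of_nodes harch hK LinearMap.id
    (p := fun ω => chordForm r ω.1 ω.2 * compHomothety ω.1 ω.2 q)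
    (fun u x => ∑ a, compLineMap u x (r a) * Polynomial.C (x a - u a) * compLineMap u x q)
    (fun u x => ?_) ?_ ?_ hnodes
  · refine (Polynomial.natDegree_sum_le_of_forall_le (n := J.card - 1) _ _ fun a _ => ?_).trans_lt
      (Nat.sub_lt hJ.card_pos one_pos)
    refine Nat.le_sub_one_of_lt (lt_of_le_of_lt ?_ (hdeg a))
    rw [add_comm]
    exact Polynomial.natDegree_mul_le_of_le
      ((Polynomial.natDegree_mul_C_le _ _).trans (natDegree_compLineMap_le u x _))
      (natDegree_compLineMap_le u x _)
  all_goals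
    intro u x s
    simp [eval_chordForm, dotProduct, Polynomial.eval_finsetSum, Finset.sum_mul]

variable {E : Type*} {f : MvPolynomial (Fin n) ℝ} {s : Finset E} {G : E → MvPolynomial (Fin n) ℝ}
  {r : E → Fin n → MvPolynomial (Fin n) ℝ}

lemma IsConcavityCertificate.isDominated_chordQuadForm_hessian_pderiv
    (h : IsConcavityCertificate f s G r) (harch : IsArchimedeanQM (QM g)) (hK : IsCompact K)
    {a : Fin n} (hdeg : (pderiv a f).totalDegree < J.card)
    (hnodes : ∀ e ∈ s, ∀ b ∈ J,
      IsDominated g K X fun ω => chordForm (r e) ω.1 b * compHomothety ω.1 b (G e)) :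
    IsDominated g K X fun ω => chordQuadForm ω.1 ω.2 (hessian (pderiv a f)) := by
  refine .of_nodes harch hK (J := J) Polynomial.derivative
    (p := fun ω => chordForm (fun c => pderiv c (pderiv a f)) ω.1 ω.2)
    (fun u x => (compLineMap u x (pderiv a f)).derivative) (fun u x => ?_) ?_ ?_ fun b hb => ?_
  · exact ((Polynomial.natDegree_derivative_le _).trans (Nat.sub_le _ _)).trans_lt
      ((natDegree_compLineMap_le u x _).trans_lt hdeg)
  · intro u x t
    rw [eval_chordForm, eval_derivative_compLineMap]
    rfl
  · exact fun u x t => eval_chordQuadForm_hessian _ u x t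
  · simp only [h.chordForm_gradient_pderiv]
    exact (IsDominated.sum fun e he => (hnodes e he b hb).mul_right harch hK (by fun_prop)).neg

lemma IsConcavityCertificate.isDominated_chordQuadForm_map_derivTowards
    (h : IsConcavityCertificate f s G r) (harch : IsArchimedeanQM (QM g)) (hK : IsCompact K)
    (hdeg : ∀ a, (pderiv a f).totalDegree < J.card)
    (hnodes : ∀ e ∈ s, ∀ b ∈ J,
      IsDominated g K X fun ω => chordForm (r e) ω.1 b * compHomothety ω.1 b (G e))
    (o : Fin n → ℝ) :
    IsDominated g K X fun ω => chordQuadForm ω.1 ω.2 ((hessian f).map (derivTowards o)) := by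
  simp only [map_derivTowards_hessian, map_neg, map_sum, chordQuadForm_smul,
    mul_comm (compHomothety _ _ _)]
  exact (IsDominated.sum fun a _ =>
    (h.isDominated_chordQuadForm_hessian_pderiv harch hK (hdeg a) hnodes).mul_right harch hK
      (by fun_prop)).neg

lemma exists_forall_eval_derivTowards_add_smul_pos (harch : IsArchimedeanQM (QM g))
    {q : MvPolynomial (Fin n) ℝ} {o : Fin n → ℝ} (hq : ∀ x ∈ SolSet g, 0 ≤ eval x q)
    (hslope : ∀ y ∈ SolSet g, eval y q = 0 → 0 < gradEval q y ⬝ᵥ (o - y)) :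
    ∃ l : ℝ, ∀ y ∈ SolSet g, 0 < eval y (derivTowards o q + l • q) := by
  obtain ⟨l, hl⟩ := exists_forall_pos_add_mul (isCompact_SolSet harch)
    (MvPolynomial.continuous_eval (derivTowards o q)) (MvPolynomial.continuous_eval q) hq
    fun y hy h0 => (eval_derivTowards o y q).symm ▸ hslope y hy h0
  exact ⟨l, fun y hy => by simpa only [map_add, smul_eval] using hl l le_rfl y hy⟩

/-- Along a chord, `G e` may vanish, but then its derivative towards `o` does not, so the factor
`G e` is removed by differentiating the certificate in the direction of `o`. -/
theorem IsConcavityCertificate.isDominated_chordForm_sq (h : IsConcavityCertificate f s G r)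
    (hconv : Convex ℝ (SolSet g)) (harch : IsArchimedeanQM (QM g)) (hJ : J.Nonempty)
    (hdegf : ∀ a, (pderiv a f).totalDegree < J.card)
    (hdeg : ∀ e ∈ s, ∀ a, (G e).totalDegree + (r e a).totalDegree < J.card)
    (hG : ∀ e ∈ s, ∀ x ∈ SolSet g, 0 ≤ eval x (G e)) {o : Fin n → ℝ}
    (hslope : ∀ e ∈ s, ∀ y ∈ SolSet g, eval y (G e) = 0 → 0 < gradEval (G e) y ⬝ᵥ (o - y))
    (hnodes : ∀ e ∈ s, ∀ b ∈ J, IsDominated g (SolSet g ×ˢ Set.Icc 0 1) X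
      fun ω => chordForm (r e) ω.1 b * compHomothety ω.1 b (G e)) {e : E} (he : e ∈ s) :
    IsDominated g (SolSet g ×ˢ Set.Icc 0 1) X fun ω => chordForm (r e) ω.1 ω.2 ^ 2 := by
  have hK := (isCompact_SolSet harch).prod (isCompact_Icc (a := (0 : ℝ)) (b := 1))
  have hpos : ∀ e, ∃ l : ℝ, e ∈ s → ∀ y ∈ SolSet g,
      0 < eval y (derivTowards o (G e) + l • G e) := fun e => by
    by_cases he : e ∈ s
    · exact (exists_forall_eval_derivTowards_add_smul_pos harch (hG e he) (hslope e he)).imp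
        fun l hl _ => hl
    · exact ⟨0, fun h => (he h).elim⟩
  choose l hl using hpos
  refine .of_sum_mul_sq harch hK (s := s)
    (c := fun e ω => compHomothety ω.1 ω.2 (derivTowards o (G e) + l e • G e))
    (W := fun e ω => chordForm (r e) ω.1 ω.2) (by fun_prop) (by fun_prop)
    (fun e he ω hω x hx => ?_) ?_ he
  · rw [eval_compHomothety]
    exact hl e he _ (hconv.lineMap_mem hω.1 hx hω.2)
  have hsum : ∀ ω : (Fin n → ℝ) × ℝ,
      ∑ e ∈ s, compHomothety ω.1 ω.2 (derivTowards o (G e) + l e • G e) *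
          chordForm (r e) ω.1 ω.2 ^ 2 =
        (∑ e ∈ s, (chordForm (r e) ω.1 ω.2 * compHomothety ω.1 ω.2 (G e)) *
          (l e • chordForm (r e) ω.1 ω.2 - 2 * chordForm (derivTowards o ∘ r e) ω.1 ω.2)) -
        chordQuadForm ω.1 ω.2 ((hessian f).map (derivTowards o)) := fun ω => by
    rw [h.chordQuadForm_map_derivTowards_hessian, sub_neg_eq_add, ← Finset.sum_add_distrib]
    refine Finset.sum_congr rfl fun e _ => ?_
    rw [map_add, map_smul, smul_eq_C_mul, smul_eq_C_mul]
    ring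
  simp only [hsum]
  refine IsDominated.sub (.sum fun e he => ?_)
    (h.isDominated_chordQuadForm_map_derivTowards harch hK hdegf hnodes o)
  exact (IsDominated.chordForm_mul_compHomothety_of_nodes harch hK hJ (hdeg e he)
    (hnodes e he)).mul_right harch hK (by fun_prop)

end Propagation

section Certificates

lemma transpose_mul_self_eq_sum_vecMulVec {k l A : Type*} [Fintype l] [CommSemiring A]
    (P : Matrix l k A) : Pᵀ * P = ∑ i, vecMulVec (P i) (P i) := by
  ext a c
  simp [mul_apply, Matrix.sum_apply, vecMulVec_apply]

lemma sum_subtype_ne_zero_smul {ι R M : Type*} [Fintype ι] [Semiring R] [AddCommMonoid M]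
    [Module R M] (c : ι → R) (v : ι → M) [DecidablePred fun i => c i ≠ 0] :
    ∑ i : {i // c i ≠ 0}, c i • v i = ∑ i, c i • v i := by
  rw [← Finset.sum_subtype (Finset.univ.filter fun i => c i ≠ 0) (by simp) fun i => c i • v i]
  exact Finset.sum_filter_of_ne fun i _ hi hc => hi (by rw [hc, zero_smul])

variable {n m : ℕ} {g : Fin m → MvPolynomial (Fin n) ℝ}

theorem exists_isConcavityCertificate_of_sosConcave {f : MvPolynomial (Fin n) ℝ}
    (h : SosConcave g f) :
    ∃ (E : Type) (_ : Fintype E) (i : E → Fin (m + 1)) (r : E → Fin n → MvPolynomial (Fin n) ℝ),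
      (∀ e, withOne g (i e) ≠ 0) ∧
        IsConcavityCertificate f Finset.univ (fun e => withOne g (i e)) r := by
  classical
  obtain ⟨-, N, P, -, hP⟩ := h
  refine ⟨{e : Fin (m + 1) × Fin N × Fin n // withOne g e.1 ≠ 0}, inferInstance,
    fun e => e.1.1, fun e => P e.1.1 e.1.2.1 e.1.2.2, fun e => e.2, ?_⟩
  refine Eq.trans ?_ (sum_subtype_ne_zero_smul
    (fun e : Fin (m + 1) × Fin N × Fin n => withOne g e.1)
    fun e => vecMulVec (P e.1 e.2.1 e.2.2) (P e.1 e.2.1 e.2.2)).symm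
  simp only [Fintype.sum_prod_type, ← Finset.smul_sum, ← transpose_mul_self_eq_sum_vecMulVec]
  exact hP.trans (by simp only [Finset.smul_sum])

theorem exists_forall_isConcavityCertificate (g : Fin m → MvPolynomial (Fin n) ℝ) :
    ∃ (E : Type) (_ : Fintype E) (F : Fin m → Finset E) (i : E → Fin (m + 1))
      (r : E → Fin n → MvPolynomial (Fin n) ℝ), (∀ e, withOne g (i e) ≠ 0) ∧
        ∀ k, SosConcave g (g k) →
          IsConcavityCertificate (g k) (F k) (fun e => withOne g (i e)) r := by
  have hk : ∀ k, ∃ (E : Type) (_ : Fintype E) (i : E → Fin (m + 1))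
      (r : E → Fin n → MvPolynomial (Fin n) ℝ), (∀ e, withOne g (i e) ≠ 0) ∧
        (SosConcave g (g k) →
          IsConcavityCertificate (g k) Finset.univ (fun e => withOne g (i e)) r) := fun k => by
    by_cases h : SosConcave g (g k)
    · obtain ⟨E, hE, i, r, hi, hcert⟩ := exists_isConcavityCertificate_of_sosConcave h
      exact ⟨E, hE, i, r, hi, fun _ => hcert⟩
    · exact ⟨Empty, inferInstance, Empty.elim, Empty.elim, fun e => e.elim, fun h' => (h h').elim⟩
  choose E hE i r hne hcert using hk
  refine ⟨Σ k, E k, inferInstance, fun k => Finset.univ.map (.sigmaMk k), fun e => i e.1 e.2,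
    fun e => r e.1 e.2, fun e => hne e.1 e.2, fun k hk => ?_⟩
  rw [IsConcavityCertificate, Finset.sum_map]
  exact hcert k hk

end Certificates

section HessianExpansion

variable {n D : ℕ} {ι : Type*} [Fintype ι] {b w : ι → ℝ} {q : MvPolynomial (Fin n) ℝ}

theorem IsChordRule.compHomothety_eq {t : ℝ} (h : IsChordRule D t b w) (hq : q.totalDegree ≤ D)
    (u : Fin n → ℝ) : compHomothety u t q =
      (1 - t) • C (eval u q) + t • q - ∑ i, w i • chordQuadForm u (b i) (hessian q) := by
  refine MvPolynomial.funext fun x => ?_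
  have heval := h.eval_eq (compLineMap u x q) ((natDegree_compLineMap_le u x q).trans hq)
  simp only [eval_compLineMap, AffineMap.lineMap_apply_zero, AffineMap.lineMap_apply_one] at heval
  simp only [eval_compHomothety, heval, map_sub, map_add, smul_eval, eval_C, map_sum,
    eval_chordQuadForm_hessian]

theorem IsTaylorRule.tangentPart_eq (h : IsTaylorRule D b w) (hq : q.totalDegree ≤ D)
    (u : Fin n → ℝ) : tangentPart q u =
      q - C (eval u q) - ∑ i, w i • chordQuadForm u (b i) (hessian q) := by
  refine MvPolynomial.funext fun x => ?_
  have heval := h.eval_add (compLineMap u x q) ((natDegree_compLineMap_le u x q).trans hq) 0 1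
  simp only [zero_add, one_mul, one_pow, eval_compLineMap, eval_derivative_compLineMap,
    AffineMap.lineMap_apply_zero, AffineMap.lineMap_apply_one] at heval
  simp only [eval_tangentPart, heval, map_sub, smul_eval, eval_C, map_sum,
    eval_chordQuadForm_hessian]
  ring

end HessianExpansion

section ChordPositivity

variable {n m : ℕ} {g : Fin m → MvPolynomial (Fin n) ℝ} {E : Type*}
  {r : E → Fin n → MvPolynomial (Fin n) ℝ} {U : Set E}
  {X : (Fin n → ℝ) → Module.Dual ℝ (MvPolynomial (Fin n) ℝ) → ℝ}
  {W P : (Fin n → ℝ) → MvPolynomial (Fin n) ℝ} {q : MvPolynomial (Fin n) ℝ}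

/-- `B` bounds the moments `L (chordForm (r e) u s ^ 2)` for all `e ∈ U` and all ratios
`s ∈ [0, 1]`. -/
def ChordFormsBoundedBy (r : E → Fin n → MvPolynomial (Fin n) ℝ) (U : Set E) (u : Fin n → ℝ)
    (L : Module.Dual ℝ (MvPolynomial (Fin n) ℝ)) (B : ℝ) : Prop :=
  ∀ e ∈ U, ∀ s ∈ Set.Icc (0 : ℝ) 1, L (chordForm (r e) u s ^ 2) ≤ B

/-- For sufficiently positive `L`, the moment of `W ^ 2 * P` is at least a positive multiple of the
moment of `(W * P) ^ 2`, up to an error which is an arbitrarily small multiple of `X` and of any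
bound for the forms `r e` with `e ∈ U`. -/
def IsChordPositive (g : Fin m → MvPolynomial (Fin n) ℝ) (r : E → Fin n → MvPolynomial (Fin n) ℝ)
    (U : Set E) (X : (Fin n → ℝ) → Module.Dual ℝ (MvPolynomial (Fin n) ℝ) → ℝ)
    (W P : (Fin n → ℝ) → MvPolynomial (Fin n) ℝ) : Prop :=
  ∃ δ > 0, ∀ η > 0, ∀ᶠ L in positivityFilter g, ∀ u ∈ SolSet g, ∀ B ≥ 0,
    ChordFormsBoundedBy r U u L B →
      δ * L ((W u * P u) ^ 2) ≤ L (W u ^ 2 * P u) + η * (B + X u L)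

lemma IsChordPositive.of_eventually
    (h : ∃ δ > 0, ∀ᶠ L in positivityFilter g, ∀ u ∈ SolSet g, δ * L (P u ^ 2) ≤ L (P u)) :
    IsChordPositive g r U 0 1 P := by
  obtain ⟨δ, hδ, h⟩ := h
  refine ⟨δ, hδ, fun η hη => h.mono fun L hL u hu B hB _ => ?_⟩
  simp only [Pi.one_apply, one_mul, one_pow, Pi.zero_apply, add_zero]
  exact (hL u hu).trans (le_add_of_nonneg_right (mul_nonneg hη.le hB))

lemma IsChordPositive.mono (h : IsChordPositive g r U 0 W P)
    (hX : ∀ᶠ L in positivityFilter g, ∀ u, 0 ≤ X u L) : IsChordPositive g r U X W P := by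
  obtain ⟨δ, hδ, h⟩ := h
  refine ⟨δ, hδ, fun η hη => ?_⟩
  filter_upwards [h η hη, hX] with L hL hXL u hu B hB hBU
  refine (hL u hu B hB hBU).trans ?_
  gcongr
  exact hXL u

lemma isChordPositive_one : IsChordPositive g r U 0 1 1 :=
  .of_eventually ⟨1, one_pos, .of_forall fun L u _ => by simp⟩

lemma exists_pos_forall_eval_le (harch : IsArchimedeanQM (QM g)) (q : MvPolynomial (Fin n) ℝ) :
    ∃ G > 0, ∀ x ∈ SolSet g, eval x q ≤ G := by
  obtain ⟨G, hG, h⟩ := exists_pos_forall_le (isCompact_SolSet harch)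
    (f := fun x (_ : Unit) => eval x q) (continuous_pi fun _ => MvPolynomial.continuous_eval q)
  exact ⟨G, hG, fun x hx => h x hx ()⟩

lemma isChordPositive_compHomothety_zero (harch : IsArchimedeanQM (QM g))
    (hq : ∀ x ∈ SolSet g, 0 ≤ eval x q) :
    IsChordPositive g r U 0 1 fun u => compHomothety u 0 q := by
  obtain ⟨G, hG, hqG⟩ := exists_pos_forall_eval_le harch q
  refine .of_eventually ⟨G⁻¹, by positivity, ?_⟩
  filter_upwards [eventually_nonneg_of_nonneg g] with L hL u hu
  have hnonneg : 0 ≤ eval u q - G⁻¹ * eval u q ^ 2 := by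
    rw [sub_nonneg, inv_mul_le_iff₀ hG, sq]
    exact mul_le_mul_of_nonneg_right (hqG u hu) (hq u hu)
  have hLC := hL _ hnonneg
  rw [C_sub, C_mul, ← smul_eq_C_mul, C_pow, map_sub, map_smul, smul_eq_mul, sub_nonneg] at hLC
  rwa [compHomothety_zero]

lemma isChordPositive_compHomothety_one (harch : IsArchimedeanQM (QM g)) (hq : q ∈ QM g) :
    IsChordPositive g r U 0 1 fun u => compHomothety u 1 q := by
  obtain ⟨G, hG, hqG⟩ := exists_pos_forall_eval_le harch q
  obtain ⟨δ, hδ, hδG⟩ : ∃ δ > 0, δ * G < 1 := ⟨(2 * G)⁻¹, by positivity, by field_simp; norm_num⟩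
  have hupper := eventually_apply_mul_sq_nonneg_of_pos harch (isCompact_singleton (x := ()))
    (H := fun _ => 1 - δ • q) (p := fun _ => q) (by fun_prop) (by fun_prop) fun _ _ x hx => by
      rw [map_sub, map_one, smul_eval]
      linarith [mul_le_mul_of_nonneg_left (hqG x hx) hδ.le]
  refine .of_eventually ⟨δ, hδ, ?_⟩
  filter_upwards [hupper, eventually_nonneg_of_mem_QM hq (1 - δ • q).totalDegree] with L h1 h2 u _
  have hsplit : q - δ • q ^ 2 = (1 - δ • q) ^ 2 * q + δ • ((1 - δ • q) * q ^ 2) := by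
    simp only [smul_eq_C_mul]
    ring
  have hnonneg : 0 ≤ L (q - δ • q ^ 2) := by
    rw [hsplit, map_add, map_smul]
    exact add_nonneg (h2 _ le_rfl) (mul_nonneg hδ.le (h1 () rfl))
  rwa [compHomothety_one, ← sub_nonneg, ← smul_eq_mul, ← map_smul, ← map_sub]

lemma isChordPositive_chordForm_of_mem (hconv : Convex ℝ (SolSet g))
    (harch : IsArchimedeanQM (QM g)) (hq : ∀ x ∈ SolSet g, 0 ≤ eval x q) {e : E} (he : e ∈ U)
    {t : ℝ} (ht : t ∈ Set.Icc (0 : ℝ) 1) :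
    IsChordPositive g r U 0 (fun u => chordForm (r e) u t) fun u => compHomothety u t q := by
  obtain ⟨G, hG, hqG⟩ := exists_pos_forall_eval_le harch q
  refine ⟨G⁻¹, by positivity, fun η hη => ?_⟩
  have hpos := eventually_apply_mul_sq_nonneg_of_pos harch (isCompact_SolSet harch)
    (H := fun u => compHomothety u t q - G⁻¹ • compHomothety u t q ^ 2 + C η)
    (p := fun u => chordForm (r e) u t) (by fun_prop) (by fun_prop) fun u hu x hx => by
      have hmem := hconv.lineMap_mem hu hx ht
      simp only [map_sub, map_add, smul_eval, map_pow, eval_C, eval_compHomothety]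
      rw [inv_mul_eq_div]
      have : eval (AffineMap.lineMap u x t) q ^ 2 / G ≤ eval (AffineMap.lineMap u x t) q := by
        rw [div_le_iff₀ hG, sq]
        exact mul_le_mul_of_nonneg_left (hqG _ hmem) (hq _ hmem)
      linarith
  filter_upwards [hpos] with L hL u hu B _ hBU
  have hLu := hL u hu
  rw [add_mul, sub_mul, ← smul_eq_C_mul, smul_mul_assoc, map_add, map_sub, map_smul, map_smul,
    mul_comm _ (chordForm (r e) u t ^ 2), mul_comm _ (chordForm (r e) u t ^ 2), ← mul_pow,
    smul_eq_mul, smul_eq_mul] at hLu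
  rw [Pi.zero_apply, Pi.zero_apply, add_zero]
  linarith [mul_le_mul_of_nonneg_left (hBU e he t ht) hη.le]

end ChordPositivity

section TotalMoments

variable {n m : ℕ} {g : Fin m → MvPolynomial (Fin n) ℝ} {Ω κ : Type*} [TopologicalSpace Ω]
  {K : Set Ω} {X : Ω → Module.Dual ℝ (MvPolynomial (Fin n) ℝ) → ℝ}

lemma IsDominated.comp {Ω' : Type*} [TopologicalSpace Ω'] {K' : Set Ω'} {f : Ω' → Ω}
    {p : Ω → MvPolynomial (Fin n) ℝ} (hp : IsDominated g K X p) (hf : Continuous f)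
    (hfK : Set.MapsTo f K' K) : IsDominated g K' (fun ω => X (f ω)) fun ω => p (f ω) :=
  ⟨hp.1.comp hf, hp.2.imp fun _ hc => hc.mono fun _ hL ω hω => hL (f ω) (hfK hω)⟩

lemma IsDominated.exists_eventually_apply_mul_le {p q : Ω → MvPolynomial (Fin n) ℝ}
    (hp : IsDominated g K X p) (hq : IsDominated g K X q) :
    ∃ c : ℝ, ∀ᶠ L in positivityFilter g, ∀ ω ∈ K, L (p ω * q ω) ≤ c * X ω L := by
  obtain ⟨hp, c, hc⟩ := hp
  obtain ⟨hq, c', hc'⟩ := hq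
  refine ⟨(c + c') / 2, ?_⟩
  filter_upwards [hc, hc', (hp.sub hq).eventually_sq_nonneg g] with L hpL hqL hsq ω hω
  have hsqω := hsq ω
  have polarization : (p ω - q ω) ^ 2 = p ω ^ 2 + q ω ^ 2 - (2 : ℝ) • (p ω * q ω) := by
    rw [smul_eq_C_mul, map_ofNat]
    ring
  rw [polarization, map_sub, map_add, map_smul, smul_eq_mul] at hsqω
  linarith [hpL ω hω, hqL ω hω]

/-- The sum of the moments of the squares of the members of a finite collection of families; it
serves as a bound `X` in `IsDominated` and `IsChordPositive`. -/
def sumSqMoments [Fintype κ] (p : κ → Ω → MvPolynomial (Fin n) ℝ) (ω : Ω)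
    (L : Module.Dual ℝ (MvPolynomial (Fin n) ℝ)) : ℝ :=
  ∑ i, L (p i ω ^ 2)

variable [Fintype κ] {p : κ → Ω → MvPolynomial (Fin n) ℝ}

lemma eventually_sumSqMoments_nonneg (g : Fin m → MvPolynomial (Fin n) ℝ)
    (hp : ∀ i, IsContinuousFamily (p i)) :
    ∀ᶠ L in positivityFilter g, ∀ ω, 0 ≤ sumSqMoments p ω L :=
  (eventually_all.2 fun i => (hp i).eventually_sq_nonneg g).mono fun _ hL ω =>
    Finset.sum_nonneg fun i _ => hL i ω

lemma isDominated_sumSqMoments (hp : ∀ i, IsContinuousFamily (p i)) (i : κ) :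
    IsDominated g K (sumSqMoments p) (p i) := by
  refine ⟨hp i, 1, ?_⟩
  filter_upwards [eventually_all.2 fun j => (hp j).eventually_sq_nonneg g] with L hL ω _
  rw [one_mul]
  exact Finset.single_le_sum (f := fun j => L (p j ω ^ 2)) (fun j _ => hL j ω) (Finset.mem_univ i)

end TotalMoments

section ChordPositivityOfParts

variable {n m : ℕ} {g : Fin m → MvPolynomial (Fin n) ℝ} {E : Type*}
  {r : E → Fin n → MvPolynomial (Fin n) ℝ} {U : Set E}
  {X : (Fin n → ℝ) → Module.Dual ℝ (MvPolynomial (Fin n) ℝ) → ℝ}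

lemma ChordFormsBoundedBy.mono {u : Fin n → ℝ} {L : Module.Dual ℝ (MvPolynomial (Fin n) ℝ)}
    {B B' : ℝ} (h : ChordFormsBoundedBy r U u L B) (hB : B ≤ B') :
    ChordFormsBoundedBy r U u L B' :=
  fun e he s hs => (h e he s hs).trans hB

lemma ChordFormsBoundedBy.insert {u : Fin n → ℝ} {L : Module.Dual ℝ (MvPolynomial (Fin n) ℝ)}
    {B : ℝ} (h : ChordFormsBoundedBy r U u L B) {e : E}
    (he : ∀ s ∈ Set.Icc (0 : ℝ) 1, L (chordForm (r e) u s ^ 2) ≤ B) :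
    ChordFormsBoundedBy r (insert e U) u L B := by
  rintro _ (rfl | he')
  · exact he
  · exact h _ he'

lemma exists_eventually_chordFormsBoundedBy_mulSq [Finite E] (harch : IsArchimedeanQM (QM g))
    {q : (Fin n → ℝ) → MvPolynomial (Fin n) ℝ} (hq : IsContinuousFamily q) :
    ∃ M > 0, ∀ᶠ L in positivityFilter g, ∀ u ∈ SolSet g, ∀ B ≥ 0,
      ChordFormsBoundedBy r U u L B → ChordFormsBoundedBy r U u (mulSq (q u) L) (M * B) := by
  have hK := (isCompact_SolSet harch).prod (isCompact_Icc (a := (0 : ℝ)) (b := 1))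
  have hM := fun e => exists_eventually_apply_sq_mul_sq_le harch hK
    (p := fun ω => chordForm (r e) ω.1 ω.2) (q := fun ω : (Fin n → ℝ) × ℝ => q ω.1)
    (by fun_prop) (hq.comp continuous_fst)
  choose M hM0 hM using hM
  obtain ⟨M', hM'⟩ := Finite.exists_le M
  refine ⟨max M' 1, by positivity, ?_⟩
  filter_upwards [eventually_all.2 hM] with L hL u hu B hB hBU e he s hs
  calc mulSq (q u) L (chordForm (r e) u s ^ 2)
      ≤ M e * L (chordForm (r e) u s ^ 2) := hL e (u, s) ⟨hu, hs⟩
    _ ≤ M e * B := mul_le_mul_of_nonneg_left (hBU e he s hs) (hM0 e).le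
    _ ≤ max M' 1 * B := mul_le_mul_of_nonneg_right ((hM' e).trans (le_max_left _ _)) hB

theorem IsChordPositive.of_insert [Finite E] (harch : IsArchimedeanQM (QM g)) {e : E} {t : ℝ}
    (ht : t ∈ Set.Icc (0 : ℝ) 1) {P : (Fin n → ℝ) → MvPolynomial (Fin n) ℝ}
    (h : IsChordPositive g r (insert e U) 0 1 P)
    (hX : ∀ᶠ L in positivityFilter g, ∀ u, 0 ≤ X u L)
    (hdom : IsDominated g (SolSet g ×ˢ Set.Icc 0 1) (fun ω => X ω.1)
      fun ω => chordForm (r e) ω.1 ω.2 ^ 2) :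
    IsChordPositive g r U X (fun u => chordForm (r e) u t) P := by
  obtain ⟨δ, hδ, h⟩ := h
  have hW : IsContinuousFamily fun u => chordForm (r e) u t := by fun_prop
  obtain ⟨D, hD⟩ := hW.exists_totalDegree_le
  obtain ⟨M, hM0, hM⟩ := exists_eventually_chordFormsBoundedBy_mulSq (U := U) (r := r) harch hW
  obtain ⟨c, hc⟩ := (hdom.comp (K' := SolSet g ×ˢ Set.Icc (0 : ℝ) 1) (f := fun ω => (ω.1, t))
    (by fun_prop) fun ω hω => ⟨hω.1, ht⟩).exists_eventually_apply_mul_le hdom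
  obtain ⟨N, hMN, hcN⟩ : ∃ N, M ≤ N ∧ c ≤ N := ⟨max M c, le_max_left _ _, le_max_right _ _⟩
  have hN : 0 < N := hM0.trans_le hMN
  refine ⟨δ, hδ, fun η hη => ?_⟩
  filter_upwards [hX, hM, hc, eventually_mulSq (h (η / N) (by positivity)) D]
    with L hXL hML hcL hL u hu B hB hBU
  have hbound : ChordFormsBoundedBy r (insert e U) u (mulSq (chordForm (r e) u t) L)
      (N * (B + X u L)) := by
    have hXu := hXL u
    refine ((hML u hu B hB hBU).mono ?_).insert fun s hs => (hcL (u, s) ⟨hu, hs⟩).trans ?_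
    · exact mul_le_mul hMN (le_add_of_nonneg_right hXu) hB hN.le
    · exact mul_le_mul hcN (le_add_of_nonneg_left hB) hXu hN.le
  have hpos := hL _ (hD u) u hu _ (mul_nonneg hN.le (add_nonneg hB (hXL u))) hbound
  simp only [Pi.one_apply, one_mul, one_pow, Pi.zero_apply, add_zero, mulSq_apply] at hpos
  rwa [mul_pow, ← div_mul_cancel₀ η hN.ne', mul_assoc]

end ChordPositivityOfParts

section WeightedSums

variable {n m : ℕ} {g : Fin m → MvPolynomial (Fin n) ℝ} {E κ : Type*}
  {r : E → Fin n → MvPolynomial (Fin n) ℝ} {U : Set E}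

lemma exists_pos_forall_le_apply [Finite κ] {f : κ → ℝ} (hf : ∀ i, 0 < f i) :
    ∃ μ > 0, ∀ i, μ ≤ f i := by
  cases isEmpty_or_nonempty κ
  · exact ⟨1, one_pos, isEmptyElim⟩
  · obtain ⟨i, hi⟩ := Finite.exists_min f
    exact ⟨f i, hf i, hi⟩

variable [Fintype κ] {w : κ → ℝ} {W P : κ → (Fin n → ℝ) → MvPolynomial (Fin n) ℝ}

lemma exists_eventually_sumSqMoments_le (hw : ∀ i, 0 < w i)
    (hWP : ∀ i, IsContinuousFamily fun u => W i u * P i u)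
    (h : ∀ i, IsChordPositive g r U (sumSqMoments fun i u => W i u * P i u) (W i) (P i)) :
    ∃ μ > 0, ∀ η > 0, ∀ᶠ L in positivityFilter g, ∀ u ∈ SolSet g, ∀ B ≥ 0,
      ChordFormsBoundedBy r U u L B → μ * sumSqMoments (fun i u => W i u * P i u) u L ≤
        L (∑ i, w i • (W i u ^ 2 * P i u)) +
          η * (B + sumSqMoments (fun i u => W i u * P i u) u L) := by
  choose δ hδ h using h
  obtain ⟨μ, hμ, hμδ⟩ := exists_pos_forall_le_apply fun i => mul_pos (hw i) (hδ i)
  have hM : 0 < ∑ i, w i + 1 := add_pos_of_nonneg_of_pos (Finset.sum_nonneg fun i _ => (hw i).le)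
    one_pos
  refine ⟨μ, hμ, fun η hη => ?_⟩
  filter_upwards [eventually_all.2 fun i => h i (η / (∑ i, w i + 1)) (by positivity),
    eventually_all.2 fun i => (hWP i).eventually_sq_nonneg g,
    eventually_sumSqMoments_nonneg g hWP] with L hL hsq hX u hu B hB hBU
  set T := B + sumSqMoments (fun i u => W i u * P i u) u L
  have hT : 0 ≤ T := add_nonneg hB (hX u)
  have hterm : ∀ i, μ * L ((W i u * P i u) ^ 2) ≤
      w i * L (W i u ^ 2 * P i u) + w i * (η / (∑ i, w i + 1) * T) := fun i => by
    have hi := mul_le_mul_of_nonneg_left (hL i u hu B hB hBU) (hw i).le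
    rw [← mul_assoc, mul_add] at hi
    exact (mul_le_mul_of_nonneg_right (hμδ i) (hsq i u)).trans hi
  calc μ * sumSqMoments (fun i u => W i u * P i u) u L
      ≤ ∑ i, (w i * L (W i u ^ 2 * P i u) + w i * (η / (∑ i, w i + 1) * T)) := by
        rw [sumSqMoments, Finset.mul_sum]
        exact Finset.sum_le_sum fun i _ => hterm i
    _ = L (∑ i, w i • (W i u ^ 2 * P i u)) + (∑ i, w i) * (η / (∑ i, w i + 1) * T) := by
        simp only [Finset.sum_add_distrib, ← Finset.sum_mul, map_sum, map_smul, smul_eq_mul]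
    _ ≤ L (∑ i, w i • (W i u ^ 2 * P i u)) + η * T := by
        rw [← mul_assoc, ← mul_div_assoc, mul_div_right_comm]
        gcongr
        exact mul_le_of_le_one_left hη.le ((div_le_one hM).2 (by linarith))

theorem IsChordPositive.of_sum (harch : IsArchimedeanQM (QM g)) (hw : ∀ i, 0 < w i)
    (hW : ∀ i, IsContinuousFamily (W i)) (hP : ∀ i, IsContinuousFamily (P i))
    (h : ∀ i, IsChordPositive g r U (sumSqMoments fun i u => W i u * P i u) (W i) (P i)) :
    IsChordPositive g r U 0 1 fun u => ∑ i, w i • (W i u ^ 2 * P i u) := by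
  have hWP := fun i => (hW i).mul (hP i)
  have hdom : IsDominated g (SolSet g) (sumSqMoments fun i u => W i u * P i u)
      fun u => ∑ i, (W i u * P i u) * (w i • W i u) :=
    .sum fun i _ => (isDominated_sumSqMoments hWP i).mul_right harch (isCompact_SolSet harch)
      ((hW i).smul continuous_const)
  have hsum : ∀ u, ∑ i, (W i u * P i u) * (w i • W i u) = ∑ i, w i • (W i u ^ 2 * P i u) :=
    fun u => Finset.sum_congr rfl fun i _ => by rw [mul_smul_comm, sq, mul_right_comm]
  simp only [hsum] at hdom
  obtain ⟨-, c, hc⟩ := hdom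
  obtain ⟨N, hN, hcN⟩ : ∃ N > 0, c ≤ N := ⟨max c 1, by positivity, le_max_left _ _⟩
  obtain ⟨μ, hμ, hlower⟩ := exists_eventually_sumSqMoments_le hw hWP h
  refine ⟨μ / (2 * N), by positivity, fun η hη => ?_⟩
  filter_upwards [hc, eventually_sumSqMoments_nonneg g hWP,
    hlower (min η (μ / 2)) (by positivity)] with L hcL hX hL u hu B hB hBU
  have hXu := hX u
  have hLu := hL u hu B hB hBU
  set T := sumSqMoments (fun i u => W i u * P i u) u L
  have hupper : μ / (2 * N) * L ((∑ i, w i • (W i u ^ 2 * P i u)) ^ 2) ≤ μ / 2 * T := calc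
    _ ≤ μ / (2 * N) * (N * T) := by
      gcongr
      exact (hcL u hu).trans (mul_le_mul_of_nonneg_right hcN hXu)
    _ = μ / 2 * T := by field_simp
  have herror : min η (μ / 2) * (B + T) ≤ η * B + μ / 2 * T := by
    rw [mul_add]
    gcongr
    exacts [min_le_left _ _, min_le_right _ _]
  simp only [Pi.one_apply, one_mul, one_pow, Pi.zero_apply, add_zero]
  linarith

end WeightedSums

section Recursion

variable {n m : ℕ} {g : Fin m → MvPolynomial (Fin n) ℝ} {E : Type*} {s : Finset E}
  {G : E → MvPolynomial (Fin n) ℝ} {r : E → Fin n → MvPolynomial (Fin n) ℝ} {U : Set E}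
  {q : MvPolynomial (Fin n) ℝ}

lemma IsConcavityCertificate.sum_smul_chordQuadForm {ι : Type*} [Fintype ι]
    (h : IsConcavityCertificate q s G r) (b w : ι → ℝ) (u : Fin n → ℝ) :
    ∑ i, w i • chordQuadForm u (b i) (hessian q) = -∑ p : ι × s,
      w p.1 • (chordForm (r p.2) u (b p.1) ^ 2 * compHomothety u (b p.1) (G p.2)) := by
  simp only [h.chordQuadForm_hessian, smul_neg, Finset.sum_neg_distrib, Fintype.sum_prod_type,
    Finset.smul_sum, ← Finset.sum_coe_sort s, mul_comm]

lemma exists_totalDegree_bounds (f : MvPolynomial (Fin n) ℝ) (s : Finset E)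
    (G : E → MvPolynomial (Fin n) ℝ) (r : E → Fin n → MvPolynomial (Fin n) ℝ) :
    ∃ D, f.totalDegree ≤ D ∧ (∀ a, (pderiv a f).totalDegree ≤ D) ∧
      ∀ e ∈ s, ∀ a, (G e).totalDegree + (r e a).totalDegree ≤ D := by
  obtain ⟨D, hD⟩ := Finite.exists_le fun a => (pderiv a f).totalDegree
  obtain ⟨D', hD'⟩ := Finite.exists_le fun p : s × Fin n =>
    (G p.1).totalDegree + (r p.1 p.2).totalDegree
  refine ⟨f.totalDegree + D + D', by lia, fun a => (hD a).trans (by lia), fun e he a => ?_⟩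
  exact (hD' (⟨e, he⟩, a)).trans (by lia)

lemma IsConcavityCertificate.isDominated_chordForm_sq_of_isChordRule {ι : Type*} [Fintype ι]
    (h : IsConcavityCertificate q s G r) (hconv : Convex ℝ (SolSet g))
    (harch : IsArchimedeanQM (QM g)) {D : ℕ} {t : ℝ} {b w : ι → ℝ} (hrule : IsChordRule D t b w)
    (hDq : ∀ a, (pderiv a q).totalDegree ≤ D)
    (hDe : ∀ e ∈ s, ∀ a, (G e).totalDegree + (r e a).totalDegree ≤ D)
    (hG : ∀ e ∈ s, ∀ x ∈ SolSet g, 0 ≤ eval x (G e)) {o : Fin n → ℝ}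
    (hslope : ∀ e ∈ s, ∀ y ∈ SolSet g, eval y (G e) = 0 → 0 < gradEval (G e) y ⬝ᵥ (o - y))
    {X : (Fin n → ℝ) → Module.Dual ℝ (MvPolynomial (Fin n) ℝ) → ℝ}
    (hX : ∀ e ∈ s, ∀ i, IsDominated g (SolSet g) X
      fun u => chordForm (r e) u (b i) * compHomothety u (b i) (G e)) {e : E} (he : e ∈ s) :
    IsDominated g (SolSet g ×ˢ Set.Icc 0 1) (fun ω => X ω.1)
      fun ω => chordForm (r e) ω.1 ω.2 ^ 2 := by
  refine h.isDominated_chordForm_sq hconv harch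
    (Finset.card_pos.1 (Nat.zero_lt_of_lt hrule.lt_card))
    (fun a => (hDq a).trans_lt hrule.lt_card)
    (fun e he a => (hDe e he a).trans_lt hrule.lt_card) hG hslope (fun e he c hc => ?_) he
  obtain ⟨i, -, rfl⟩ := Finset.mem_image.1 hc
  exact (hX e he i).comp continuous_fst fun _ hω => hω.1

theorem IsConcavityCertificate.isChordPositive [Finite E] (h : IsConcavityCertificate q s G r)
    (hconv : Convex ℝ (SolSet g)) (harch : IsArchimedeanQM (QM g)) (hq : q ∈ QM g)
    (hG : ∀ e ∈ s, ∀ x ∈ SolSet g, 0 ≤ eval x (G e)) {o : Fin n → ℝ}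
    (hslope : ∀ e ∈ s, ∀ y ∈ SolSet g, eval y (G e) = 0 → 0 < gradEval (G e) y ⬝ᵥ (o - y))
    (ih : ∀ e ∈ s, e ∉ U → ∀ t ∈ Set.Icc (0 : ℝ) 1,
      IsChordPositive g r (insert e U) 0 1 fun u => compHomothety u t (G e))
    {t : ℝ} (ht : t ∈ Set.Ioo (0 : ℝ) 1) :
    IsChordPositive g r U 0 1 fun u => compHomothety u t q := by
  obtain ⟨D, hDq, hDdq, hDe⟩ := exists_totalDegree_bounds q s G r
  obtain ⟨ι, _, b, w, hrule⟩ := exists_isChordRule D ht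
  let W : Bool ⊕ ι × s → (Fin n → ℝ) → MvPolynomial (Fin n) ℝ :=
    Sum.elim 1 fun p u => chordForm (r p.2) u (b p.1)
  let P : Bool ⊕ ι × s → (Fin n → ℝ) → MvPolynomial (Fin n) ℝ :=
    Sum.elim (fun c u => compHomothety u (cond c 1 0) q)
      fun p u => compHomothety u (b p.1) (G p.2)
  have hW : ∀ k, IsContinuousFamily (W k) := by
    rintro (_ | _)
    exacts [.const 1, isContinuousFamily_chordForm continuous_id continuous_const _]
  have hP : ∀ k, IsContinuousFamily (P k) := by
    rintro (_ | _) <;> exact isContinuousFamily_compHomothety continuous_id continuous_const _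
  have hWP := fun k => (hW k).mul (hP k)
  have hX := eventually_sumSqMoments_nonneg g hWP
  have hdom := fun e (he : e ∈ s) => h.isDominated_chordForm_sq_of_isChordRule hconv harch hrule
    hDdq hDe hG hslope (fun e he i => isDominated_sumSqMoments hWP (.inr (i, ⟨e, he⟩))) he
  have hsum : (fun u => compHomothety u t q) = fun u => ∑ k,
      Sum.elim (fun c => cond c t (1 - t)) (fun p => w p.1) k • (W k u ^ 2 * P k u) := by
    funext u
    rw [hrule.compHomothety_eq hDq, h.sum_smul_chordQuadForm, sub_neg_eq_add]
    simp [W, P, compHomothety_zero, compHomothety_one, add_comm]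
  rw [hsum]
  refine .of_sum harch ?_ hW hP ?_
  · rintro ((_ | _) | p)
    exacts [sub_pos.2 ht.2, ht.1, hrule.weight_pos p.1]
  · rintro ((_ | _) | ⟨i, e, he⟩)
    · exact (isChordPositive_compHomothety_zero harch fun x => eval_nonneg_of_mem_QM hq).mono hX
    · exact (isChordPositive_compHomothety_one harch hq).mono hX
    · by_cases heU : e ∈ U
      · exact (isChordPositive_chordForm_of_mem hconv harch (hG e he) heU (hrule.node_mem i)).mono
          hX
      · exact (ih e he heU _ (hrule.node_mem i)).of_insert harch (hrule.node_mem i) hX (hdom e he)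

end Recursion

section InteriorPoint

variable {n m : ℕ} {g : Fin m → MvPolynomial (Fin n) ℝ} {o x : Fin n → ℝ}

lemma exists_mem_eval_ne_zero {s : Set (Fin n → ℝ)} (hs : (interior s).Nonempty)
    {p : MvPolynomial (Fin n) ℝ} (hp : p ≠ 0) : ∃ x ∈ s, eval x p ≠ 0 := by
  obtain ⟨y, hy⟩ := hs
  obtain ⟨ε, hε, hball⟩ := Metric.mem_nhds_iff.1 (mem_interior_iff_mem_nhds.1 hy)
  by_contra! h
  have hinf (a : Fin n) : (Metric.ball (y a) ε).Infinite := by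
    rw [Real.ball_eq_Ioo]
    exact Set.Ioo_infinite (by linarith)
  refine hp (funext_set _ hinf fun x hx => ?_)
  rw [← ball_pi y hε] at hx
  rw [h x (hball hx), map_zero]

lemma exists_mem_SolSet_forall_eval_pos (hint : (interior (SolSet g)).Nonempty) :
    ∃ o ∈ SolSet g, ∀ k, g k ≠ 0 → 0 < eval o (g k) := by
  classical
  obtain ⟨o, ho, hprod⟩ := exists_mem_eval_ne_zero hint
    (p := ∏ k with g k ≠ 0, g k) (Finset.prod_ne_zero_iff.2 fun k hk => (Finset.mem_filter.1 hk).2)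
  rw [map_prod, Finset.prod_ne_zero_iff] at hprod
  exact ⟨o, ho, fun k hk => (ho k).lt_of_ne' (hprod k (by simpa using hk))⟩

lemma mem_interior_SolSet (hx : ∀ k, g k ≠ 0 → 0 < eval x (g k)) : x ∈ interior (SolSet g) := by
  rw [mem_interior_iff_mem_nhds]
  refine eventually_all.2 fun k => ?_
  by_cases hk : g k = 0
  · simp [hk]
  · have hpos := (MvPolynomial.continuous_eval (g k)).continuousAt.eventually
      (lt_mem_nhds (hx k hk))
    exact hpos.mono fun y hy => hy.le

lemma exists_mem_segment_eval_eq_zero (ho : o ∈ interior (SolSet g)) (hx : x ∉ SolSet g) :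
    ∃ u ∈ segment ℝ o x, u ∈ SolSet g ∧ ∃ k, g k ≠ 0 ∧ eval u (g k) = 0 := by
  by_contra! h
  have hmem : ∀ u ∈ segment ℝ o x, u ∈ SolSet g → u ∈ interior (SolSet g) := fun u hu huS =>
    mem_interior_SolSet fun k hk => (huS k).lt_of_ne' (h u hu huS k hk)
  have hclosure : closure (interior (SolSet g)) ⊆ SolSet g :=
    (isClosed_SolSet g).closure_interior_subset
  have hsub := (convex_segment o x).isPreconnected.subset_of_closure_inter_subset isOpen_interior
    ⟨o, left_mem_segment ℝ o x, ho⟩ fun u hu => hmem u hu.2 (hclosure hu.1)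
  exact hx (interior_subset (hsub (right_mem_segment ℝ o x)))

lemma dotProduct_sub_neg_of_mem_segment {u v : Fin n → ℝ} (hu : u ∈ segment ℝ o x) (hux : u ≠ x)
    (hv : 0 < v ⬝ᵥ (o - u)) : v ⬝ᵥ (x - u) < 0 := by
  obtain ⟨a, b, ha, hb, hab, rfl⟩ := hu
  obtain rfl : b = 1 - a := by linarith
  have hox : o - (a • o + (1 - a) • x) = (1 - a) • (o - x) := by module
  have hxo : x - (a • o + (1 - a) • x) = -(a • (o - x)) := by module
  have ha0 : 0 < a := ha.lt_of_ne' fun h0 => hux (by simp_all)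
  rw [hox, dotProduct_smul, smul_eq_mul] at hv
  rw [hxo, dotProduct_neg, dotProduct_smul, smul_eq_mul, neg_lt_zero]
  exact mul_pos ha0 (pos_of_mul_pos_right hv hb)

end InteriorPoint

section Slope

variable {n m : ℕ} {g : Fin m → MvPolynomial (Fin n) ℝ} {E : Type*} {s : Finset E}
  {G : E → MvPolynomial (Fin n) ℝ} {r : E → Fin n → MvPolynomial (Fin n) ℝ} {o : Fin n → ℝ}

lemma IsConcavityCertificate.eval_le_add_gradEval_dotProduct {f : MvPolynomial (Fin n) ℝ}
    (h : IsConcavityCertificate f s G r) {S : Set (Fin n → ℝ)} (hS : Convex ℝ S)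
    (hG : ∀ e ∈ s, ∀ x ∈ S, 0 ≤ eval x (G e)) {y : Fin n → ℝ} (hy : y ∈ S) (ho : o ∈ S) :
    eval o f ≤ eval y f + gradEval f y ⬝ᵥ (o - y) := by
  obtain ⟨ι, _, b, w, hrule⟩ := exists_isTaylorRule f.totalDegree
  rw [← eval_tangentPart, hrule.tangentPart_eq le_rfl, h.sum_smul_chordQuadForm]
  have hsum : 0 ≤ eval o (∑ p : ι × s,
      w p.1 • (chordForm (r p.2) y (b p.1) ^ 2 * compHomothety y (b p.1) (G p.2))) := by
    simp only [map_sum, smul_eval, map_mul, map_pow, eval_compHomothety]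
    refine Finset.sum_nonneg fun p _ => mul_nonneg (hrule.weight_pos p.1).le
      (mul_nonneg (sq_nonneg _) (hG p.2 p.2.2 _ ?_))
    exact hS.lineMap_mem hy ho (hrule.node_mem p.1)
  simp only [map_sub, map_neg, eval_C]
  linarith

lemma gradEval_withOne_dotProduct_sub_pos (hconv : Convex ℝ (SolSet g))
    (hg : ∀ k, (∀ x ∈ SolSet g ∩ ZSet (g k), StrictlyQuasiconcaveAt (g k) x) ∨
      SosConcave g (g k))
    (ho : o ∈ SolSet g) (hopos : ∀ k, g k ≠ 0 → 0 < eval o (g k)) (j : Fin (m + 1))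
    (hj : withOne g j ≠ 0) {y : Fin n → ℝ} (hy : y ∈ SolSet g) (hy0 : eval y (withOne g j) = 0) :
    0 < gradEval (withOne g j) y ⬝ᵥ (o - y) := by
  induction j using Fin.cases with
  | zero => simp [withOne] at hy0
  | succ k =>
    simp only [withOne, Fin.cons_succ] at hj hy0 ⊢
    rcases hg k with hqc | hsos
    · exact gradEval_dotProduct_sub_pos hconv (fun x hx => hx k) hy ho hy0 (hqc y ⟨hy, hy0⟩)
        fun h => (hopos k hj).ne' (h ▸ hy0)
    · obtain ⟨E, _, i, r, -, h⟩ := exists_isConcavityCertificate_of_sosConcave hsos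
      have := h.eval_le_add_gradEval_dotProduct hconv (fun e _ x hx => eval_withOne_nonneg hx (i e))
        hy ho
      linarith [hopos k hj]

end Slope

section Tangents

variable {n m : ℕ} {g : Fin m → MvPolynomial (Fin n) ℝ} {E : Type*} {F : Fin m → Finset E}
  {i : E → Fin (m + 1)} {r : E → Fin n → MvPolynomial (Fin n) ℝ} {o : Fin n → ℝ}

-- Induction on the complement of `U`: each passage through a certificate adds an edge to `U`.
theorem isChordPositive_compHomothety_withOne [Finite E] (hconv : Convex ℝ (SolSet g))
    (harch : IsArchimedeanQM (QM g))
    (hg : ∀ k, (∀ x ∈ SolSet g ∩ ZSet (g k), StrictlyQuasiconcaveAt (g k) x) ∨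
      IsConcavityCertificate (g k) (F k) (fun e => withOne g (i e)) r)
    (hslope : ∀ e, ∀ y ∈ SolSet g, eval y (withOne g (i e)) = 0 →
      0 < gradEval (withOne g (i e)) y ⬝ᵥ (o - y))
    (U : Set E) (j : Fin (m + 1)) {t : ℝ} (ht : t ∈ Set.Icc (0 : ℝ) 1) :
    IsChordPositive g r U 0 1 fun u => compHomothety u t (withOne g j) := by
  induction U using WellFoundedGT.induction generalizing j t with
  | ind U ih =>
    rcases ht.1.eq_or_lt with rfl | ht0
    · exact isChordPositive_compHomothety_zero harch fun x hx => eval_withOne_nonneg hx j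
    rcases ht.2.eq_or_lt with rfl | ht1
    · exact isChordPositive_compHomothety_one harch (withOne_mem_QM j)
    induction j using Fin.cases with
    | zero =>
      simp only [withOne, Fin.cons_zero, map_one]
      exact isChordPositive_one
    | succ k =>
      rcases hg k with hqc | hcert
      · exact .of_eventually
          (exists_eventually_smul_sq_le_compHomothety hconv harch hqc ⟨ht0, ht1⟩)
      · exact hcert.isChordPositive hconv harch (withOne_mem_QM k.succ)
          (fun e _ x hx => eval_withOne_nonneg hx (i e)) (fun e _ => hslope e)
          (fun e _ heU t ht => ih _ (Set.ssubset_insert heU) (i e) ht) ⟨ht0, ht1⟩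

lemma IsChordPositive.eventually_nonneg {P : (Fin n → ℝ) → MvPolynomial (Fin n) ℝ}
    (h : IsChordPositive g r ∅ 0 1 P) (hP : IsContinuousFamily P) :
    ∀ᶠ L in positivityFilter g, ∀ u ∈ SolSet g, 0 ≤ L (P u) := by
  obtain ⟨δ, hδ, h⟩ := h
  filter_upwards [h 1 one_pos, hP.eventually_sq_nonneg g] with L hL hsq u hu
  have hLu := hL u hu 0 le_rfl fun e he => he.elim
  simp only [Pi.one_apply, one_mul, one_pow, Pi.zero_apply, add_zero, mul_zero] at hLu
  exact (mul_nonneg hδ.le (hsq u)).trans hLu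

theorem IsConcavityCertificate.eventually_tangentPart_nonneg {f : MvPolynomial (Fin n) ℝ}
    {s : Finset E} {G : E → MvPolynomial (Fin n) ℝ} (h : IsConcavityCertificate f s G r)
    (hf : f ∈ QM g)
    (hG : ∀ e ∈ s, ∀ t ∈ Set.Icc (0 : ℝ) 1, ∀ᶠ L in positivityFilter g, ∀ u ∈ SolSet g,
      0 ≤ L (compHomothety u t (G e))) :
    ∀ᶠ L in positivityFilter g, ∀ u ∈ SolSet g ∩ ZSet f, 0 ≤ L (tangentPart f u) := by
  obtain ⟨ι, _, b, w, hrule⟩ := exists_isTaylorRule f.totalDegree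
  have hterm (p : ι × s) : ∀ᶠ L in positivityFilter g, ∀ u ∈ SolSet g,
      0 ≤ L (chordForm (r p.2) u (b p.1) ^ 2 * compHomothety u (b p.1) (G p.2)) := by
    obtain ⟨D, hD⟩ := (isContinuousFamily_chordForm continuous_id continuous_const
      (r p.2) (s := fun _ => b p.1)).exists_totalDegree_le
    exact (eventually_mulSq (hG p.2 p.2.2 _ (hrule.node_mem p.1)) D).mono
      fun L hL u hu => hL _ (hD u) u hu
  filter_upwards [eventually_all.2 hterm, eventually_nonneg_of_mem_QM hf 0] with L hL hLf u hu
  have hfu : eval u f = 0 := hu.2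
  have hLf1 : 0 ≤ L f := by simpa using hLf 1 (by simp)
  rw [hrule.tangentPart_eq le_rfl, h.sum_smul_chordQuadForm, hfu, C_0, sub_zero, sub_neg_eq_add,
    map_add, map_sum]
  refine add_nonneg hLf1 (Finset.sum_nonneg fun p _ => ?_)
  rw [map_smul]
  exact mul_nonneg (hrule.weight_pos p.1).le (hL p u hu.1)

theorem eventually_forall_tangentPart_nonneg (hconv : Convex ℝ (SolSet g))
    (harch : IsArchimedeanQM (QM g))
    (hg : ∀ k, (∀ x ∈ SolSet g ∩ ZSet (g k), StrictlyQuasiconcaveAt (g k) x) ∨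
      SosConcave g (g k))
    (hslope : ∀ j, withOne g j ≠ 0 → ∀ y ∈ SolSet g, eval y (withOne g j) = 0 →
      0 < gradEval (withOne g j) y ⬝ᵥ (o - y)) :
    ∀ᶠ L in positivityFilter g, ∀ k, ∀ u ∈ SolSet g ∩ ZSet (g k), 0 ≤ L (tangentPart (g k) u) := by
  obtain ⟨E, _, F, i, r, hne, hcert⟩ := exists_forall_isConcavityCertificate g
  have hchord (e : E) (t : ℝ) (ht : t ∈ Set.Icc (0 : ℝ) 1) : ∀ᶠ L in positivityFilter g,
      ∀ u ∈ SolSet g, 0 ≤ L (compHomothety u t (withOne g (i e))) :=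
    (isChordPositive_compHomothety_withOne hconv harch (fun k => (hg k).imp_right (hcert k))
      (fun e => hslope (i e) (hne e)) ∅ (i e) ht).eventually_nonneg
      (isContinuousFamily_compHomothety continuous_id continuous_const _)
  refine eventually_all.2 fun k => ?_
  rcases hg k with hqc | hsos
  · exact eventually_tangentPart_nonneg hconv harch hqc
  · exact (hcert k hsos).eventually_tangentPart_nonneg (withOne_mem_QM k.succ) fun e _ => hchord e

end Tangents

section Relaxation

variable {n m d : ℕ} {g : Fin m → MvPolynomial (Fin n) ℝ} {x : Fin n → ℝ}

lemma SolSet_subset_Lasserre (d : ℕ) (g : Fin m → MvPolynomial (Fin n) ℝ) :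
    SolSet g ⊆ Lasserre d g := by
  intro x hx
  refine ⟨(aeval x).toLinearMap ∘ₗ Submodule.subtype _, fun p hp => by simp [hp],
    fun i p hp => by simp [hp], fun p hp => ?_⟩
  obtain ⟨N, q, -, hq⟩ := hp
  simp only [LinearMap.comp_apply, Submodule.subtype_apply, AlgHom.toLinearMap_apply,
    hq, map_sum, map_mul, map_pow]
  exact Finset.sum_nonneg fun i _ => Finset.sum_nonneg fun j _ =>
    mul_nonneg (sq_nonneg _) (eval_withOne_nonneg hx i)

lemma sq_mul_withOne_mem_TruncQM {q : MvPolynomial (Fin n) ℝ} {i : Fin (m + 1)}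
    (hi : withOne g i ≠ 0) (hq : 2 * q.totalDegree + (withOne g i).totalDegree ≤ d) :
    q ^ 2 * withOne g i ∈ TruncQM d g := by
  refine ⟨1, fun j _ => if j = i then q else 0, fun j _ => ?_, ?_⟩
  · rcases eq_or_ne j i with rfl | hj
    · exact .inr ⟨hi, by simpa using hq⟩
    · exact .inl (by simp [hj])
  · rw [Finset.sum_eq_single i (fun j _ hj => by simp [hj]) (by simp)]
    simp

lemma exists_isTruncPositive_of_mem_Lasserre (hd : 1 ≤ d) (hx : x ∈ Lasserre d g) :
    ∃ L, IsTruncPositive g d L ∧ L 1 = 1 ∧ ∀ a, L (X a) = x a := by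
  obtain ⟨L₀, hone, hX, hpos⟩ := hx
  obtain ⟨L, hL⟩ := LinearMap.exists_extend L₀
  have hext {p : MvPolynomial (Fin n) ℝ} (hp : p.totalDegree ≤ d) :
      ∃ p' : restrictTotalDegree (Fin n) ℝ d, ↑p' = p ∧ L p = L₀ p' :=
    ⟨⟨p, (mem_restrictTotalDegree _ _ _).2 hp⟩, rfl, by rw [← hL]; rfl⟩
  refine ⟨L, fun i q hq => ?_, ?_, fun a => ?_⟩
  · by_cases hi : withOne g i = 0
    · simp [hi]
    obtain ⟨p, hp, hLp⟩ := hext (p := q ^ 2 * withOne g i)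
      ((totalDegree_mul _ _).trans ((Nat.add_le_add_right (totalDegree_pow q 2) _).trans hq))
    exact hLp ▸ hpos p (hp ▸ sq_mul_withOne_mem_TruncQM hi hq)
  · obtain ⟨p, hp, hLp⟩ := hext (p := 1) (by simp)
    exact hLp.trans (hone p hp)
  · obtain ⟨p, hp, hLp⟩ := hext (p := X a) (by simpa using hd)
    exact hLp.trans (hX a p hp)

lemma apply_tangentPart {L : Module.Dual ℝ (MvPolynomial (Fin n) ℝ)} (hone : L 1 = 1)
    (hX : ∀ a, L (X a) = x a) (q : MvPolynomial (Fin n) ℝ) (u : Fin n → ℝ) :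
    L (tangentPart q u) = gradEval q u ⬝ᵥ (x - u) := by
  have hC (c : ℝ) : L (C c) = c := by rw [← mul_one (C c), ← smul_eq_C_mul, map_smul, hone]; simp
  simp only [tangentPart, displacement, dotProduct, map_sum, ← smul_eq_C_mul, map_smul, map_sub, hX,
    hC, smul_eq_mul, Pi.sub_apply]

end Relaxation

end LasserreExactness

open LasserreExactness

theorem stmt_14 {n m : ℕ} (g : Fin m → MvPolynomial (Fin n) ℝ)
    (hconv : Convex ℝ (SolSet g)) (hint : (interior (SolSet g)).Nonempty)
    (harch : IsArchimedeanQM (QM g))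
    (hg : ∀ i, (∀ x ∈ SolSet g ∩ ZSet (g i), StrictlyQuasiconcaveAt (g i) x) ∨
      SosConcave g (g i)) :
    ∃ d : ℕ, Lasserre d g = SolSet g := by
  obtain ⟨o, ho, hopos⟩ := exists_mem_SolSet_forall_eval_pos hint
  have hslope (j : Fin (m + 1)) (hj : withOne g j ≠ 0) (y : Fin n → ℝ) (hy : y ∈ SolSet g) :=
    gradEval_withOne_dotProduct_sub_pos hconv hg ho hopos j hj hy
  obtain ⟨d, hd⟩ := eventually_positivityFilter.1
    (eventually_forall_tangentPart_nonneg hconv harch hg hslope)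
  refine ⟨max d 1, Set.Subset.antisymm (fun x hx => ?_) (SolSet_subset_Lasserre _ g)⟩
  by_contra hxS
  obtain ⟨L, hL, hone, hX⟩ := exists_isTruncPositive_of_mem_Lasserre (le_max_right d 1) hx
  obtain ⟨u, hu, huS, k, hk, huk⟩ :=
    exists_mem_segment_eval_eq_zero (mem_interior_SolSet hopos) hxS
  have hneg : gradEval (g k) u ⬝ᵥ (x - u) < 0 :=
    dotProduct_sub_neg_of_mem_segment hu (fun h => hxS (h ▸ huS)) (hslope k.succ hk u huS huk)
  have hnonneg := hd L (hL.mono (le_max_left d 1)) k u ⟨huS, huk⟩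
  rw [apply_tangentPart hone hX] at hnonneg
  exact hneg.not_ge hnonneg
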